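/- arXiv:1708.04509 — 3 statements merged into one kernel-verified Lean document; each statement's English description precedes it below -/
import Mathlib

section
/- For every n ≥ 2, the wedge sum S^n ∨ S^n is not homotopy dominated by the product S^n × S^n. -/
open CategoryTheory

/-- The `k`-dimensional unit sphere, i.e. the unit sphere in `ℝ^(k+1)`. -/
abbrev USphere (k : ℕ) : Type :=
  ↥(Metric.sphere (0 : EuclideanSpace ℝ (Fin (k + 1))) 1)

/-- A canonical basepoint on the `k`-sphere. -/
noncomputable def spherePt (k : ℕ) : USphere k :=
  ⟨EuclideanSpace.single 0 1, by
    simp [mem_sphere_zero_iff_norm, EuclideanSpace.norm_single]⟩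

/-- `X` is homotopy dominated by `P`. -/
def HDominates (P X : Type) [TopologicalSpace P] [TopologicalSpace X] : Prop :=
  ∃ (d : C(P, X)) (u : C(X, P)), (d.comp u).Homotopic (ContinuousMap.id X)

/-- The wedge sum of two pointed spaces: the quotient of the disjoint union
identifying the two basepoints. -/
def Wedge (X Y : Type) [TopologicalSpace X] [TopologicalSpace Y] (x₀ : X) (y₀ : Y) : Type :=
  Quot (fun a b : X ⊕ Y => a = Sum.inl x₀ ∧ b = Sum.inr y₀)

instance (X Y : Type) [TopologicalSpace X] [TopologicalSpace Y] (x₀ : X) (y₀ : Y) :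
    TopologicalSpace (Wedge X Y x₀ y₀) :=
  instTopologicalSpaceQuot

namespace WD
open Finset

/-- skipping the vertex `k` -/
def skip (k j : ℕ) : ℕ := if j < k then j else j + 1

/-- abstract product -/
def PP (s : ℕ → ℕ → ZMod 2) (m k : ℕ) : ZMod 2 :=
  ∏ i ∈ range m, (s i (skip k i) + s i (skip k (i + 1)))

theorem two_eq (a : ZMod 2) : a + a = 0 := CharTwo.add_self_eq_zero a

theorem PP_sum (s : ℕ → ℕ → ZMod 2) (m : ℕ) : ∑ k ∈ range (m + 2), PP s m k = 0 := by
  induction m with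
  | zero => simp [PP]; decide
  | succ m ih =>
    have h1 : ∀ k ∈ range (m + 1), PP s (m+1) k = PP s m k * (s m (m+1) + s m (m+2)) := by
      intro k hk
      have hk := mem_range.1 hk
      rw [PP, prod_range_succ, ← PP]
      have e1 : skip k m = m + 1 := by unfold skip; rw [if_neg (by omega)]
      have e2 : skip k (m+1) = m + 2 := by unfold skip; rw [if_neg (by omega)]
      rw [e1, e2]
    have h2 : PP s (m+1) (m+1) = PP s m (m+1) * (s m m + s m (m+2)) := by
      rw [PP, prod_range_succ, ← PP]
      simp [skip]
    have h3 : PP s (m+1) (m+2) = PP s m (m+1) * (s m m + s m (m+1)) := by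
      rw [PP, prod_range_succ]
      congr 1
      · apply prod_congr rfl
        intro i hi
        have hi := mem_range.1 hi
        simp only [skip]
        rw [if_pos (by omega), if_pos (by omega), if_pos (by omega), if_pos (by omega)]
      · simp [skip]
    rw [sum_range_succ, sum_range_succ, sum_congr rfl h1, h2, h3, ← sum_mul]
    rw [sum_range_succ] at ih
    have : ∑ x ∈ range (m + 1), PP s m x = PP s m (m+1) := by
      have := eq_neg_of_add_eq_zero_left ih
      rwa [CharTwo.neg_eq] at this
    rw [this]
    generalize PP s m (m+1) = a
    generalize s m m = b
    generalize s m (m+1) = c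
    generalize s m (m+2) = d
    revert a b c d; decide

/-- sphere -/
abbrev XX (m : ℕ) : Type := OnePoint (Fin m → ℝ)

/-- sign label -/
noncomputable def sg {m : ℕ} (i : Fin m) (v : XX m) : ZMod 2 :=
  v.elim 0 (fun x => if 0 ≤ x i then 1 else 0)

/-- box -/
def box {m : ℕ} (v : XX m) : Prop := v.elim False (fun x => ∀ i, |x i| ≤ 1)

open Classical in
/-- cocycle -/
noncomputable def om {m : ℕ} (v : ℕ → XX m) : ZMod 2 :=
  if (∀ k ≤ m, box (v k)) then ∏ i : Fin m, (sg i (v i) + sg i (v (i + 1))) else 0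

theorem om_congr {m : ℕ} {v w : ℕ → XX m} (h : ∀ k ≤ m, v k = w k) : om v = om w := by
  unfold om
  have h1 : (∀ k ≤ m, box (v k)) ↔ (∀ k ≤ m, box (w k)) := by
    constructor <;> intro h2 k hk
    · rw [← h k hk]; exact h2 k hk
    · rw [h k hk]; exact h2 k hk
  have h2 : ∏ i : Fin m, (sg i (v i) + sg i (v (i + 1))) =
      ∏ i : Fin m, (sg i (w i) + sg i (w (i + 1))) := by
    apply prod_congr rfl
    intro i _
    rw [h i i.2.le, h (i+1) i.2]
  rw [h2]
  by_cases h3 : ∀ k ≤ m, box (v k)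
  · rw [if_pos h3, if_pos (h1.1 h3)]
  · rw [if_neg h3, if_neg (fun h4 => h3 (h1.2 h4))]

/-- good -/
def good {m : ℕ} (A : Set (XX m)) : Prop :=
  (∀ v ∈ A, ¬ box v) ∨ ∃ y : Fin m → ℝ, ∀ v ∈ A, ∃ x : Fin m → ℝ, v = ↑x ∧ dist x y < 1/4

theorem om_sum_all {m : ℕ} (v : ℕ → XX m) (hb : ∀ k ≤ m + 1, box (v k)) :
    ∑ k ∈ range (m + 2), om (fun j => v (skip k j)) = 0 := by
  let s : ℕ → ℕ → ZMod 2 := fun i k => if h : i < m then sg ⟨i, h⟩ (v k) else 0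
  rw [← PP_sum s m]
  apply sum_congr rfl
  intro k hk
  have hk := mem_range.1 hk
  unfold om
  rw [if_pos]
  · unfold PP
    rw [← Fin.prod_univ_eq_prod_range (fun i => s i (skip k i) + s i (skip k (i+1))) m]
    apply prod_congr rfl
    intro i _
    simp [s]
  · intro j hj
    apply hb
    unfold skip; split_ifs <;> omega

theorem om_cocycle {m : ℕ} (v : ℕ → XX m) (hg : good (v '' {k | k ≤ m + 1})) :
    ∑ k ∈ range (m + 2), om (fun j => v (skip k j)) = 0 := by
  by_cases hall : ∀ k ≤ m + 1, box (v k)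
  · exact om_sum_all v hall
  apply sum_eq_zero
  intro k hk
  have hk := mem_range.1 hk
  by_contra hne
  unfold om at hne
  split_ifs at hne with hbx
  · apply hall
    have hsk : ∀ j ≤ m, skip k j ≤ m + 1 := by
      intro j hj; unfold skip; split_ifs <;> omega
    rcases hg with hg | ⟨y, hy⟩
    · exact absurd (hbx 0 (Nat.zero_le _)) (hg _ ⟨_, hsk 0 (Nat.zero_le _), rfl⟩)
    · intro l hl
      obtain ⟨x, hx, hxy⟩ := hy _ ⟨l, hl, rfl⟩
      rw [hx]
      intro i
      have hi := (prod_ne_zero_iff.1 hne) i (mem_univ _)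
      obtain ⟨p, hp, hpy⟩ := hy _ ⟨_, hsk i i.2.le, rfl⟩
      obtain ⟨q, hq, hqy⟩ := hy _ ⟨_, hsk (i+1) i.2, rfl⟩
      beta_reduce at hi
      rw [hp, hq] at hi
      simp only [sg, OnePoint.elim_some] at hi
      have a1 := (abs_lt.1 (lt_of_le_of_lt (dist_le_pi_dist x y i) hxy))
      have a2 := (abs_lt.1 (lt_of_le_of_lt (dist_le_pi_dist p y i) hpy))
      have a3 := (abs_lt.1 (lt_of_le_of_lt (dist_le_pi_dist q y i) hqy))
      rw [abs_le]
      by_cases c1 : 0 ≤ p i <;> by_cases c2 : 0 ≤ q i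
      · simp [c1, c2] at hi
        exact absurd (by decide) hi
      · constructor <;> linarith
      · constructor <;> linarith
      · simp [c1, c2] at hi
  · exact hne rfl

/-- vertex of the grid simplex -/
def vtx {m N : ℕ} (x : Fin m → ZMod N) (e : Equiv.Perm (Fin m)) (k : ℕ) : Fin m → ZMod N :=
  fun i => x i + if (e.symm i : ℕ) < k then 1 else 0

/-- discrete degree -/
noncomputable def DD {m N : ℕ} [NeZero N] (a : (Fin m → ZMod N) → XX m) : ZMod 2 :=
  ∑ x : Fin m → ZMod N, ∑ e : Equiv.Perm (Fin m), om (fun k => a (vtx x e k))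

/-- spatial part -/
def spv {m N : ℕ} (x : Fin m → ZMod N) (e : Equiv.Perm (Fin (m+1))) (k : ℕ) : Fin m → ZMod N :=
  fun i => x i + if (e.symm i.succ : ℕ) < k then 1 else 0

/-- prism values -/
def pv {m N : ℕ} {Y : Type} (a b : (Fin m → ZMod N) → Y) (x : Fin m → ZMod N)
    (e : Equiv.Perm (Fin (m+1))) (k : ℕ) : Y :=
  if (e.symm 0 : ℕ) < k then b (spv x e k) else a (spv x e k)

theorem pv_congr {m N : ℕ} {Y : Type} (a b : (Fin m → ZMod N) → Y) (x : Fin m → ZMod N)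
    (e e' : Equiv.Perm (Fin (m+1))) (k : ℕ)
    (h : ∀ i, (e.symm i : ℕ) < k ↔ (e'.symm i : ℕ) < k) : pv a b x e k = pv a b x e' k := by
  have : spv x e k = spv x e' k := by
    funext i; simp only [spv, h]
  simp only [pv, this, h]

theorem prism {m N : ℕ} [NeZero N] (a b : (Fin m → ZMod N) → XX m)
    (H : ∀ x e, ∑ k ∈ range (m + 2), om (fun j => pv a b x e (skip k j)) = 0) :
    DD a = DD b := by
  have h0 : ∑ k ∈ range (m + 2), ∑ x : Fin m → ZMod N, ∑ e : Equiv.Perm (Fin (m+1)),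
      om (fun j => pv a b x e (skip k j)) = 0 := by
    rw [sum_comm]
    apply sum_eq_zero; intro x _
    rw [sum_comm]
    apply sum_eq_zero; intro e _
    exact H x e
  rw [sum_range_succ, sum_range_succ'] at h0
  have hmid : ∀ k ∈ range m, ∑ x : Fin m → ZMod N, ∑ e : Equiv.Perm (Fin (m+1)),
      om (fun j => pv a b x e (skip (k+1) j)) = 0 := by
    intro k hk
    have hk := mem_range.1 hk
    apply sum_eq_zero; intro x _
    let t : Equiv.Perm (Fin (m+1)) := Equiv.swap ⟨k, by omega⟩ ⟨k+1, by omega⟩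
    have key : ∀ e : Equiv.Perm (Fin (m+1)),
        om (fun j => pv a b x e (skip (k+1) j)) = om (fun j => pv a b x (e * t) (skip (k+1) j)) := by
      intro e
      apply om_congr
      intro j _
      apply pv_congr
      intro i
      have : (e * t).symm i = t (e.symm i) := by
        rw [Equiv.symm_apply_eq]; simp [t]
      rw [this]
      simp only [t, Equiv.swap_apply_def, skip]
      generalize e.symm i = r
      have := r.2
      split_ifs <;> simp_all [Fin.ext_iff] <;> omega
    refine sum_involution (fun e _ => e * t) ?_ ?_ ?_ ?_
    · intro e _
      rw [← key e]; exact two_eq _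
    · intro e _ _ h
      have : t = 1 := by simpa using h
      have := congrArg (fun f => f ⟨k, by omega⟩) this
      simp [t, Fin.ext_iff] at this
    · intro e _; exact mem_univ _
    · intro e _; simp [t, mul_assoc]
  rw [sum_congr rfl hmid, sum_const_zero, zero_add] at h0
  -- reindex last faces
  have hr : ∀ x : Fin m → ZMod N, ∑ e : Equiv.Perm (Fin (m+1)),
      om (fun j => pv a b x e (skip (m+1) j)) =
      ∑ e : Equiv.Perm (Fin (m+1)), om (fun j => pv a b x (e * finRotate (m+1)) j) := by
    intro x
    rw [← Equiv.sum_comp (Equiv.mulRight (finRotate (m+1)))]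
    apply sum_congr rfl; intro e _
    apply om_congr
    intro j hj
    have : skip (m+1) j = j := by unfold skip; rw [if_pos (by omega)]
    rw [this]; rfl
  have hs : ∀ (e : Equiv.Perm (Fin (m+1))) (i : Fin (m+1)) (j : ℕ), j ≤ m →
      ((((e * finRotate (m+1)).symm i : Fin (m+1)) : ℕ) < j ↔
        i ≠ e 0 ∧ (e.symm i : ℕ) < j + 1) := by
    intro e i j hj
    have h1 : (e * finRotate (m+1)).symm i = (finRotate (m+1)).symm (e.symm i) := rfl
    rw [h1]
    obtain ⟨r, rfl⟩ : ∃ r, i = e r := ⟨e.symm i, by simp⟩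
    obtain ⟨q, rfl⟩ : ∃ q, r = finRotate (m+1) q := ⟨(finRotate (m+1)).symm r, by simp⟩
    simp only [ne_eq, EmbeddingLike.apply_eq_iff_eq]
    by_cases hq : q = Fin.last m
    · subst hq
      rw [Equiv.symm_apply_apply, Equiv.symm_apply_apply]
      simp; omega
    · have h2 := coe_finRotate_of_ne_last hq
      have h3 : finRotate (m+1) q ≠ 0 := by
        intro h; rw [h] at h2; simp at h2
      rw [Equiv.symm_apply_apply, Equiv.symm_apply_apply, h2]
      simp only [h3, not_false_eq_true, true_and]
      omega
  simp only [hr] at h0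
  have hcomb : ∀ e : Equiv.Perm (Fin (m+1)), e 0 ≠ 0 →
      ∑ x : Fin m → ZMod N, om (fun j => pv a b x e (skip 0 j)) =
      ∑ x : Fin m → ZMod N, om (fun j => pv a b x (e * finRotate (m+1)) j) := by
    intro e he
    obtain ⟨i, hi⟩ := Fin.exists_succ_eq.2 he
    rw [← Equiv.sum_comp (Equiv.addRight (Pi.single i (1 : ZMod N)))
      (fun x => om (fun j => pv a b x (e * finRotate (m+1)) j))]
    apply sum_congr rfl; intro x _
    apply om_congr
    intro j hj
    have hsp : spv x e (skip 0 j) = spv (x + Pi.single i 1) (e * finRotate (m+1)) j := by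
      funext l
      simp only [spv, hs e _ j hj]
      by_cases hl : l = i
      · subst hl
        have : e.symm l.succ = 0 := by rw [hi]; simp
        simp [hi, skip]
      · have : l.succ ≠ e 0 := by rw [← hi]; simpa using hl
        simp [this, hl, skip]
    simp only [pv, Equiv.coe_addRight, hsp, hs e _ j hj]
    simp [skip, Ne.symm he]
  have hb : ∀ (x : Fin m → ZMod N) (e : Equiv.Perm (Fin m)),
      om (fun j => pv a b x (Equiv.Perm.decomposeFin.symm (0, e)) (skip 0 j)) =
        om (fun k => b (vtx x e k)) ∧
      om (fun j => pv a b x (Equiv.Perm.decomposeFin.symm (0, e) * finRotate (m+1)) j) =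
        om (fun k => a (vtx x e k)) := by
    intro x e
    set E := Equiv.Perm.decomposeFin.symm (0, e) with hE
    have e0 : E 0 = 0 := by simp [hE]
    have e1 : ∀ l : Fin m, E.symm l.succ = (e.symm l).succ := by
      intro l; rw [Equiv.symm_apply_eq]; simp [hE]
    have e2 : E.symm 0 = 0 := by rw [Equiv.symm_apply_eq, e0]
    constructor
    · apply om_congr; intro j hj
      simp only [pv, skip, e2]
      simp only [Nat.not_lt_zero, if_false, Fin.val_zero, Nat.succ_pos, if_true]
      congr 1
      funext l
      simp [spv, vtx, e1]
    · apply om_congr; intro j hj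
      simp only [pv, hs E _ j hj, e0]
      simp only [ne_eq, not_true, false_and, if_false]
      congr 1
      funext l
      simp [spv, vtx, hs E _ j hj, e1, e0]
  have hfin : ∀ G : Equiv.Perm (Fin (m+1)) → ZMod 2, ∑ e, G e =
      ∑ e : Equiv.Perm (Fin m), G (Equiv.Perm.decomposeFin.symm (0, e)) +
      ∑ p : Fin m, ∑ e : Equiv.Perm (Fin m), G (Equiv.Perm.decomposeFin.symm (p.succ, e)) := by
    intro G
    rw [← Equiv.sum_comp Equiv.Perm.decomposeFin.symm, Fintype.sum_prod_type, Fin.sum_univ_succ]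
  rw [sum_comm, sum_comm (s := univ (α := Fin m → ZMod N)), hfin, hfin] at h0
  rw [sum_congr rfl (fun e _ => sum_congr rfl (fun x _ => (hb x e).1)),
    sum_congr rfl (fun e _ => sum_congr rfl (fun x _ => (hb x e).2)),
    sum_congr rfl (fun p _ => sum_congr rfl
      (fun e _ => hcomb (Equiv.Perm.decomposeFin.symm (p.succ, e)) (by simp)))] at h0
  unfold DD
  rw [sum_comm, sum_comm (f := fun x e => om (fun k => b (vtx x e k)))]
  rw [add_add_add_comm, two_eq, add_zero] at h0
  have := eq_neg_of_add_eq_zero_left h0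
  rw [CharTwo.neg_eq] at this
  exact this.symm
end WD

namespace WD
open Finset Filter Topology OnePoint

/-- torus -/
abbrev TT (m : ℕ) : Type := Fin m → UnitAddCircle

/-- grid points in the torus -/
noncomputable def emb {m N : ℕ} [NeZero N] (x : Fin m → ZMod N) : TT m :=
  fun i => ZMod.toAddCircle (x i)

instance (M : ℕ) : NeZero (2 * (M + 1)) := ⟨by omega⟩

/-- grid degree of a map from the torus -/
noncomputable def DG {m : ℕ} (M : ℕ) (f : TT m → XX m) : ZMod 2 :=
  DD (N := 2 * (M + 1)) (fun x => f (emb x))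

theorem isOpen_not_box {m : ℕ} : IsOpen {v : XX m | ¬ box v} := by
  have : {v : XX m | ¬ box v} = ((↑) '' (Metric.closedBall (0 : Fin m → ℝ) 1) : Set (XX m))ᶜ := by
    ext v
    induction v using OnePoint.rec with
    | infty => simp [box]
    | coe x =>
      simp only [box, OnePoint.elim_some, Set.mem_ofPred_eq, Set.mem_compl_iff, Set.mem_image,
        OnePoint.coe_eq_coe, exists_eq_right, mem_closedBall_zero_iff]
      rw [pi_norm_le_iff_of_nonneg zero_le_one]
      simp
  rw [this, isOpen_compl_image_coe]
  exact ⟨Metric.isClosed_closedBall, isCompact_closedBall _ _⟩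

theorem emb_dist {m N : ℕ} [NeZero N] (x y : Fin m → ZMod N)
    (h : ∀ i, y i = x i ∨ y i = x i + 1) : dist (emb y) (emb x) ≤ 1 / N := by
  rw [dist_pi_le_iff (by positivity)]
  intro i
  simp only [emb]
  rcases h i with h | h
  · rw [h, dist_self]; positivity
  · rw [h, map_add, dist_eq_norm, add_sub_cancel_left]
    have := ZMod.toAddCircle_natCast (N := N) 1
    rw [Nat.cast_one] at this
    rw [this]
    refine (QuotientAddGroup.norm_mk_le_norm).trans ?_
    simp

theorem DG_homotopic {m : ℕ} {f g : C(TT m, XX m)} (h : f.Homotopic g) :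
    ∀ᶠ M in atTop, DG M f = DG M g := by
  obtain ⟨H⟩ := h
  let c : Option (Fin m → ℝ) → Set (unitInterval × TT m) := fun o =>
    match o with
    | Option.none => H ⁻¹' {v | ¬ box v}
    | Option.some y => H ⁻¹' ((↑) '' (Metric.ball y (1/4)))
  have hc1 : ∀ i, IsOpen (c i) := by
    intro i
    cases i with
    | none => exact isOpen_not_box.preimage H.continuous
    | some y => exact (isOpen_image_coe.2 Metric.isOpen_ball).preimage H.continuous
  have hc2 : (Set.univ : Set (unitInterval × TT m)) ⊆ ⋃ i, c i := by
    intro p _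
    rw [Set.mem_iUnion]
    by_cases hp : H p = ∞
    · refine ⟨none, ?_⟩
      simp only [c, Set.mem_preimage, hp]
      simp [box]
    · obtain ⟨y, hy⟩ := ne_infty_iff_exists.1 hp
      refine ⟨Option.some y, y, by simp, hy⟩
  obtain ⟨δ, hδ, hball⟩ := lebesgue_number_lemma_of_metric isCompact_univ hc1 hc2
  have ev : ∀ᶠ M : ℕ in atTop, 1 / ((M : ℝ) + 1) < δ :=
    (tendsto_one_div_add_atTop_nhds_zero_nat (𝕜 := ℝ)).eventually_lt_const hδ
  filter_upwards [ev] with M hM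
  let t : ℕ → unitInterval := fun k => Set.projIcc 0 1 zero_le_one ((k : ℝ) / (M + 1))
  have step : ∀ k, DG M (fun p => H (t k, p)) = DG M (fun p => H (t (k+1), p)) := by
    intro k
    apply prism
    intro x e
    apply om_cocycle
    obtain ⟨i, hi⟩ := hball (t k, emb x) trivial
    have key : ∀ j, ∃ p ∈ Metric.ball (t k, emb x) δ,
        pv (fun x => H (t k, emb x)) (fun x => H (t (k+1), emb x)) x e j = H p := by
      intro j
      have hd : dist (emb (spv x e j)) (emb x) < δ := by
        refine lt_of_le_of_lt (emb_dist x _ ?_) (lt_of_le_of_lt ?_ hM)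
        · intro i; unfold spv; split_ifs <;> simp
        · apply one_div_le_one_div_of_le (by positivity)
          push_cast; linarith [(Nat.cast_nonneg M : (0:ℝ) ≤ M)]
      have ht : dist (t (k+1)) (t k) < δ := by
        refine lt_of_le_of_lt ?_ hM
        have := Set.abs_projIcc_sub_projIcc (zero_le_one' ℝ) (c := ((k+1 : ℕ) : ℝ) / (M+1)) (d := (k:ℝ)/(M+1))
        refine this.trans (le_of_eq ?_)
        rw [← sub_div]; push_cast
        rw [add_sub_cancel_left, abs_of_pos (by positivity)]
      unfold pv
      split_ifs
      · refine ⟨(t (k+1), emb (spv x e j)), ?_, rfl⟩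
        rw [Metric.mem_ball, Prod.dist_eq]
        exact max_lt ht hd
      · refine ⟨(t k, emb (spv x e j)), ?_, rfl⟩
        rw [Metric.mem_ball, Prod.dist_eq]
        exact max_lt (by simpa using hδ) hd
    cases i with
    | none =>
      left
      rintro _ ⟨j, _, rfl⟩
      obtain ⟨p, hp, hpe⟩ := key j
      rw [hpe]
      exact hi hp
    | some y =>
      right
      refine ⟨y, ?_⟩
      rintro _ ⟨j, _, rfl⟩
      obtain ⟨p, hp, hpe⟩ := key j
      rw [hpe]
      obtain ⟨z, hz, hz2⟩ := hi hp
      exact ⟨z, hz2.symm, hz⟩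
  have all : ∀ k, DG M f = DG M (fun p => H (t k, p)) := by
    intro k
    induction k with
    | zero =>
      have : t 0 = 0 := by simp [t]
      rw [this]; simp
    | succ k ih => rw [ih, step k]
  rw [all (M+1)]
  have : t (M+1) = 1 := by
    simp only [t]; push_cast
    rw [div_self (by positivity)]; simp
  rw [this]; simp

theorem om_const {m : ℕ} (v : ℕ → XX m) (i : Fin m)
    (h : sg i (v i) = sg i (v (i+1))) : om v = 0 := by
  unfold om
  split_ifs
  · apply prod_eq_zero (mem_univ i)
    rw [h]; exact two_eq _
  · rfl

theorem DG_const {m : ℕ} (hm : 0 < m) (M : ℕ) (q : XX m) : DG M (fun _ => q) = 0 := by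
  unfold DG DD
  apply sum_eq_zero; intro x _
  apply sum_eq_zero; intro e _
  exact om_const _ ⟨0, hm⟩ rfl
end WD

namespace WD
open Finset Filter Topology OnePoint

/-- smash pairing -/
def kap {n : ℕ} (u v : XX n) : XX (n + n) :=
  u.elim ∞ (fun x => v.elim ∞ (fun y => ((Fin.append x y : Fin (n+n) → ℝ) : XX (n+n))))

@[simp] theorem kap_left {n : ℕ} (v : XX n) : kap ∞ v = ∞ := rfl
@[simp] theorem kap_right {n : ℕ} (u : XX n) : kap u ∞ = ∞ := by
  induction u using OnePoint.rec <;> rfl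
@[simp] theorem kap_coe {n : ℕ} (x y : Fin n → ℝ) :
  kap (x : XX n) (y : XX n) = ((Fin.append x y : Fin (n+n) → ℝ) : XX (n+n)) := rfl

@[simp] theorem box_infty {n : ℕ} : ¬ box (∞ : XX n) := fun h => h
@[simp] theorem box_coe {n : ℕ} (x : Fin n → ℝ) : box (x : XX n) ↔ ∀ i, |x i| ≤ 1 := Iff.rfl

theorem box_kap {n : ℕ} (u v : XX n) : box (kap u v) ↔ box u ∧ box v := by
  induction u using OnePoint.rec with
  | infty => simp
  | coe x =>
    induction v using OnePoint.rec with
    | infty => simp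
    | coe y =>
      simp only [kap_coe, box_coe]
      constructor
      · intro h
        exact ⟨fun i => by simpa using h (Fin.castAdd n i), fun i => by simpa [-Fin.natAdd_eq_addNat] using h (Fin.natAdd n i)⟩
      · rintro ⟨h1, h2⟩ i
        refine Fin.addCases (fun i => ?_) (fun i => ?_) i
        · simpa using h1 i
        · simpa [-Fin.natAdd_eq_addNat] using h2 i

theorem sg_kap_left {n : ℕ} {u v : XX n} (hu : box u) (hv : box v) (i : Fin n) :
    sg (Fin.castAdd n i) (kap u v) = sg i u := by
  induction u using OnePoint.rec with
  | infty => exact absurd hu box_infty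
  | coe x =>
    induction v using OnePoint.rec with
    | infty => exact absurd hv box_infty
    | coe y => simp [sg]

theorem sg_kap_right {n : ℕ} {u v : XX n} (hu : box u) (hv : box v) (i : Fin n) :
    sg (Fin.natAdd n i) (kap u v) = sg i v := by
  induction u using OnePoint.rec with
  | infty => exact absurd hu box_infty
  | coe x =>
    induction v using OnePoint.rec with
    | infty => exact absurd hv box_infty
    | coe y => simp [sg, -Fin.natAdd_eq_addNat]

theorem om_kap_zero_left {n : ℕ} (u v : ℕ → XX n) (i : Fin n) (h : u i = u (i+1)) :
    om (fun k => kap (u k) (v k)) = 0 := by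
  by_cases hb : ∀ k ≤ n + n, box (kap (u k) (v k))
  · have h1 := (box_kap _ _).1 (hb i (by omega))
    have h2 := (box_kap _ _).1 (hb (i+1) (by omega))
    apply om_const _ (Fin.castAdd n i)
    simp only [Fin.val_castAdd]
    rw [sg_kap_left h1.1 h1.2, sg_kap_left h2.1 h2.2, h]
  · unfold om; rw [if_neg hb]

theorem om_kap_zero_right {n : ℕ} (u v : ℕ → XX n) (i : Fin n) (h : v (n + i) = v (n + i+1)) :
    om (fun k => kap (u k) (v k)) = 0 := by
  by_cases hb : ∀ k ≤ n + n, box (kap (u k) (v k))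
  · have h1 := (box_kap _ _).1 (hb (n+i) (by omega))
    have h2 := (box_kap _ _).1 (hb (n+i+1) (by omega))
    apply om_const _ (Fin.natAdd n i)
    simp only [Fin.val_natAdd]
    rw [sg_kap_right h1.1 h1.2, sg_kap_right h2.1 h2.2, h]
  · unfold om; rw [if_neg hb]

theorem om_kap_mul {n : ℕ} (u w : ℕ → XX n) (hu : ∀ k, n ≤ k → u k = u n) :
    om (fun k => kap (u k) (w (k - n))) = om u * om w := by
  by_cases hb : (∀ k ≤ n, box (u k)) ∧ (∀ k ≤ n, box (w k))
  · have bu : ∀ k, box (u k) := by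
      intro k
      rcases le_total n k with h | h
      · rw [hu k h]; exact hb.1 n le_rfl
      · exact hb.1 k h
    have bw : ∀ k ≤ n + n, box (w (k - n)) := fun k hk => hb.2 _ (by omega)
    unfold om
    rw [if_pos hb.1, if_pos hb.2, if_pos (fun k hk => (box_kap _ _).2 ⟨bu k, bw k hk⟩),
      Fin.prod_univ_add]
    congr 1
    · apply prod_congr rfl; intro i _
      simp only [Fin.val_castAdd]
      rw [sg_kap_left (bu _) (bw _ (by omega)), sg_kap_left (bu _) (bw _ (by omega))]
    · apply prod_congr rfl; intro i _
      simp only [Fin.val_natAdd]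
      rw [sg_kap_right (bu _) (bw _ (by omega)), sg_kap_right (bu _) (bw _ (by omega))]
      congr 3 <;> omega
  · have h1 : om u * om w = 0 := by
      rcases not_and_or.1 hb with h | h
      · unfold om; rw [if_neg h, zero_mul]
      · unfold om; rw [if_neg h, mul_zero]
    rw [h1]
    unfold om
    rw [if_neg]
    intro h
    apply hb
    refine ⟨fun k hk => ((box_kap _ _).1 (h k (by omega))).1, fun k hk => ?_⟩
    have := ((box_kap _ _).1 (h (n + k) (by omega))).2
    rwa [Nat.add_sub_cancel_left] at this

/-- block permutation -/
def blk {n : ℕ} (p : Equiv.Perm (Fin n) × Equiv.Perm (Fin n)) : Equiv.Perm (Fin (n + n)) :=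
  finSumFinEquiv.permCongr (Equiv.Perm.sumCongr p.1 p.2)

theorem blk_symm_left {n : ℕ} (p : Equiv.Perm (Fin n) × Equiv.Perm (Fin n)) (l : Fin n) :
    (blk p).symm (Fin.castAdd n l) = Fin.castAdd n (p.1.symm l) := by
  rw [Equiv.symm_apply_eq]
  simp [blk, Equiv.permCongr_apply]

theorem blk_symm_right {n : ℕ} (p : Equiv.Perm (Fin n) × Equiv.Perm (Fin n)) (l : Fin n) :
    (blk p).symm (Fin.natAdd n l) = Fin.natAdd n (p.2.symm l) := by
  rw [Equiv.symm_apply_eq]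
  simp [-Fin.natAdd_eq_addNat, blk, Equiv.permCongr_apply]

theorem blk_inj {n : ℕ} : Function.Injective (blk (n := n)) := by
  intro p q h
  have h1 : Equiv.Perm.sumCongrHom _ _ p = Equiv.Perm.sumCongrHom _ _ q :=
    finSumFinEquiv.permCongr.injective h
  exact Equiv.Perm.sumCongrHom_injective h1

theorem DD_prod {n N : ℕ} [NeZero N] (g h : (Fin n → ZMod N) → XX n) :
    DD (fun z : Fin (n+n) → ZMod N =>
      kap (g (fun i => z (Fin.castAdd n i))) (h (fun i => z (Fin.natAdd n i)))) = DD g * DD h := by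
  unfold DD
  rw [← Equiv.sum_comp (Fin.appendEquiv n n), Fintype.sum_prod_type, sum_mul_sum]
  apply sum_congr rfl; intro x _
  apply sum_congr rfl; intro y _
  rw [sum_mul_sum, ← Fintype.sum_prod_type']
  symm
  apply Fintype.sum_of_injective blk blk_inj
  · intro e he
    by_cases hall : ∀ i : Fin n, ∃ l : Fin n, e (Fin.castAdd n i) = Fin.castAdd n l
    · exfalso
      apply he
      have hm : Set.MapsTo (finSumFinEquiv.permCongr.symm e) (Set.range (Sum.inl : Fin n → Fin n ⊕ Fin n))
          (Set.range Sum.inl) := by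
        rintro _ ⟨i, rfl⟩
        obtain ⟨l, hl⟩ := hall i
        refine ⟨l, ?_⟩
        simp [Equiv.permCongr_symm, Equiv.permCongr_apply, hl]
      obtain ⟨p, hp⟩ := Equiv.Perm.mem_sumCongrHom_range_of_perm_mapsTo_inl hm
      refine ⟨p, ?_⟩
      have : finSumFinEquiv.permCongr (Equiv.Perm.sumCongrHom _ _ p) = e := by
        rw [hp, Equiv.apply_symm_apply]
      exact this
    · push Not at hall
      obtain ⟨i, hi⟩ := hall
      apply om_kap_zero_left _ _ i
      congr 1
      funext l
      have : (e.symm (Fin.castAdd n l) : ℕ) ≠ i := by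
        intro h
        apply hi l
        rw [← (Equiv.symm_apply_eq e).1 (show e.symm (Fin.castAdd n l) = Fin.castAdd n i from Fin.ext h)]
      simp only [vtx]
      congr 1
      have h2 : (e.symm (Fin.castAdd n l) : ℕ) < i ↔ (e.symm (Fin.castAdd n l) : ℕ) < i + 1 := by omega
      simp only [h2]
  · intro p
    rw [← om_kap_mul]
    · apply om_congr
      intro k _
      congr 2
      · funext l
        simp [vtx, blk_symm_left]
      · funext l
        simp only [vtx, blk_symm_right, Fin.appendEquiv, Equiv.coe_fn_mk, Fin.append_right, Fin.val_natAdd]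
        congr 1
        have : n + (p.2.symm l : ℕ) < k ↔ (p.2.symm l : ℕ) < k - n := by omega
        simp only [this]
    · intro k hk
      congr 1
      funext l
      simp only [vtx]
      congr 1
      rw [if_pos (by omega), if_pos (by omega)]

/-- reindexing the torus coordinates -/
theorem DD_reindex {m N : ℕ} [NeZero N] (t : Equiv.Perm (Fin m)) (a : (Fin m → ZMod N) → XX m) :
    DD (fun x => a (fun i => x (t i))) = DD a := by
  unfold DD
  rw [← Equiv.sum_comp (Equiv.arrowCongr t.symm (Equiv.refl (ZMod N)))
    (fun x => ∑ e : Equiv.Perm (Fin m), om (fun k => a (vtx x e k)))]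
  apply sum_congr rfl; intro x _
  rw [← Equiv.sum_comp (Equiv.mulLeft t⁻¹)
    (fun e => om (fun k => a (vtx ((Equiv.arrowCongr t.symm (Equiv.refl (ZMod N))) x) e k)))]
  apply sum_congr rfl; intro e _
  apply om_congr; intro k _
  congr 1

theorem DG_prod {n : ℕ} (M : ℕ) (g h : TT n → XX n) :
    DG M (fun z : TT (n+n) =>
      kap (g (fun i => z (Fin.castAdd n i))) (h (fun i => z (Fin.natAdd n i)))) = DG M g * DG M h :=
  DD_prod (N := 2 * (M+1)) (fun x => g (emb x)) (fun x => h (emb x))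

theorem DG_prod_swap {n : ℕ} (M : ℕ) (g h : TT n → XX n) :
    DG M (fun z : TT (n+n) =>
      kap (g (fun i => z (Fin.natAdd n i))) (h (fun i => z (Fin.castAdd n i)))) = DG M g * DG M h := by
  rw [← DG_prod]
  unfold DG
  rw [← DD_reindex (finSumFinEquiv.permCongr (Equiv.sumComm (Fin n) (Fin n)))
    (fun z => kap (g (fun i => emb z (Fin.castAdd n i))) (h (fun i => emb z (Fin.natAdd n i))))]
  congr 1
  funext z
  simp [-Fin.natAdd_eq_addNat, emb, Equiv.permCongr_apply]
end WD

namespace WD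
open Finset Filter Topology OnePoint

theorem tendsto_infty {m : ℕ} {A : Type*} {l : Filter A} {h : A → XX m}
    (H : ∀ R : ℝ, ∀ᶠ a in l, ∀ x : Fin m → ℝ, h a = (x : XX m) → R < ‖x‖) :
    Tendsto h l (𝓝 ∞) := by
  rw [(OnePoint.hasBasis_nhds_infty (X := Fin m → ℝ)).tendsto_right_iff]
  rintro s ⟨hs, hc⟩
  obtain ⟨R, hR⟩ := hc.isBounded.subset_closedBall 0
  filter_upwards [H R] with a ha
  by_cases h0 : h a = ∞
  · right; exact h0
  · left
    obtain ⟨x, hx⟩ := OnePoint.ne_infty_iff_exists.1 h0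
    refine ⟨x, ?_, hx⟩
    intro hxs
    have := hR hxs
    rw [mem_closedBall_zero_iff] at this
    exact absurd (ha x hx.symm) (not_lt.2 this)

open Classical in
/-- the extension by infinity -/
noncomputable def ext {m : ℕ} {A : Type*} (U : Set A) (g : A → Fin m → ℝ) (a : A) : XX m :=
  if a ∈ U then (g a : XX m) else ∞

theorem ext_mem {m : ℕ} {A : Type*} {U : Set A} {g : A → Fin m → ℝ} {a : A} (h : a ∈ U) :
    ext U g a = (g a : XX m) := by unfold ext; rw [if_pos h]
theorem ext_not_mem {m : ℕ} {A : Type*} {U : Set A} {g : A → Fin m → ℝ} {a : A} (h : a ∉ U) :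
    ext U g a = ∞ := by unfold ext; rw [if_neg h]

theorem ext_cont {m : ℕ} {A : Type*} [TopologicalSpace A] {U : Set A} {g : A → Fin m → ℝ}
    (hU : IsOpen U) (hg : ∀ a ∈ U, ContinuousAt g a)
    (H : ∀ a ∉ U, ∀ R : ℝ, ∀ᶠ a' in 𝓝 a, a' ∈ U → R < ‖g a'‖) : Continuous (ext U g) := by
  rw [continuous_iff_continuousAt]
  intro a
  by_cases ha : a ∈ U
  · have : ContinuousAt (fun a => (g a : XX m)) a :=
      OnePoint.continuous_coe.continuousAt.comp (hg a ha)
    refine this.congr ?_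
    filter_upwards [hU.mem_nhds ha] with b hb
    exact (ext_mem hb).symm
  · unfold ContinuousAt
    rw [ext_not_mem ha]
    apply tendsto_infty
    intro R
    filter_upwards [H a ha R] with b hb x hx
    by_cases hbU : b ∈ U
    · rw [ext_mem hbU, OnePoint.coe_eq_coe] at hx
      rw [← hx]; exact hb hbU
    · rw [ext_not_mem hbU] at hx
      exact absurd hx.symm (OnePoint.coe_ne_infty x)

noncomputable def cc (z : UnitAddCircle) : ℝ := - (z.toCircle : ℂ).im / (1 - (z.toCircle : ℂ).re)

theorem circ_eq (z : UnitAddCircle) : (z.toCircle : ℂ).re ^2 + (z.toCircle : ℂ).im ^2 = 1 := by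
  have := Circle.normSq_coe z.toCircle
  rw [Complex.normSq_apply] at this; nlinarith

theorem re_lt {z : UnitAddCircle} (hz : z ≠ 0) : (z.toCircle : ℂ).re < 1 := by
  have h := circ_eq z
  have h1 : (z.toCircle : ℂ).re ≤ 1 := by nlinarith [sq_nonneg (z.toCircle : ℂ).im]
  refine lt_of_le_of_ne h1 fun h2 => hz ?_
  apply AddCircle.injective_toCircle one_ne_zero
  rw [AddCircle.toCircle_zero]
  ext
  apply Complex.ext
  · simpa using h2
  · rw [h2] at h
    simp; nlinarith

theorem re_cont : Continuous (fun z : UnitAddCircle => (z.toCircle : ℂ).re) :=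
  Complex.continuous_re.comp (continuous_subtype_val.comp AddCircle.continuous_toCircle)
theorem im_cont : Continuous (fun z : UnitAddCircle => (z.toCircle : ℂ).im) :=
  Complex.continuous_im.comp (continuous_subtype_val.comp AddCircle.continuous_toCircle)

theorem cc_cont {z : UnitAddCircle} (hz : z ≠ 0) : ContinuousAt cc z := by
  unfold cc
  apply ContinuousAt.div
  · exact im_cont.neg.continuousAt
  · exact (continuous_const.sub re_cont).continuousAt
  · have := re_lt hz; linarith

theorem cc_big (R : ℝ) : ∀ᶠ z in 𝓝 (0 : UnitAddCircle), z ≠ 0 → R < |cc z| := by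
  have h : ∀ᶠ z in 𝓝 (0 : UnitAddCircle), 0 < 1 + (z.toCircle : ℂ).re - R^2 * (1 - (z.toCircle : ℂ).re) := by
    have hc : Continuous (fun z : UnitAddCircle => 1 + (z.toCircle : ℂ).re - R^2 * (1 - (z.toCircle : ℂ).re)) := by
      have := re_cont
      fun_prop
    apply hc.continuousAt.eventually_const_lt
    simp
  filter_upwards [h] with z hz h0
  apply lt_of_not_ge
  intro hle
  have h1 := re_lt h0
  have h2 := circ_eq z
  have h3 : cc z ^ 2 ≤ R^2 := by
    rw [← sq_abs (cc z)]
    exact pow_le_pow_left₀ (abs_nonneg _) hle 2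
  have h4 : cc z ^2 * (1 - (z.toCircle : ℂ).re) = 1 + (z.toCircle : ℂ).re := by
    have : (1 - (z.toCircle : ℂ).re) ≠ 0 := by linarith
    unfold cc
    field_simp
    linear_combination h2
  nlinarith

noncomputable def piX (m : ℕ) : C(TT m, XX m) :=
  ⟨ext {z | ∀ i, z i ≠ 0} (fun z i => cc (z i)), by
    apply ext_cont
    · rw [Set.ofPred_forall]
      exact isOpen_iInter_of_finite fun i => isOpen_ne.preimage (continuous_apply i)
    · intro z hz
      rw [continuousAt_pi]
      intro i
      have h1 : Tendsto (fun z' : TT m => z' i) (𝓝 z) (𝓝 (z i)) := (continuous_apply i).tendsto z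
      exact (cc_cont (hz i)).tendsto.comp h1
    · intro z hz R
      simp only [Set.mem_ofPred_eq, not_forall, not_not] at hz
      obtain ⟨i, hi⟩ := hz
      have h : ∀ᶠ z' in 𝓝 z, z' i ≠ 0 → R < |cc (z' i)| := by
        have := (continuous_apply (A := fun _ : Fin m => UnitAddCircle) i).tendsto z
        rw [hi] at this
        exact this.eventually (cc_big R)
      filter_upwards [h] with z' h1 h2
      exact (h1 (h2 i)).trans_le (norm_le_pi_norm (fun i => cc (z' i)) i)⟩

variable {M : ℕ}

theorem grid_ne {j : ZMod (2*(M+1))} (hj : j ≠ 0) : (ZMod.toAddCircle j : UnitAddCircle) ≠ 0 := by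
  intro h; exact hj (ZMod.toAddCircle_injective _ (by rw [h, map_zero]))

theorem grid_im (j : ZMod (2*(M+1))) :
   ((ZMod.toAddCircle j : UnitAddCircle).toCircle : ℂ).im = Real.sin (Real.pi * j.val / (M+1)) := by
  rw [ZMod.toAddCircle_apply, AddCircle.toCircle_apply_mk, Circle.coe_exp, Complex.exp_ofReal_mul_I_im]
  congr 1; push_cast; field_simp

theorem grid_re (j : ZMod (2*(M+1))) :
   ((ZMod.toAddCircle j : UnitAddCircle).toCircle : ℂ).re = Real.cos (Real.pi * j.val / (M+1)) := by
  rw [ZMod.toAddCircle_apply, AddCircle.toCircle_apply_mk, Circle.coe_exp, Complex.exp_ofReal_mul_I_re]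
  congr 1; push_cast; field_simp

theorem cc_neg {j : ZMod (2*(M+1))} (h0 : j ≠ 0) (h : j.val < M + 1) :
    cc (ZMod.toAddCircle j) < 0 := by
  have hp : 0 < j.val := Nat.pos_of_ne_zero (by rwa [Ne, ZMod.val_eq_zero])
  have hp' : (0:ℝ) < j.val := by exact_mod_cast hp
  have h' : (j.val:ℝ) < M+1 := by exact_mod_cast h
  have := re_lt (grid_ne h0)
  unfold cc
  apply div_neg_of_neg_of_pos _ (by linarith)
  rw [neg_lt_zero, grid_im]
  apply Real.sin_pos_of_pos_of_lt_pi
  · have := Real.pi_pos; positivity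
  · rw [div_lt_iff₀ (by positivity)]
    exact mul_lt_mul_of_pos_left h' Real.pi_pos

theorem cc_nonneg {j : ZMod (2*(M+1))} (h : M + 1 ≤ j.val) :
    0 ≤ cc (ZMod.toAddCircle j) := by
  have h0 : j ≠ 0 := by rintro rfl; simp at h
  have h' : (M+1:ℝ) ≤ j.val := by exact_mod_cast h
  have h2 : (j.val:ℝ) ≤ 2*(M+1) := by exact_mod_cast (ZMod.val_lt j).le
  have := re_lt (grid_ne h0)
  unfold cc
  apply div_nonneg _ (by linarith)
  rw [grid_im]
  have : Real.sin (Real.pi * j.val / (M+1)) = - Real.sin (Real.pi * j.val / (M+1) - Real.pi) := by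
    rw [Real.sin_sub_pi]; ring
  rw [this, neg_neg]
  apply Real.sin_nonneg_of_nonneg_of_le_pi
  · rw [sub_nonneg, le_div_iff₀ (by positivity)]
    exact mul_le_mul_of_nonneg_left h' Real.pi_pos.le
  · rw [sub_le_iff_le_add, div_le_iff₀ (by positivity)]
    nlinarith [Real.pi_pos]

theorem cc_small {j : ZMod (2*(M+1))} (hM : 1 ≤ M) (h : j.val = M ∨ j.val = M+1) :
    |cc (ZMod.toAddCircle j)| ≤ 1 := by
  have h0 : j ≠ 0 := by rintro rfl; simp at h; omega
  have h1 := re_lt (grid_ne h0)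
  have hc := circ_eq (ZMod.toAddCircle j)
  have hre : ((ZMod.toAddCircle j : UnitAddCircle).toCircle : ℂ).re ≤ 0 := by
    rw [grid_re]
    have hM' : (1:ℝ) ≤ M := by exact_mod_cast hM
    have h2 : (M:ℝ) ≤ j.val ∧ (j.val:ℝ) ≤ M+1 := by
      constructor
      · exact_mod_cast (by omega)
      · exact_mod_cast (by omega)
    apply Real.cos_nonpos_of_pi_div_two_le_of_le
    · rw [div_le_div_iff₀ (by positivity) (by positivity)]; nlinarith [Real.pi_pos]
    · rw [div_le_iff₀ (by positivity)]; nlinarith [Real.pi_pos]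
  rw [← sq_le_one_iff_abs_le_one]
  unfold cc
  rw [div_pow, div_le_one (by nlinarith)]
  nlinarith

theorem piX_coe {m : ℕ} {x : Fin m → ZMod (2*(M+1))} (h : ∀ i, x i ≠ 0) :
    piX m (emb x) = ((fun i => cc (ZMod.toAddCircle (x i)) : Fin m → ℝ) : XX m) :=
  ext_mem (U := {z : TT m | ∀ i, z i ≠ 0}) (g := fun z i => cc (z i)) (a := emb x) (fun i => grid_ne (h i))

theorem piX_infty {m : ℕ} {x : Fin m → ZMod (2*(M+1))} (h : ∃ i, x i = 0) :
    piX m (emb x) = ∞ := by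
  apply ext_not_mem (U := {z : TT m | ∀ i, z i ≠ 0}) (g := fun z i => cc (z i)) (a := emb x)
  obtain ⟨i, hi⟩ := h
  intro h
  exact h i (by simp [emb, hi])

def sgv (j : ZMod (2*(M+1))) : ZMod 2 := if M + 1 ≤ j.val then 1 else 0

theorem sg_piX {m : ℕ} {x : Fin m → ZMod (2*(M+1))} (h : ∀ i, x i ≠ 0) (i : Fin m) :
    sg i (piX m (emb x)) = sgv (x i) := by
  rw [piX_coe h]; unfold sgv
  by_cases hx : M + 1 ≤ (x i).val
  · rw [if_pos hx]
    have := cc_nonneg hx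
    simp [sg, this]
  · rw [if_neg hx]
    have := cc_neg (h i) (not_le.1 hx)
    simp [sg, this]

theorem box_ne {m : ℕ} {x : Fin m → ZMod (2*(M+1))} (h : box (piX m (emb x))) : ∀ i, x i ≠ 0 := by
  intro i hi
  rw [piX_infty ⟨i, hi⟩] at h
  exact h

theorem val_M : ((M : ℕ) : ZMod (2*(M+1))).val = M := ZMod.val_cast_of_lt (by omega)
theorem val_M1 : ((M : ℕ) + 1: ZMod (2*(M+1))).val = M+1 := by
  have := ZMod.val_cast_of_lt (n := 2*(M+1)) (a := M+1) (by omega)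
  simpa using this

theorem DG_pi (m : ℕ) {M : ℕ} (hM : 1 ≤ M) : DG M (piX m) = 1 := by
  classical
  unfold DG DD
  rw [Finset.sum_eq_single (fun _ => (M : ZMod (2*(M+1)))), Finset.sum_eq_single 1]
  · have hne : ∀ k i, vtx (fun _ : Fin m => (M : ZMod (2*(M+1)))) 1 k i ≠ 0 := by
      intro k i
      simp only [vtx]
      split_ifs
      · intro h; have := val_M1 (M := M); rw [h] at this; simp at this
      · intro h; rw [add_zero] at h; have := val_M (M := M); rw [h] at this; simp at this; omega
    unfold om
    rw [if_pos]
    · apply Finset.prod_eq_one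
      intro i _
      rw [sg_piX (hne _), sg_piX (hne _)]
      have h1 : vtx (fun _ : Fin m => (M : ZMod (2*(M+1)))) 1 i i = M := by
        have : ((Equiv.symm (1 : Equiv.Perm (Fin m))) i : ℕ) = i := rfl
        simp only [vtx, this]; simp
      have h2 : vtx (fun _ : Fin m => (M : ZMod (2*(M+1)))) 1 (i+1) i = M+1 := by
        have : ((Equiv.symm (1 : Equiv.Perm (Fin m))) i : ℕ) = i := rfl
        simp only [vtx, this]; simp
      rw [h1, h2]
      unfold sgv
      rw [val_M, val_M1]; simp
    · intro k _
      show box (piX m (emb (vtx _ _ k)))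
      rw [piX_coe (hne k)]
      intro i
      apply cc_small hM
      simp only [vtx]
      split_ifs
      · right; exact val_M1
      · left; rw [add_zero]; exact val_M
  · intro e _ he
    have : ∃ i, e.symm i ≠ i := by
      by_contra! h
      apply he
      ext i
      rw [Equiv.Perm.one_apply, ← Equiv.symm_apply_eq e |>.1 (h i)]
    obtain ⟨i, hi⟩ := this
    have hi' : (e.symm i : ℕ) ≠ i := fun h => hi (Fin.ext h)
    by_cases hb : ∀ k ≤ m, box (piX m (emb (vtx (fun _ => (M : ZMod (2*(M+1)))) e k)))
    · apply om_const _ i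
      rw [sg_piX (box_ne (hb _ (by omega))), sg_piX (box_ne (hb _ (by omega)))]
      have h2 : (e.symm i : ℕ) < i ↔ (e.symm i : ℕ) < i + 1 := by omega
      simp only [vtx, h2]
    · unfold om; rw [if_neg hb]
  · simp
  · intro x _ hx
    apply Finset.sum_eq_zero
    intro e _
    obtain ⟨i, hi⟩ := Function.ne_iff.1 hx
    by_cases hb : ∀ k ≤ m, box (piX m (emb (vtx x e k)))
    · apply om_const _ i
      have b1 := box_ne (hb i (by omega))
      have b2 := box_ne (hb (i+1) (by omega))
      rw [sg_piX b1, sg_piX b2]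
      have b1 := b1 i
      have b2 := b2 i
      simp only [vtx] at b1 b2 ⊢
      by_cases h1 : (e.symm i : ℕ) < i
      · rw [if_pos h1, if_pos (by omega)]
      by_cases h2 : (e.symm i : ℕ) < i + 1
      · rw [if_neg h1, if_pos h2] at *
        simp only [add_zero] at *
        have hv : (x i).val ≠ M := by
          intro h; apply hi; rw [← ZMod.natCast_zmod_val (x i), h]
        have hv2 : (x i + 1).val = (x i).val + 1 := by
          have : Fact (1 < 2 * (M+1)) := ⟨by omega⟩
          rw [ZMod.val_add_of_lt, ZMod.val_one]
          rw [ZMod.val_one]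
          by_contra h
          have h3 := ZMod.val_lt (x i)
          have h4 : (x i).val + 1 = 2*(M+1) := by omega
          apply b2
          have := congrArg (Nat.cast (R := ZMod (2*(M+1)))) h4
          rw [ZMod.natCast_self, Nat.cast_add, ZMod.natCast_zmod_val] at this
          simpa using this
        unfold sgv
        rw [hv2]
        have : M + 1 ≤ (x i).val ↔ M + 1 ≤ (x i).val + 1 := by omega
        simp only [this]
      · rw [if_neg h1, if_neg h2]
    · unfold om; rw [if_neg hb]
  · simp
end WD

namespace WD
open Finset Filter Topology OnePoint

noncomputable def dec {n : ℕ} (v : XX n) : Fin n → ℝ := v.elim 0 id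

@[simp] theorem dec_coe {n : ℕ} (x : Fin n → ℝ) : dec (x : XX n) = x := rfl

theorem coe_dec {n : ℕ} {v : XX n} (h : v ≠ ∞) : ((dec v : Fin n → ℝ) : XX n) = v := by
  obtain ⟨x, rfl⟩ := OnePoint.ne_infty_iff_exists.1 h
  rfl

theorem dec_cont {n : ℕ} {v : XX n} (h : v ≠ ∞) : ContinuousAt dec v := by
  obtain ⟨x, rfl⟩ := OnePoint.ne_infty_iff_exists.1 h
  rw [OnePoint.continuousAt_coe]
  exact continuousAt_id

theorem dec_big {n : ℕ} (R : ℝ) : ∀ᶠ v in 𝓝 (∞ : XX n), v ≠ ∞ → R < ‖dec v‖ := by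
  have : ((↑) '' (Metric.closedBall (0 : Fin n → ℝ) R)ᶜ ∪ {∞} : Set (XX n)) ∈ 𝓝 (∞ : XX n) :=
    OnePoint.hasBasis_nhds_infty.mem_of_mem ⟨Metric.isClosed_closedBall, isCompact_closedBall 0 R⟩
  filter_upwards [this] with v hv hne
  rcases hv with ⟨x, hx, rfl⟩ | hv
  · simpa using hx
  · exact absurd hv hne

theorem isOpen_fin {n : ℕ} : IsOpen {v : XX n | v ≠ ∞} := OnePoint.isClosed_infty.isOpen_compl

theorem le_append_left {n : ℕ} (x y : Fin n → ℝ) : ‖x‖ ≤ ‖(Fin.append x y : Fin (n+n) → ℝ)‖ := by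
  rw [pi_norm_le_iff_of_nonneg (norm_nonneg _)]
  intro i
  simpa using norm_le_pi_norm (Fin.append x y : Fin (n+n) → ℝ) (Fin.castAdd n i)

theorem le_append_right {n : ℕ} (x y : Fin n → ℝ) : ‖y‖ ≤ ‖(Fin.append x y : Fin (n+n) → ℝ)‖ := by
  rw [pi_norm_le_iff_of_nonneg (norm_nonneg _)]
  intro i
  simpa [-Fin.natAdd_eq_addNat] using norm_le_pi_norm (Fin.append x y : Fin (n+n) → ℝ) (Fin.natAdd n i)

theorem append_cont {n : ℕ} {A : Type*} [TopologicalSpace A] {f g : A → Fin n → ℝ} {a : A}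
    (hf : ContinuousAt f a) (hg : ContinuousAt g a) :
    ContinuousAt (fun a => (Fin.append (f a) (g a) : Fin (n+n) → ℝ)) a := by
  rw [continuousAt_pi]
  intro i
  refine Fin.addCases (fun i => ?_) (fun i => ?_) i
  · simp only [Fin.append_left]; exact (continuousAt_pi.1 hf i)
  · simp only [Fin.append_right]; exact (continuousAt_pi.1 hg i)

noncomputable def kapC (n : ℕ) : C(XX n × XX n, XX (n+n)) :=
  ⟨fun p => kap p.1 p.2, by
    have h : (fun p : XX n × XX n => kap p.1 p.2) = ext {p | p.1 ≠ ∞ ∧ p.2 ≠ ∞}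
        (fun p => (Fin.append (dec p.1) (dec p.2) : Fin (n+n) → ℝ)) := by
      funext p
      by_cases h1 : p.1 = ∞
      · rw [ext_not_mem (fun h => h.1 h1), h1, kap_left]
      by_cases h2 : p.2 = ∞
      · rw [ext_not_mem (fun h => h.2 h2), h2, kap_right]
      rw [ext_mem (show p ∈ {p : XX n × XX n | p.1 ≠ ∞ ∧ p.2 ≠ ∞} from ⟨h1, h2⟩), ← kap_coe, coe_dec h1, coe_dec h2]
    rw [h]
    apply ext_cont
    · exact (isOpen_fin.preimage continuous_fst).inter (isOpen_fin.preimage continuous_snd)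
    · intro p hp
      exact append_cont ((dec_cont hp.1).comp continuousAt_fst) ((dec_cont hp.2).comp continuousAt_snd)
    · intro p hp R
      by_cases h1 : p.1 = ∞
      · have h : ∀ᶠ p' in 𝓝 p, p'.1 ≠ ∞ → R < ‖dec p'.1‖ := by
          have := continuousAt_fst (p := p); rw [ContinuousAt, h1] at this
          exact this.eventually (dec_big R)
        filter_upwards [h] with q h hq
        exact (h hq.1).trans_le (le_append_left _ _)
      by_cases h2 : p.2 = ∞
      · have h : ∀ᶠ p' in 𝓝 p, p'.2 ≠ ∞ → R < ‖dec p'.2‖ := by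
          have := continuousAt_snd (p := p); rw [ContinuousAt, h2] at this
          exact this.eventually (dec_big R)
        filter_upwards [h] with q h hq
        exact (h hq.2).trans_le (le_append_right _ _)
      exact absurd ⟨h1, h2⟩ hp⟩

@[simp] theorem kapC_apply {n : ℕ} (p : XX n × XX n) : kapC n p = kap p.1 p.2 := rfl

def fsH {n : ℕ} (w : Fin (n+n) → ℝ) : Fin n → ℝ := fun i => w (Fin.castAdd n i)
def snH {n : ℕ} (w : Fin (n+n) → ℝ) : Fin n → ℝ := fun i => w (Fin.natAdd n i)
@[simp] theorem fsH_append {n : ℕ} (x y : Fin n → ℝ) : fsH (Fin.append x y) = x := by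
  funext i; simp [fsH]
@[simp] theorem snH_append {n : ℕ} (x y : Fin n → ℝ) : snH (Fin.append x y) = y := by
  funext i; simp [snH, -Fin.natAdd_eq_addNat]
theorem append_H {n : ℕ} (w : Fin (n+n) → ℝ) : Fin.append (fsH w) (snH w) = w := by
  funext i
  refine Fin.addCases (fun i => ?_) (fun i => ?_) i
  · simp [fsH]
  · simp [snH, -Fin.natAdd_eq_addNat]
theorem fsH_cont {n : ℕ} : Continuous (fsH (n := n)) := continuous_pi fun _ => continuous_apply _
theorem snH_cont {n : ℕ} : Continuous (snH (n := n)) := continuous_pi fun _ => continuous_apply _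

theorem kapC_surj (n : ℕ) : Function.Surjective (kapC n) := by
  intro w
  induction w using OnePoint.rec with
  | infty => exact ⟨(∞, ∞), rfl⟩
  | coe w => exact ⟨((fsH w : XX n), (snH w : XX n)), by simp [append_H]⟩

theorem kapC_quot (n : ℕ) : IsQuotientMap (kapC n) :=
  IsQuotientMap.of_surjective_continuous (kapC_surj n) (kapC n).continuous

/-- smash with the identity on the right -/
noncomputable def smL {n : ℕ} (g : C(XX n, XX n)) (hg : g ∞ = ∞) : C(XX (n+n), XX (n+n)) :=
  ⟨fun w => w.elim ∞ (fun w => kap (g (fsH w : XX n)) (snH w : XX n)), by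
    rw [(kapC_quot n).continuous_iff]
    have : Continuous (fun p : XX n × XX n => kapC n (g p.1, p.2)) := by fun_prop
    convert this using 1
    funext ⟨u, v⟩
    induction u using OnePoint.rec with
    | infty => simp [hg]
    | coe x =>
      induction v using OnePoint.rec with
      | infty => simp
      | coe y => simp⟩

theorem smL_kap {n : ℕ} (g : C(XX n, XX n)) (hg : g ∞ = ∞) (u v : XX n) :
    smL g hg (kap u v) = kap (g u) v := by
  induction u using OnePoint.rec with
  | infty => simp [smL, hg]
  | coe x =>
    induction v using OnePoint.rec with
    | infty => simp [smL]
    | coe y => simp [smL]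

noncomputable def smR {n : ℕ} (g : C(XX n, XX n)) (hg : g ∞ = ∞) : C(XX (n+n), XX (n+n)) :=
  ⟨fun w => w.elim ∞ (fun w => kap (fsH w : XX n) (g (snH w : XX n))), by
    rw [(kapC_quot n).continuous_iff]
    have : Continuous (fun p : XX n × XX n => kapC n (p.1, g p.2)) := by fun_prop
    convert this using 1
    funext ⟨u, v⟩
    induction u using OnePoint.rec with
    | infty => simp
    | coe x =>
      induction v using OnePoint.rec with
      | infty => simp [hg]
      | coe y => simp⟩

theorem smR_kap {n : ℕ} (g : C(XX n, XX n)) (hg : g ∞ = ∞) (u v : XX n) :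
    smR g hg (kap u v) = kap u (g v) := by
  induction u using OnePoint.rec with
  | infty => simp [smR]
  | coe x =>
    induction v using OnePoint.rec with
    | infty => simp [smR, hg]
    | coe y => simp [smR]

/-- antipode -/
noncomputable def nu (n : ℕ) : C(XX n, XX n) :=
  ⟨ext {v | v ≠ ∞} (fun v => - dec v), by
    apply ext_cont isOpen_fin
    · intro v hv; exact (dec_cont hv).neg
    · intro v hv R
      have hv : v = ∞ := not_not.1 hv
      subst hv
      filter_upwards [dec_big R] with w hw h
      rw [norm_neg]; exact hw h⟩

@[simp] theorem nu_infty {n : ℕ} : nu n ∞ = ∞ :=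
  ext_not_mem (U := {v : XX n | v ≠ ∞}) (g := fun v : XX n => - dec v) (a := ∞) (fun h => h rfl)
@[simp] theorem nu_coe {n : ℕ} (x : Fin n → ℝ) : nu n (x : XX n) = ((-x : Fin n → ℝ) : XX n) :=
  ext_mem (U := {v | v ≠ ∞}) (g := fun v : XX n => - dec v) (OnePoint.coe_ne_infty x)
@[simp] theorem nu_nu {n : ℕ} (v : XX n) : nu n (nu n v) = v := by
  induction v using OnePoint.rec <;> simp

noncomputable def rotv {n : ℕ} (θ : ℝ) (w : Fin (n+n) → ℝ) : Fin (n+n) → ℝ :=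
  Fin.append (Real.cos θ • fsH w + Real.sin θ • snH w) (- (Real.sin θ • fsH w) + Real.cos θ • snH w)

theorem rotv_norm {n : ℕ} (θ : ℝ) (w : Fin (n+n) → ℝ) : ‖w‖ ≤ 2 * ‖rotv θ w‖ := by
  have h1 := le_append_left (Real.cos θ • fsH w + Real.sin θ • snH w) (- (Real.sin θ • fsH w) + Real.cos θ • snH w)
  have h2 := le_append_right (Real.cos θ • fsH w + Real.sin θ • snH w) (- (Real.sin θ • fsH w) + Real.cos θ • snH w)
  rw [pi_norm_le_iff_of_nonneg (by positivity)]
  have hc := Real.abs_cos_le_one θ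
  have hs := Real.abs_sin_le_one θ
  have hcs := Real.sin_sq_add_cos_sq θ
  have key : ∀ a b p q B: ℝ, |a| ≤ 1 → |b| ≤ 1 → |p| ≤ B → |q| ≤ B → |a * p + b * q| ≤ 2 * B := by
    intro a b p q B ha hb hp hq
    have h1 : |a| * |p| ≤ 1 * B := mul_le_mul ha hp (abs_nonneg _) zero_le_one
    have h2 : |b| * |q| ≤ 1 * B := mul_le_mul hb hq (abs_nonneg _) zero_le_one
    calc |a * p + b * q| ≤ |a*p| + |b*q| := abs_add_le _ _
      _ = |a| * |p| + |b| * |q| := by rw [abs_mul, abs_mul]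
      _ ≤ 2 * B := by linarith
  have g1 := fun i => (norm_le_pi_norm _ i).trans h1
  have g2 := fun i => (norm_le_pi_norm _ i).trans h2
  intro i
  refine Fin.addCases (fun i => ?_) (fun i => ?_) i
  · have := key (Real.cos θ) (- Real.sin θ) _ _ _ hc (by rwa [abs_neg]) (g1 i) (g2 i)
    refine le_of_eq_of_le ?_ this
    rw [Real.norm_eq_abs]
    congr 1
    simp [fsH, snH, -Fin.natAdd_eq_addNat]
    linear_combination (-w (Fin.castAdd n i)) * hcs
  · have := key (Real.sin θ) (Real.cos θ) _ _ _ hs hc (g1 i) (g2 i)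
    refine le_of_eq_of_le ?_ this
    rw [Real.norm_eq_abs]
    congr 1
    simp [fsH, snH, -Fin.natAdd_eq_addNat]
    linear_combination (-w (Fin.natAdd n i)) * hcs

noncomputable def rot (n : ℕ) : C(ℝ × XX (n+n), XX (n+n)) :=
  ⟨ext {p | p.2 ≠ ∞} (fun p => rotv p.1 (dec p.2)), by
    apply ext_cont (isOpen_fin.preimage continuous_snd)
    · intro p hp
      have hd : ContinuousAt (fun p : ℝ × XX (n+n) => dec p.2) p := (dec_cont hp).comp continuousAt_snd
      have h1 : ContinuousAt (fun p : ℝ × XX (n+n) => fsH (dec p.2)) p := fsH_cont.continuousAt.comp hd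
      have h2 : ContinuousAt (fun p : ℝ × XX (n+n) => snH (dec p.2)) p := snH_cont.continuousAt.comp hd
      have h3 : ContinuousAt (fun p : ℝ × XX (n+n) => Real.cos p.1) p := by fun_prop
      have h4 : ContinuousAt (fun p : ℝ × XX (n+n) => Real.sin p.1) p := by fun_prop
      exact append_cont ((h3.smul h1).add (h4.smul h2)) ((h4.smul h1).neg.add (h3.smul h2))
    · intro p hp R
      have hp : p.2 = ∞ := not_not.1 hp
      have h : ∀ᶠ p' in 𝓝 p, p'.2 ≠ ∞ → 2 * R < ‖dec p'.2‖ := by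
        have := continuousAt_snd (p := p); rw [ContinuousAt, hp] at this
        exact this.eventually (dec_big _)
      filter_upwards [h] with q hq h0
      have := rotv_norm q.1 (dec q.2)
      have := hq h0
      linarith⟩

@[simp] theorem rot_infty {n : ℕ} (θ : ℝ) : rot n (θ, ∞) = ∞ :=
  ext_not_mem (U := {p : ℝ × XX (n+n) | p.2 ≠ ∞}) (g := fun p => rotv p.1 (dec p.2)) (a := (θ, ∞)) (fun h => h rfl)
@[simp] theorem rot_coe {n : ℕ} (θ : ℝ) (w : Fin (n+n) → ℝ) :
    rot n (θ, (w : XX (n+n))) = ((rotv θ w : Fin (n+n) → ℝ) : XX (n+n)) :=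
  ext_mem (U := {p : ℝ × XX (n+n) | p.2 ≠ ∞}) (g := fun p => rotv p.1 (dec p.2)) (OnePoint.coe_ne_infty w)

theorem rot_zero {n : ℕ} (w : XX (n+n)) : rot n (0, w) = w := by
  induction w using OnePoint.rec with
  | infty => simp
  | coe w => simp [rotv, append_H]

theorem rot_pos {n : ℕ} (u v : XX n) : rot n (Real.pi/2, kap u v) = kap v (nu n u) := by
  induction u using OnePoint.rec with
  | infty => simp
  | coe x =>
    induction v using OnePoint.rec with
    | infty => simp
    | coe y => simp [rotv]

theorem rot_neg {n : ℕ} (u v : XX n) : rot n (-(Real.pi/2), kap u v) = kap (nu n v) u := by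
  induction u using OnePoint.rec with
  | infty => simp
  | coe x =>
    induction v using OnePoint.rec with
    | infty => simp
    | coe y => simp [rotv]

/-- push q to infinity -/
theorem push {n : ℕ} (hn : 0 < n) (q : Fin n → ℝ) :
    ∃ k : C(XX n, XX n), k (q : XX n) = ∞ ∧ k ∞ = ∞ ∧ (ContinuousMap.id (XX n)).Homotopic k := by
  have : Nonempty (Fin n) := ⟨⟨0, hn⟩⟩
  let e : Fin n → ℝ := fun _ => 1
  have he : ‖e‖ = 1 := by rw [pi_norm_const]; norm_num
  let U : Set (unitInterval × XX n) := {p | p.2 ≠ ∞ ∧ 0 < (1 - (p.1 : ℝ)) + ‖dec p.2 - q‖}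
  let g : unitInterval × XX n → Fin n → ℝ := fun p => dec p.2 + ((p.1:ℝ) / ((1 - (p.1 : ℝ)) + ‖dec p.2 - q‖)) • e
  have hd : ∀ p : unitInterval × XX n, p.2 ≠ ∞ → ContinuousAt (fun p : unitInterval × XX n => dec p.2) p :=
    fun p hp => (dec_cont hp).comp continuousAt_snd
  have ht : ∀ p : unitInterval × XX n, ContinuousAt (fun p : unitInterval × XX n => (p.1:ℝ)) p := by
    intro p; fun_prop
  have hc : ∀ p : unitInterval × XX n, p.2 ≠ ∞ → ContinuousAt (fun p : unitInterval × XX n =>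
      (1 - (p.1 : ℝ)) + ‖dec p.2 - q‖) p := by
    intro p hp
    exact (continuousAt_const.sub (ht p)).add ((hd p hp).sub continuousAt_const).norm
  have hcont : Continuous (ext U g) := by
    apply ext_cont
    · rw [isOpen_iff_mem_nhds]
      intro p hp
      have h1 : ∀ᶠ p' in 𝓝 p, p'.2 ≠ ∞ := (isOpen_fin.preimage continuous_snd).mem_nhds hp.1
      filter_upwards [h1, (hc p hp.1).eventually_const_lt hp.2] with p' a b using ⟨a, b⟩
    · intro p hp
      exact (hd p hp.1).add (((ht p).div (hc p hp.1) hp.2.ne').smul continuousAt_const)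
    · intro p hp R
      by_cases h0 : p.2 = ∞
      · have h : ∀ᶠ p' in 𝓝 p, p'.2 ≠ ∞ → |R| + ‖q‖ + 1 < ‖dec p'.2‖ := by
          have := continuousAt_snd (p := p); rw [ContinuousAt, h0] at this
          exact this.eventually (dec_big _)
        filter_upwards [h] with p' hp' hU
        have h1 := hp' hU.1
        have h2 : ‖dec p'.2‖ - ‖q‖ ≤ ‖dec p'.2 - q‖ := norm_sub_norm_le _ _
        have h3 := p'.1.2.1
        have h4 := p'.1.2.2
        have h5 := abs_nonneg R
        have h6 : (p'.1:ℝ) / ((1 - (p'.1 : ℝ)) + ‖dec p'.2 - q‖) ≤ 1 := by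
          rw [div_le_one hU.2]; linarith
        have h7 : 0 ≤ (p'.1:ℝ) / ((1 - (p'.1 : ℝ)) + ‖dec p'.2 - q‖) := div_nonneg h3 hU.2.le
        have h8 : ‖dec p'.2‖ - ‖((p'.1:ℝ) / ((1 - (p'.1 : ℝ)) + ‖dec p'.2 - q‖)) • e‖ ≤ ‖g p'‖ :=
          norm_sub_le_norm_add _ _
        rw [norm_smul, he, Real.norm_eq_abs, abs_of_nonneg h7] at h8
        have := le_abs_self R
        have := norm_nonneg q
        linarith
      · have hle : (1 - (p.1 : ℝ)) + ‖dec p.2 - q‖ ≤ 0 := not_lt.1 fun h => hp ⟨h0, h⟩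
        have h4 := p.1.2.2
        have hq := norm_nonneg (dec p.2 - q)
        have hp1 : (p.1:ℝ) = 1 := by linarith
        have hev : ∀ᶠ p' in 𝓝 p, 0 < (p'.1:ℝ) - ((1 - (p'.1 : ℝ)) + ‖dec p'.2 - q‖) * (R + ‖dec p'.2‖) := by
          have hcc : ContinuousAt (fun p' : unitInterval × XX n =>
            (p'.1:ℝ) - ((1 - (p'.1 : ℝ)) + ‖dec p'.2 - q‖) * (R + ‖dec p'.2‖)) p :=
            (ht p).sub ((hc p h0).mul (continuousAt_const.add (hd p h0).norm))
          apply hcc.eventually_const_lt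
          have : (1 - (p.1 : ℝ)) + ‖dec p.2 - q‖ = 0 := by linarith
          beta_reduce
          rw [this, hp1]; norm_num
        filter_upwards [hev] with p' hp' hU
        have h7 : 0 ≤ (p'.1:ℝ) / ((1 - (p'.1 : ℝ)) + ‖dec p'.2 - q‖) := div_nonneg p'.1.2.1 hU.2.le
        have h8 : ‖((p'.1:ℝ) / ((1 - (p'.1 : ℝ)) + ‖dec p'.2 - q‖)) • e‖ - ‖dec p'.2‖ ≤ ‖g p'‖ := by
          have := norm_sub_le_norm_add (((p'.1:ℝ) / ((1 - (p'.1 : ℝ)) + ‖dec p'.2 - q‖)) • e) (dec p'.2)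
          rwa [add_comm _ (dec p'.2)] at this
        rw [norm_smul, he, Real.norm_eq_abs, abs_of_nonneg h7] at h8
        have h9 : R + ‖dec p'.2‖ < (p'.1:ℝ) / ((1 - (p'.1 : ℝ)) + ‖dec p'.2 - q‖) := by
          rw [lt_div_iff₀ hU.2]; linarith
        linarith
  let H : C(unitInterval × XX n, XX n) := ⟨ext U g, hcont⟩
  have hHi : ∀ t, H (t, ∞) = ∞ := fun t => ext_not_mem (U := U) (fun h => h.1 rfl)
  refine ⟨⟨fun v => H (1, v), by fun_prop⟩, ?_, hHi 1, ⟨⟨H, ?_, fun x => rfl⟩⟩⟩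
  · apply ext_not_mem (U := U)
    intro h
    have := h.2
    simp at this
  · intro v
    induction v using OnePoint.rec with
    | infty => exact hHi 0
    | coe x =>
      have : ((0:unitInterval), (x : XX n)) ∈ U := ⟨OnePoint.coe_ne_infty x, by simp; positivity⟩
      show ext U g _ = _
      rw [ext_mem this]
      simp [g]

/-- collapse a half space -/
theorem collapse {n : ℕ} (i : Fin n) :
    ∃ k : C(XX n, XX n), k ∞ = ∞ ∧ (∀ x : Fin n → ℝ, x i ≤ 0 → k (x : XX n) = ∞) ∧
      (ContinuousMap.id (XX n)).Homotopic k := by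
  let D : unitInterval × XX n → ℝ := fun p => (p.1:ℝ) * dec p.2 i + (1 - p.1)
  let U : Set (unitInterval × XX n) := {p | p.2 ≠ ∞ ∧ 0 < D p}
  let g : unitInterval × XX n → Fin n → ℝ := fun p =>
    Function.update (dec p.2) i (dec p.2 i - (p.1:ℝ)^2 / D p)
  have hd : ∀ p : unitInterval × XX n, p.2 ≠ ∞ → ContinuousAt (fun p : unitInterval × XX n => dec p.2) p :=
    fun p hp => (dec_cont hp).comp continuousAt_snd
  have hdi : ∀ p : unitInterval × XX n, p.2 ≠ ∞ → ContinuousAt (fun p : unitInterval × XX n => dec p.2 i) p :=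
    fun p hp => continuousAt_pi.1 (hd p hp) i
  have ht : ∀ p : unitInterval × XX n, ContinuousAt (fun p : unitInterval × XX n => (p.1:ℝ)) p := by
    intro p; fun_prop
  have hc : ∀ p : unitInterval × XX n, p.2 ≠ ∞ → ContinuousAt D p := by
    intro p hp
    exact ((ht p).mul (hdi p hp)).add (continuousAt_const.sub (ht p))
  have hcont : Continuous (ext U g) := by
    apply ext_cont
    · rw [isOpen_iff_mem_nhds]
      intro p hp
      have h1 : ∀ᶠ p' in 𝓝 p, p'.2 ≠ ∞ := (isOpen_fin.preimage continuous_snd).mem_nhds hp.1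
      filter_upwards [h1, (hc p hp.1).eventually_const_lt hp.2] with p' a b using ⟨a, b⟩
    · intro p hp
      have h1 : ContinuousAt (fun p : unitInterval × XX n => dec p.2 i - (p.1:ℝ)^2 / D p) p :=
        (hdi p hp.1).sub (((ht p).pow 2).div (hc p hp.1) hp.2.ne')
      exact (hd p hp.1).update i h1
    · intro p hp R
      by_cases h0 : p.2 = ∞
      · have h : ∀ᶠ p' in 𝓝 p, p'.2 ≠ ∞ → R + 1 < ‖dec p'.2‖ := by
          have := continuousAt_snd (p := p); rw [ContinuousAt, h0] at this
          exact this.eventually (dec_big _)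
        filter_upwards [h] with p' hp' hU
        have h1 := hp' hU.1
        suffices hs : ‖dec p'.2‖ ≤ ‖g p'‖ + 1 by linarith
        rw [pi_norm_le_iff_of_nonneg (by positivity)]
        intro j
        have hj := norm_le_pi_norm (g p') j
        by_cases hji : j = i
        · subst hji
          simp only [g, Function.update_self, Real.norm_eq_abs] at hj ⊢
          have h3 := p'.1.2.1
          have h4 := p'.1.2.2
          have hD := hU.2
          have hge : 0 ≤ (p'.1:ℝ)^2 / D p' := by positivity
          rcases le_total (dec p'.2 j) 1 with hx | hx
          · rcases le_total (dec p'.2 j) 0 with hx0 | hx0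
            · rw [abs_of_nonpos hx0]
              rw [abs_of_nonpos (by linarith)] at hj
              linarith
            · rw [abs_of_nonneg hx0]
              have := (abs_nonneg _).trans hj
              linarith
          · have hle : (p'.1:ℝ)^2 / D p' ≤ 1 := by
              rw [div_le_one hD]
              simp only [D]
              nlinarith
            rw [abs_of_nonneg (by linarith)]
            have := (le_abs_self _).trans hj
            linarith
        · simp only [g, Function.update_of_ne hji] at hj
          simp only [g]
          linarith
      · have hle : D p ≤ 0 := not_lt.1 fun h => hp ⟨h0, h⟩
        have h3 := p.1.2.1
        have h4 := p.1.2.2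
        have hpos : 0 < (p.1:ℝ) := by
          refine lt_of_le_of_ne h3 fun h => ?_
          simp only [D, ← h] at hle
          norm_num at hle
        have hev : ∀ᶠ p' in 𝓝 p, 0 < (p'.1:ℝ)^2 - D p' * (|R| + |dec p'.2 i|) := by
          have hcc : ContinuousAt (fun p' : unitInterval × XX n =>
            (p'.1:ℝ)^2 - D p' * (|R| + |dec p'.2 i|)) p :=
            ((ht p).pow 2).sub ((hc p h0).mul (continuousAt_const.add (hdi p h0).abs))
          apply hcc.eventually_const_lt
          have : 0 ≤ |R| + |dec p.2 i| := by positivity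
          nlinarith
        filter_upwards [hev] with p' hp' hU
        have hj := norm_le_pi_norm (g p') i
        simp only [g, Function.update_self, Real.norm_eq_abs] at hj ⊢
        have h9 : |R| + |dec p'.2 i| < (p'.1:ℝ)^2 / D p' := by
          rw [lt_div_iff₀ hU.2]; linarith
        have := (neg_le_abs _).trans hj
        have := le_abs_self R
        have := le_abs_self (dec p'.2 i)
        linarith
  let H : C(unitInterval × XX n, XX n) := ⟨ext U g, hcont⟩
  have hHi : ∀ t, H (t, ∞) = ∞ := fun t => ext_not_mem (U := U) (fun h => h.1 rfl)
  refine ⟨⟨fun v => H (1, v), by fun_prop⟩, hHi 1, ?_, ⟨⟨H, ?_, fun x => rfl⟩⟩⟩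
  · intro x hx
    apply ext_not_mem (U := U)
    intro h
    have := h.2
    simp [D] at this
    linarith
  · intro v
    induction v using OnePoint.rec with
    | infty => exact hHi 0
    | coe x =>
      have : ((0:unitInterval), (x : XX n)) ∈ U := ⟨OnePoint.coe_ne_infty x, by simp [D]⟩
      show ext U g _ = _
      rw [ext_mem this]
      simp [g]

theorem collapse' {n : ℕ} (i : Fin n) :
    ∃ k : C(XX n, XX n), k ∞ = ∞ ∧ (∀ x : Fin n → ℝ, 0 ≤ x i → k (x : XX n) = ∞) ∧
      (ContinuousMap.id (XX n)).Homotopic k := by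
  obtain ⟨k, h1, h2, h3⟩ := collapse i
  refine ⟨(nu n).comp (k.comp (nu n)), by simp [h1], fun x hx => ?_, ?_⟩
  · have := h2 (-x) (by simpa using hx)
    simp [this]
  · have := (ContinuousMap.Homotopic.refl (nu n)).comp (h3.comp (ContinuousMap.Homotopic.refl (nu n)))
    convert this using 1
    ext v
    simp
end WD

namespace WD
open Finset Filter Topology OnePoint
open ContinuousMap (Homotopic)

noncomputable def deg {n : ℕ} (M : ℕ) (f : C(XX n, XX n)) : ZMod 2 := DG M (fun z => f (piX n z))

theorem deg_htpy {n : ℕ} {f g : C(XX n, XX n)} (h : f.Homotopic g) :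
    ∀ᶠ M in atTop, deg M f = deg M g := by
  have h1 : (f.comp (piX n)).Homotopic (g.comp (piX n)) := h.comp (Homotopic.refl (piX n))
  filter_upwards [DG_homotopic h1] with M hM
  unfold deg
  exact hM

theorem deg_id (n : ℕ) : ∀ᶠ M in atTop, deg M (ContinuousMap.id (XX n)) = 1 := by
  filter_upwards [eventually_ge_atTop 1] with M hM
  exact DG_pi n hM

theorem deg_const {n : ℕ} (hn : 0 < n) (M : ℕ) (c : XX n) : deg M (ContinuousMap.const (XX n) c) = 0 :=
  DG_const hn M c

theorem const_htpy {n : ℕ} {A : Type*} [TopologicalSpace A] (hn : 0 < n) (c : XX n) :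
    (ContinuousMap.const A c).Homotopic (ContinuousMap.const A ∞) := by
  induction c using OnePoint.rec with
  | infty => exact Homotopic.refl _
  | coe q =>
    obtain ⟨k, h1, _, h3⟩ := push hn q
    have := h3.comp (Homotopic.refl (ContinuousMap.const A (q : XX n)))
    have h2 : k.comp (ContinuousMap.const A (q : XX n)) = ContinuousMap.const A ∞ := by
      apply ContinuousMap.ext; intro a; exact h1
    rw [h2] at this
    exact this

theorem exists_pointed {n : ℕ} (hn : 0 < n) (c : XX n) :
    ∃ k : C(XX n, XX n), k c = ∞ ∧ (ContinuousMap.id (XX n)).Homotopic k := by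
  induction c using OnePoint.rec with
  | infty => exact ⟨ContinuousMap.id _, rfl, Homotopic.refl _⟩
  | coe q =>
    obtain ⟨k, h1, _, h3⟩ := push hn q
    exact ⟨k, h1, h3⟩

/-- halves of the torus -/
noncomputable def pA (n : ℕ) : C(TT (n+n), XX n) :=
  (piX n).comp ⟨fun z i => z (Fin.castAdd n i), by fun_prop⟩
noncomputable def pB (n : ℕ) : C(TT (n+n), XX n) :=
  (piX n).comp ⟨fun z i => z (Fin.natAdd n i), by fun_prop⟩

theorem DG_AB {n : ℕ} (M : ℕ) (g h : C(XX n, XX n)) :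
    DG M (fun z => kap (g (pA n z)) (h (pB n z))) = deg M g * deg M h :=
  DG_prod M (fun z => g (piX n z)) (fun z => h (piX n z))

theorem DG_BA {n : ℕ} (M : ℕ) (g h : C(XX n, XX n)) :
    DG M (fun z => kap (g (pB n z)) (h (pA n z))) = deg M g * deg M h :=
  DG_prod_swap M (fun z => g (piX n z)) (fun z => h (piX n z))

theorem deg_mul_pointed {n : ℕ} (g f : C(XX n, XX n)) (hg : g ∞ = ∞) (hf : f ∞ = ∞) :
    ∀ᶠ M in atTop, deg M (g.comp f) = deg M g * deg M f := by
  let K : C(TT (n+n), XX (n+n)) := (kapC n).comp ((pA n).prodMk (pB n))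
  let H : C(unitInterval × TT (n+n), XX (n+n)) :=
    ⟨fun p => smL g hg (rot n ((p.1:ℝ) * (Real.pi / 2), smR f hf (rot n (-((p.1:ℝ) * (Real.pi / 2)), K p.2)))), by
      fun_prop⟩
  let f0 : C(TT (n+n), XX (n+n)) := (kapC n).comp ((g.comp (pA n)).prodMk (f.comp (pB n)))
  let f1 : C(TT (n+n), XX (n+n)) :=
    (kapC n).comp (((g.comp f).comp (pA n)).prodMk ((ContinuousMap.id _).comp (pB n)))
  have hH : f0.Homotopic f1 := by
    refine ⟨⟨H, fun z => ?_, fun z => ?_⟩⟩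
    · show smL g hg (rot n (((0 : unitInterval):ℝ) * (Real.pi / 2), smR f hf (rot n (-(((0 : unitInterval):ℝ) * (Real.pi / 2)), kap (pA n z) (pB n z))))) = kap (g (pA n z)) (f (pB n z))
      simp only [Set.Icc.coe_zero, zero_mul, neg_zero, rot_zero, smR_kap, smL_kap]
    · show smL g hg (rot n (((1 : unitInterval):ℝ) * (Real.pi / 2), smR f hf (rot n (-(((1 : unitInterval):ℝ) * (Real.pi / 2)), kap (pA n z) (pB n z))))) = kap (g (f (pA n z))) (pB n z)
      simp only [Set.Icc.coe_one, one_mul, rot_neg, smR_kap, rot_pos, smL_kap, nu_nu]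
  filter_upwards [DG_homotopic hH, deg_id n] with M h1 h2
  have e0 : DG M f0 = deg M g * deg M f := by
    rw [← DG_AB M g f]
    exact congrArg (DG M) (funext fun z => rfl)
  have e1 : DG M f1 = deg M (g.comp f) * deg M (ContinuousMap.id (XX n)) := by
    rw [← DG_AB M (g.comp f) (ContinuousMap.id (XX n))]
    exact congrArg (DG M) (funext fun z => rfl)
  rw [e0, e1, h2, mul_one] at h1
  exact h1.symm

theorem deg_mul {n : ℕ} (hn : 0 < n) (g f : C(XX n, XX n)) :
    ∀ᶠ M in atTop, deg M (g.comp f) = deg M g * deg M f := by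
  obtain ⟨k1, hk1, hh1⟩ := exists_pointed hn (f ∞)
  obtain ⟨k2, hk2, hh2⟩ := exists_pointed hn (g ∞)
  have a1 : f.Homotopic (k1.comp f) := by
    simpa using hh1.comp (Homotopic.refl f)
  have a2 : g.Homotopic (k2.comp g) := by
    simpa using hh2.comp (Homotopic.refl g)
  filter_upwards [deg_mul_pointed (k2.comp g) (k1.comp f) hk2 hk1, deg_htpy (a2.comp a1), deg_htpy a1, deg_htpy a2]
    with M e1 e2 e3 e4
  rw [e2, e1, e3, e4]

theorem cell {m M : ℕ} (x : Fin m → ZMod (2*(M+1))) (j : Fin m) :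
    (∀ e k, (vtx x e k j).val ≤ M + 1) ∨
    (∀ e k, vtx x e k j = 0 ∨ M + 1 ≤ (vtx x e k j).val) := by
  have : Fact (1 < 2 * (M+1)) := ⟨by omega⟩
  rcases le_or_gt (x j).val M with h | h
  · left
    intro e k
    simp only [vtx]
    split_ifs
    · have := ZMod.val_add_le (x j) 1
      rw [ZMod.val_one] at this
      omega
    · rw [add_zero]; omega
  · right
    intro e k
    simp only [vtx]
    split_ifs
    · by_cases h2 : (x j).val + 1 = 2*(M+1)
      · left
        have := congrArg (Nat.cast (R := ZMod (2*(M+1)))) h2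
        rw [ZMod.natCast_self, Nat.cast_add, ZMod.natCast_zmod_val] at this
        simpa using this
      · right
        have h3 := ZMod.val_lt (x j)
        rw [ZMod.val_add_of_lt, ZMod.val_one]
        · omega
        · rw [ZMod.val_one]; omega
    · right; rw [add_zero]; omega

theorem cc_nonpos {M : ℕ} {j : ZMod (2*(M+1))} (h0 : j ≠ 0) (h : j.val ≤ M + 1) :
    cc (ZMod.toAddCircle j) ≤ 0 := by
  rcases h.lt_or_eq with h | h
  · exact (cc_neg h0 h).le
  · unfold cc
    rw [grid_im, h]
    have : Real.pi * ((M+1 : ℕ):ℝ) / (M+1) = Real.pi := by push_cast; field_simp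
    rw [this, Real.sin_pi]; simp

theorem ph0 {n M : ℕ} {i : Fin n} {φ : C(XX n, XX n)} (h0 : φ ∞ = ∞)
    (h : ∀ x : Fin n → ℝ, x i ≤ 0 → φ (x : XX n) = ∞) (p : Fin n → ZMod (2*(M+1)))
    (hp : (p i).val ≤ M + 1) : φ (piX n (emb p)) = ∞ := by
  by_cases hz : ∀ l, p l ≠ 0
  · rw [piX_coe hz]; exact h _ (cc_nonpos (hz i) hp)
  · push Not at hz
    rw [piX_infty hz, h0]

theorem ph1 {n M : ℕ} {i : Fin n} {φ : C(XX n, XX n)} (h0 : φ ∞ = ∞)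
    (h : ∀ x : Fin n → ℝ, 0 ≤ x i → φ (x : XX n) = ∞) (p : Fin n → ZMod (2*(M+1)))
    (hp : p i = 0 ∨ M + 1 ≤ (p i).val) : φ (piX n (emb p)) = ∞ := by
  by_cases hz : ∀ l, p l ≠ 0
  · rw [piX_coe hz]; exact h _ (cc_nonneg (hp.resolve_left (hz i)))
  · push Not at hz
    rw [piX_infty hz, h0]

theorem om_const' {m : ℕ} (hm : 0 < m) (c : XX m) : om (fun _ => c) = 0 := om_const _ ⟨0, hm⟩ rfl

noncomputable def inL {n : ℕ} (c : XX n) : C(XX n, XX n × XX n) :=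
  (ContinuousMap.id _).prodMk (ContinuousMap.const _ c)
noncomputable def inR {n : ℕ} (c : XX n) : C(XX n, XX n × XX n) :=
  (ContinuousMap.const _ c).prodMk (ContinuousMap.id _)

theorem deg_add {n : ℕ} (hn : 0 < n) (F : C(XX n × XX n, XX n)) (f1 f2 : C(XX n, XX n)) :
    ∀ᶠ M in atTop, deg M (F.comp (f1.prodMk f2)) =
      deg M (F.comp (inL ∞)) * deg M f1 + deg M (F.comp (inR ∞)) * deg M f2 := by
  obtain ⟨φ0, a1, a2, a3⟩ := collapse (⟨0, hn⟩ : Fin n)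
  obtain ⟨φ1, b1, b2, b3⟩ := collapse' (⟨0, hn⟩ : Fin n)
  have g1 : f1.Homotopic (f1.comp φ0) := by simpa using (Homotopic.refl f1).comp a3
  have g2 : f2.Homotopic (f2.comp φ1) := by simpa using (Homotopic.refl f2).comp b3
  have e1 := deg_htpy ((Homotopic.refl F).comp (g1.prodMk g2))
  have key : ∀ M, deg M (F.comp ((f1.comp φ0).prodMk (f2.comp φ1))) =
      deg M (F.comp ((f1.comp φ0).prodMk (ContinuousMap.const _ (f2 ∞)))) +
      deg M (F.comp ((ContinuousMap.const _ (f1 ∞)).prodMk (f2.comp φ1))) := by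
    intro M
    simp only [deg, DG, DD]
    rw [← sum_add_distrib]
    apply sum_congr rfl; intro x _
    rw [← sum_add_distrib]
    apply sum_congr rfl; intro e _
    simp only [ContinuousMap.comp_apply, ContinuousMap.prod_eval, ContinuousMap.const_apply]
    rcases cell x ⟨0, hn⟩ with h | h
    · have hh : ∀ k, φ0 (piX n (emb (vtx x e k))) = ∞ := fun k => ph0 a1 a2 _ (h e k)
      simp only [hh]
      rw [om_const' hn, zero_add]
    · have hh : ∀ k, φ1 (piX n (emb (vtx x e k))) = ∞ := fun k => ph1 b1 b2 _ (h e k)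
      simp only [hh]
      rw [om_const' hn, add_zero]
  have e2 : (F.comp ((f1.comp φ0).prodMk (ContinuousMap.const _ (f2 ∞)))).Homotopic
      ((F.comp (inL ∞)).comp f1) :=
    (Homotopic.refl F).comp (g1.symm.prodMk (const_htpy hn (f2 ∞)))
  have e3 : (F.comp ((ContinuousMap.const _ (f1 ∞)).prodMk (f2.comp φ1))).Homotopic
      ((F.comp (inR ∞)).comp f2) :=
    (Homotopic.refl F).comp ((const_htpy hn (f1 ∞)).prodMk g2.symm)
  filter_upwards [e1, deg_htpy e2, deg_htpy e3, deg_mul hn (F.comp (inL ∞)) f1, deg_mul hn (F.comp (inR ∞)) f2]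
    with M h1 h2 h3 h4 h5
  rw [h1, key, h2, h3, h4, h5]

theorem deg_wedge {n : ℕ} (hn : 0 < n) (F1 F2 : C(XX n × XX n, XX n)) :
    ∀ᶠ M in atTop, DG M (fun z => kap (F1 (pA n z, pB n z)) (F2 (pA n z, pB n z))) =
      deg M (F1.comp (inL ∞)) * deg M (F2.comp (inR ∞)) +
      deg M (F1.comp (inR ∞)) * deg M (F2.comp (inL ∞)) := by
  obtain ⟨φ0, a1, a2, a3⟩ := collapse (⟨0, hn⟩ : Fin n)
  obtain ⟨φ1, b1, b2, b3⟩ := collapse' (⟨0, hn⟩ : Fin n)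
  let K : C(XX n × XX n, XX n) → C(XX n × XX n, XX n) → C(TT (n+n), XX (n+n)) := fun G1 G2 =>
    (kapC n).comp ((G1.comp ((pA n).prodMk (pB n))).prodMk (G2.comp ((pA n).prodMk (pB n))))
  have hF1 : F1.Homotopic (F1.comp (φ0.prodMap φ0)) := by
    exact (Homotopic.refl F1).comp (a3.prodMap a3)
  have hF2 : F2.Homotopic (F2.comp (φ1.prodMap φ1)) := by
    exact (Homotopic.refl F2).comp (b3.prodMap b3)
  have e1 : (K F1 F2).Homotopic (K (F1.comp (φ0.prodMap φ0)) (F2.comp (φ1.prodMap φ1))) :=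
    (Homotopic.refl (kapC n)).comp ((hF1.comp (Homotopic.refl _)).prodMk (hF2.comp (Homotopic.refl _)))
  have key : ∀ M, DG M (K (F1.comp (φ0.prodMap φ0)) (F2.comp (φ1.prodMap φ1))) =
      DG M (fun z => kap (((F1.comp (inL ∞)).comp φ0) (pA n z)) (((F2.comp (inR ∞)).comp φ1) (pB n z))) +
      DG M (fun z => kap (((F1.comp (inR ∞)).comp φ0) (pB n z)) (((F2.comp (inL ∞)).comp φ1) (pA n z))) := by
    intro M
    simp only [DG, DD]
    rw [← sum_add_distrib]
    apply sum_congr rfl; intro x _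
    rw [← sum_add_distrib]
    apply sum_congr rfl; intro e _
    have hA : ∀ k, pA n (emb (vtx x e k)) = piX n (emb (fun i => vtx x e k (Fin.castAdd n i))) := fun k => rfl
    have hB : ∀ k, pB n (emb (vtx x e k)) = piX n (emb (fun i => vtx x e k (Fin.natAdd n i))) := fun k => rfl
    show om (fun k => kap (F1 (φ0 (pA n (emb (vtx x e k))), φ0 (pB n (emb (vtx x e k)))))
        (F2 (φ1 (pA n (emb (vtx x e k))), φ1 (pB n (emb (vtx x e k)))))) =
      om (fun k => kap (F1 (φ0 (pA n (emb (vtx x e k))), ∞)) (F2 (∞, φ1 (pB n (emb (vtx x e k)))))) +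
      om (fun k => kap (F1 (∞, φ0 (pB n (emb (vtx x e k))))) (F2 (φ1 (pA n (emb (vtx x e k))), ∞)))
    have zl : ∀ (c : XX n) (v : ℕ → XX n), om (fun k => kap c (v k)) = 0 := fun c v =>
      om_kap_zero_left (fun _ => c) v ⟨0, hn⟩ rfl
    have zr : ∀ (c : XX n) (u : ℕ → XX n), om (fun k => kap (u k) c) = 0 := fun c u =>
      om_kap_zero_right u (fun _ => c) ⟨0, hn⟩ rfl
    rcases cell x (Fin.castAdd n ⟨0, hn⟩) with h | h <;>
      rcases cell x (Fin.natAdd n ⟨0, hn⟩) with h' | h'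
    · have u : ∀ k, φ0 (pA n (emb (vtx x e k))) = ∞ := fun k => ph0 a1 a2 _ (h e k)
      have v : ∀ k, φ0 (pB n (emb (vtx x e k))) = ∞ := fun k => ph0 a1 a2 _ (h' e k)
      simp only [u, v, zl, add_zero]
    · have u : ∀ k, φ0 (pA n (emb (vtx x e k))) = ∞ := fun k => ph0 a1 a2 _ (h e k)
      have v : ∀ k, φ1 (pB n (emb (vtx x e k))) = ∞ := fun k => ph1 b1 b2 _ (h' e k)
      simp only [u, v]
      rw [zl, zero_add]
    · have u : ∀ k, φ1 (pA n (emb (vtx x e k))) = ∞ := fun k => ph1 b1 b2 _ (h e k)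
      have v : ∀ k, φ0 (pB n (emb (vtx x e k))) = ∞ := fun k => ph0 a1 a2 _ (h' e k)
      simp only [u, v]
      rw [zr (F2 (∞, ∞)) (fun _ => F1 (∞, ∞)), add_zero]
    · have u : ∀ k, φ1 (pA n (emb (vtx x e k))) = ∞ := fun k => ph1 b1 b2 _ (h e k)
      have v : ∀ k, φ1 (pB n (emb (vtx x e k))) = ∞ := fun k => ph1 b1 b2 _ (h' e k)
      simp only [u, v, zr, add_zero]
  have c1 : ∀ G : C(XX n, XX n), (G.comp φ0).Homotopic G := fun G => by
    simpa using (Homotopic.refl G).comp a3.symm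
  have c2 : ∀ G : C(XX n, XX n), (G.comp φ1).Homotopic G := fun G => by
    simpa using (Homotopic.refl G).comp b3.symm
  filter_upwards [DG_homotopic e1, deg_htpy (c1 (F1.comp (inL ∞))), deg_htpy (c1 (F1.comp (inR ∞))),
    deg_htpy (c2 (F2.comp (inL ∞))), deg_htpy (c2 (F2.comp (inR ∞)))] with M h1 h2 h3 h4 h5
  have : DG M (fun z => kap (F1 (pA n z, pB n z)) (F2 (pA n z, pB n z))) = DG M (K F1 F2) := rfl
  rw [this, h1, key, DG_AB, DG_BA, h2, h3, h4, h5]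
end WD

namespace WD
open Filter OnePoint
open ContinuousMap (Homotopic)

variable {S : Type} [TopologicalSpace S] (b : S)

def wq1 : C(Wedge S S b b, S) :=
  ⟨Quot.lift (Sum.elim id (fun _ => b)) (by rintro _ _ ⟨rfl, rfl⟩; rfl),
    continuous_quot_lift _ (continuous_id.sumElim continuous_const)⟩
def wq2 : C(Wedge S S b b, S) :=
  ⟨Quot.lift (Sum.elim (fun _ => b) id) (by rintro _ _ ⟨rfl, rfl⟩; rfl),
    continuous_quot_lift _ (continuous_const.sumElim continuous_id)⟩
def wi1 : C(S, Wedge S S b b) := ⟨fun s => Quot.mk _ (Sum.inl s), continuous_quot_mk.comp continuous_inl⟩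
def wi2 : C(S, Wedge S S b b) := ⟨fun s => Quot.mk _ (Sum.inr s), continuous_quot_mk.comp continuous_inr⟩

theorem wq_or (w : Wedge S S b b) : wq1 b w = b ∨ wq2 b w = b := by
  induction w using Quot.ind with
  | mk a =>
    rcases a with s | s
    · right; rfl
    · left; rfl

theorem main {n : ℕ} (hn : 0 < n) (h : XX n ≃ₜ S) (d : C(S × S, Wedge S S b b)) (u : C(Wedge S S b b, S × S))
    (hdu : (d.comp u).Homotopic (ContinuousMap.id _)) : False := by
  obtain ⟨k, hk, hk'⟩ := exists_pointed hn (h.symm b)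
  let h1 : C(XX n, S) := ⟨h, h.continuous⟩
  let h2 : C(S, XX n) := ⟨h.symm, h.symm.continuous⟩
  let F : C(Wedge S S b b, S) → C(XX n × XX n, XX n) := fun q => k.comp (h2.comp (q.comp (d.comp (h1.prodMap h1))))
  let f : C(S, Wedge S S b b) → C(XX n, XX n × XX n) := fun i => (h2.prodMap h2).comp (u.comp (i.comp h1))
  let f1 : C(S, Wedge S S b b) → C(XX n, XX n) := fun i => ContinuousMap.fst.comp (f i)
  let f2 : C(S, Wedge S S b b) → C(XX n, XX n) := fun i => ContinuousMap.snd.comp (f i)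
  have hFf : ∀ q i, ((F q).comp ((f1 i).prodMk (f2 i))).Homotopic (k.comp (h2.comp ((q.comp i).comp h1))) := by
    intro q i
    have := (Homotopic.refl (k.comp (h2.comp q))).comp (hdu.comp (Homotopic.refl (i.comp h1)))
    have e : (F q).comp ((f1 i).prodMk (f2 i)) = (k.comp (h2.comp q)).comp ((d.comp u).comp (i.comp h1)) := by
      apply ContinuousMap.ext
      intro x
      show k (h.symm (q (d (h (h.symm (u (i (h x))).1), h (h.symm (u (i (h x))).2))))) = k (h.symm (q (d (u (i (h x))))))
      simp
    rw [e]
    exact this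
  have e11 : ((F (wq1 b)).comp ((f1 (wi1 b)).prodMk (f2 (wi1 b)))).Homotopic (ContinuousMap.id _) := by
    refine (hFf _ _).trans ?_
    have e : k.comp (h2.comp (((wq1 b).comp (wi1 b)).comp h1)) = k := by
      apply ContinuousMap.ext; intro x
      show k (h.symm (h x)) = k x
      simp
    rw [e]; exact hk'.symm
  have e22 : ((F (wq2 b)).comp ((f1 (wi2 b)).prodMk (f2 (wi2 b)))).Homotopic (ContinuousMap.id _) := by
    refine (hFf _ _).trans ?_
    have e : k.comp (h2.comp (((wq2 b).comp (wi2 b)).comp h1)) = k := by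
      apply ContinuousMap.ext; intro x
      show k (h.symm (h x)) = k x
      simp
    rw [e]; exact hk'.symm
  have e12 : ((F (wq1 b)).comp ((f1 (wi2 b)).prodMk (f2 (wi2 b)))).Homotopic (ContinuousMap.const _ ∞) := by
    refine (hFf _ _).trans ?_
    have e : k.comp (h2.comp (((wq1 b).comp (wi2 b)).comp h1)) = ContinuousMap.const _ ∞ := by
      apply ContinuousMap.ext; intro x
      exact hk
    rw [e]
  have e21 : ((F (wq2 b)).comp ((f1 (wi1 b)).prodMk (f2 (wi1 b)))).Homotopic (ContinuousMap.const _ ∞) := by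
    refine (hFf _ _).trans ?_
    have e : k.comp (h2.comp (((wq2 b).comp (wi1 b)).comp h1)) = ContinuousMap.const _ ∞ := by
      apply ContinuousMap.ext; intro x
      exact hk
    rw [e]
  have hz : (fun z => kap (F (wq1 b) (pA n z, pB n z)) (F (wq2 b) (pA n z, pB n z))) =
      (fun _ => (∞ : XX (n+n))) := by
    funext z
    rcases wq_or b (d (h (pA n z), h (pB n z))) with hw | hw
    · have : F (wq1 b) (pA n z, pB n z) = ∞ := by
        show k (h.symm (wq1 b (d (h (pA n z), h (pB n z))))) = ∞
        rw [hw, hk]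
      rw [this, kap_left]
    · have : F (wq2 b) (pA n z, pB n z) = ∞ := by
        show k (h.symm (wq2 b (d (h (pA n z), h (pB n z))))) = ∞
        rw [hw, hk]
      rw [this, kap_right]
  have ev := (((((((((deg_wedge hn (F (wq1 b)) (F (wq2 b))).and
    (deg_add hn (F (wq1 b)) (f1 (wi1 b)) (f2 (wi1 b)))).and
    (deg_add hn (F (wq1 b)) (f1 (wi2 b)) (f2 (wi2 b)))).and
    (deg_add hn (F (wq2 b)) (f1 (wi1 b)) (f2 (wi1 b)))).and
    (deg_add hn (F (wq2 b)) (f1 (wi2 b)) (f2 (wi2 b)))).and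
    (deg_htpy e11)).and (deg_htpy e12)).and (deg_htpy e21)).and (deg_htpy e22)).and (deg_id n)
  obtain ⟨M, ⟨⟨⟨⟨⟨⟨⟨⟨⟨a0, a1⟩, a2⟩, a3⟩, a4⟩, b1⟩, b2⟩, b3⟩, b4⟩, c⟩⟩ := ev.exists
  rw [hz, DG_const (by omega)] at a0
  rw [b1, c] at a1
  rw [b2, deg_const hn] at a2
  rw [b3, deg_const hn] at a3
  rw [b4, c] at a4
  revert a0 a1 a2 a3 a4
  generalize deg M ((F (wq1 b)).comp (inL ∞)) = A
  generalize deg M ((F (wq1 b)).comp (inR ∞)) = B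
  generalize deg M ((F (wq2 b)).comp (inL ∞)) = C
  generalize deg M ((F (wq2 b)).comp (inR ∞)) = D
  generalize deg M (f1 (wi1 b)) = r1
  generalize deg M (f2 (wi1 b)) = r2
  generalize deg M (f1 (wi2 b)) = s1
  generalize deg M (f2 (wi2 b)) = s2
  intro a4 a3 a2 a0 a1
  have a5 : A * D - B * C = 0 := by rw [CharTwo.sub_eq_add]; exact a0.symm
  have : (1 : ZMod 2) = 0 := by
    linear_combination a1 + (A * r1 + B * r2) * a4 - (C * r1 + D * r2) * a2 + (r1 * s2 - r2 * s1) * a5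
  exact absurd this (by decide)

end WD

theorem wedge_not_dominated_by_prod_self (n : ℕ) (hn : 2 ≤ n) :
    ¬ HDominates (USphere n × USphere n)
        (Wedge (USphere n) (USphere n) (spherePt n) (spherePt n)) := by
  rintro ⟨d, u, h⟩
  exact WD.main (n := n) (spherePt n) (by omega)
    (onePointEquivSphereOfFinrankEq (ι := Fin (n+1)) (V := Fin n → ℝ) (by simp)) d u h
end

section
/- For every n ≥ 2, the wedge sum S^n ∨ S^{n+1} is not homotopy dominated by the product S^n × S^{n+1}. -/
open CategoryTheory

open Polynomial in
theorem detpoly {N : ℕ} (A : EuclideanSpace ℝ (Fin N) →L[ℝ] EuclideanSpace ℝ (Fin N)) :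
    ∃ P : ℝ[X], P.natDegree ≤ N ∧
      ∀ t : ℝ, P.eval t = (ContinuousLinearMap.id ℝ _ + t • A).det := by
  let b := (EuclideanSpace.basisFun (Fin N) ℝ).toBasis
  let M := LinearMap.toMatrix b b (A : EuclideanSpace ℝ (Fin N) →ₗ[ℝ] EuclideanSpace ℝ (Fin N))
  refine ⟨Matrix.det ((X : ℝ[X]) • M.map C + (1 : Matrix (Fin N) (Fin N) ℝ).map C), ?_, ?_⟩
  · simpa using Polynomial.natDegree_det_X_add_C_le M 1
  · intro t
    rw [ContinuousLinearMap.det, ← LinearMap.det_toMatrix b]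
    rw [← Polynomial.coe_evalRingHom, RingHom.map_det]
    congr 1
    ext i j
    simp [M, Matrix.one_apply, LinearMap.toMatrix_apply, b, add_comm, Matrix.add_apply]
    split_ifs <;> simp_all [eq_comm, mul_comm]

theorem lagr (N : ℕ) (δ : ℝ) (hδ : 0 < δ) : ∃ (t c : Fin (N+1) → ℝ),
    (∀ i, 0 < t i ∧ t i < δ) ∧ ∀ P : Polynomial ℝ, P.natDegree ≤ N → P.eval 1 = ∑ i, c i * P.eval (t i) := by
  let t : Fin (N+1) → ℝ := fun i => δ * ((i:ℝ)+1) / (N+2)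
  have ht : Function.Injective t := by
    intro i j h
    simp only [t] at h
    have : (N:ℝ)+2 ≠ 0 := by positivity
    field_simp at h
    exact Fin.ext (by exact_mod_cast (by linarith : (i:ℝ) = j))
  refine ⟨t, fun i => (Lagrange.basis Finset.univ t i).eval 1, ?_, ?_⟩
  · intro i
    refine ⟨by simp only [t]; positivity, ?_⟩
    simp only [t]
    rw [div_lt_iff₀ (by positivity)]
    have : (i:ℝ) < N + 1 := by exact_mod_cast i.2
    nlinarith
  · intro P hP
    have := Lagrange.eq_interpolate (s := Finset.univ) (v := t) (f := P) ht.injOn (by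
      refine lt_of_le_of_lt Polynomial.degree_le_natDegree ?_
      simp; exact_mod_cast Nat.lt_succ_of_le hP)
    conv_lhs => rw [this]
    simp [Lagrange.interpolate_apply, Polynomial.eval_finsetSum, mul_comm]

abbrev EE (N : ℕ) : Type := EuclideanSpace ℝ (Fin N)

open MeasureTheory Metric Filter Topology in
theorem no_C1_retract {N : ℕ} {ρ : ℝ} (hρ : 0 < ρ)
    (G : EE N → EE N) (hG : ContDiff ℝ 1 G)
    (hn : ∀ x, ‖G x‖ = ρ) (hid : ∀ x, ‖x‖ = ρ → G x = x) : False := by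
  let B : Set (EE N) := closedBall 0 ρ
  have hBc : IsCompact B := isCompact_closedBall _ _
  let φ : (EE N) → (EE N) := fun x => G x - x
  have hφ : ContDiff ℝ 1 φ := hG.sub contDiff_id
  have hφd : Differentiable ℝ φ := hφ.differentiable (by norm_num)
  have hdφ : Continuous (fderiv ℝ φ) := hφ.continuous_fderiv (by norm_num)
  -- Lipschitz
  obtain ⟨C, hC0, hC⟩ : ∃ C : ℝ, 0 < C ∧ ∀ x ∈ B, ‖fderiv ℝ φ x‖ ≤ C := by
    obtain ⟨C, hC⟩ := hBc.exists_bound_of_continuousOn hdφ.continuousOn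
    exact ⟨max C 1, by positivity, fun x hx => (hC x hx).trans (le_max_left _ _)⟩
  have hlip : ∀ x ∈ B, ∀ y ∈ B, ‖φ x - φ y‖ ≤ C * ‖x - y‖ := by
    intro x hx y hy
    exact (convex_closedBall (0:(EE N)) ρ).norm_image_sub_le_of_norm_fderiv_le
      (fun z _ => hφd z) hC hy hx
  classical
  let ψ : (EE N) → (EE N) := fun x => if x ∈ B then φ x else 0
  have hcross : ∀ x ∈ B, ∀ y ∉ B, ‖φ x‖ ≤ C * ‖x - y‖ := by
    intro x hx y hy
    have hx' : ‖x‖ ≤ ρ := by simpa [B] using hx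
    have hy' : ρ < ‖y‖ := by simpa [B] using hy
    have hcont : ContinuousOn (fun s : ℝ => ‖x + s • (y - x)‖) (Set.Icc 0 1) := by fun_prop
    obtain ⟨s, hs, hs'⟩ := intermediate_value_Icc zero_le_one hcont
      (show ρ ∈ Set.Icc _ _ from ⟨by simpa using hx', by simpa using hy'.le⟩)
    have hz : φ (x + s • (y - x)) = 0 := by simp only [φ]; rw [hid _ hs']; simp
    have := hlip x hx (x + s • (y - x)) (by simp [B]; exact hs'.le)
    rw [hz, sub_zero] at this
    refine this.trans ?_
    gcongr
    rw [show x - (x + s • (y - x)) = s • (x - y) by module, norm_smul, Real.norm_eq_abs, abs_of_nonneg hs.1]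
    exact mul_le_of_le_one_left (norm_nonneg _) hs.2
  have hψ : ∀ x y, ‖ψ x - ψ y‖ ≤ C * ‖x - y‖ := by
    intro x y
    by_cases hx : x ∈ B <;> by_cases hy : y ∈ B <;> simp only [ψ, hx, hy, if_true, if_false]
    · exact hlip x hx y hy
    · simpa using hcross x hx y hy
    · rw [zero_sub, norm_neg, norm_sub_rev x y]; exact hcross y hy x hx
    · simp; positivity
  have hdetc : Continuous (fun p : ℝ × (EE N) => (ContinuousLinearMap.id ℝ (EE N) + p.1 • fderiv ℝ φ p.2).det) := by
    exact ContinuousLinearMap.continuous_det.comp (by fun_prop)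
  have hpos : ∀ᶠ t in 𝓝 (0:ℝ), ∀ x ∈ B, 0 < (ContinuousLinearMap.id ℝ (EE N) + t • fderiv ℝ φ x).det := by
    apply hBc.eventually_forall_of_forall_eventually
    intro x hx
    have : 0 < (fun p : ℝ × (EE N) => (ContinuousLinearMap.id ℝ (EE N) + p.1 • fderiv ℝ φ p.2).det) (0, x) := by
      simp [ContinuousLinearMap.det]
    exact hdetc.continuousAt.eventually (lt_mem_nhds this)
  obtain ⟨δ₁, hδ₁, hδ₁'⟩ := Metric.eventually_nhds_iff.1 hpos
  have key : ∀ t : ℝ, 0 < t → t < min δ₁ (min 1 (1 / C)) →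
      ∫ x in B, (ContinuousLinearMap.id ℝ (EE N) + t • fderiv ℝ φ x).det = (volume B).toReal := by
    intro t ht0 ht
    have ht1 : t < δ₁ := ht.trans_le (min_le_left _ _)
    have ht2 : t < 1 := ht.trans_le ((min_le_right _ _).trans (min_le_left _ _))
    have ht3 : t * C < 1 := by
      have := ht.trans_le ((min_le_right _ _).trans (min_le_right _ _))
      rwa [lt_div_iff₀ hC0] at this
    let f : (EE N) → (EE N) := fun x => x + t • ψ x
    let c : NNReal := ⟨t * C, by positivity⟩
    have happ : ApproximatesLinearOn f ((ContinuousLinearEquiv.refl ℝ (EE N) : (EE N) ≃L[ℝ] (EE N)) : (EE N) →L[ℝ] (EE N)) Set.univ c := by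
      intro x _ y _
      simp only [f, ContinuousLinearEquiv.coe_refl, ContinuousLinearMap.id_apply]
      rw [show x + t • ψ x - (y + t • ψ y) - (x - y) = t • (ψ x - ψ y) by
        module, norm_smul, Real.norm_eq_abs, abs_of_pos ht0]
      show _ ≤ t * C * _
      rw [mul_assoc]
      gcongr
      exact hψ x y
    have hcN : Subsingleton (EE N) ∨ c < ‖((ContinuousLinearEquiv.refl ℝ (EE N)).symm : (EE N) →L[ℝ] (EE N))‖₊⁻¹ := by
      rcases subsingleton_or_nontrivial (EE N) with h | h
      · exact Or.inl h
      · right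
        simp
        exact_mod_cast ht3
    have hinj := happ.injOn hcN
    have hsurj := happ.surjective hcN
    have hfB : ∀ x ∈ B, f x = x + t • φ x := fun x hx => by simp [f, ψ, hx]
    have himg : f '' B = B := by
      apply Set.Subset.antisymm
      · rintro _ ⟨x, hx, rfl⟩
        rw [hfB x hx]
        have hx' : ‖x‖ ≤ ρ := by simpa [B] using hx
        simp only [B, mem_closedBall, dist_zero_right, φ]
        rw [show x + t • (G x - x) = (1 - t) • x + t • G x by module]
        refine (norm_add_le _ _).trans ?_
        rw [norm_smul, norm_smul, hn, Real.norm_eq_abs, Real.norm_eq_abs, abs_of_pos ht0, abs_of_pos (by linarith)]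
        nlinarith
      · intro y hy
        obtain ⟨x, rfl⟩ := hsurj y
        refine ⟨x, ?_, rfl⟩
        by_contra hx
        apply hx
        have : f x = x := by simp [f, ψ, hx]
        rwa [this] at hy
    have hcv := lintegral_abs_det_fderiv_eq_addHaar_image (volume : Measure (EE N)) (s := B) (f := f)
      (f' := fun x => ContinuousLinearMap.id ℝ (EE N) + t • fderiv ℝ φ x) hBc.measurableSet
      (by
        intro x hx
        have : HasFDerivAt (fun x => x + t • φ x) (ContinuousLinearMap.id ℝ (EE N) + t • fderiv ℝ φ x) x :=
          (hasFDerivAt_id x).add ((hφd x).hasFDerivAt.const_smul t)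
        exact this.hasFDerivWithinAt.congr hfB (hfB x hx))
      (hinj.mono (Set.subset_univ _))
    rw [himg] at hcv
    have hp : ∀ x ∈ B, 0 < (ContinuousLinearMap.id ℝ (EE N) + t • fderiv ℝ φ x).det :=
      hδ₁' (by simpa [abs_of_pos ht0] using ht1)
    rw [← hcv, integral_eq_lintegral_of_nonneg_ae]
    · congr 1
      apply setLIntegral_congr_fun hBc.measurableSet
      intro x hx
      simp only [abs_of_pos (hp x hx)]
    · exact (ae_restrict_iff' hBc.measurableSet).2 (Eventually.of_forall fun x hx => (hp x hx).le)
    · exact (hdetc.comp (by fun_prop : Continuous fun x : (EE N) => (t, x))).aestronglyMeasurable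
  have hdet1 : ∀ x, (ContinuousLinearMap.id ℝ (EE N) + (1:ℝ) • fderiv ℝ φ x).det = 0 := by
    intro x
    have hGd : HasFDerivAt G (fderiv ℝ G x) x := (hG.differentiable (by norm_num) x).hasFDerivAt
    have e : ContinuousLinearMap.id ℝ (EE N) + (1:ℝ) • fderiv ℝ φ x = fderiv ℝ G x := by
      have : HasFDerivAt φ (fderiv ℝ G x - ContinuousLinearMap.id ℝ (EE N)) x := hGd.sub (hasFDerivAt_id x)
      rw [this.fderiv]; simp
    rw [e]
    have horth : ∀ v, inner ℝ (G x) (fderiv ℝ G x v) = 0 := by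
      intro v
      have h1 := hGd.inner ℝ hGd
      have h2 : (fun y => inner ℝ (G y) (G y)) = fun _ => ρ ^ 2 := by
        ext y; rw [real_inner_self_eq_norm_sq, hn]
      rw [h2] at h1
      have h3 := congrArg (fun L => L v) (h1.unique (hasFDerivAt_const (ρ^2) x))
      simp [real_inner_comm] at h3
      rw [real_inner_comm] at h3 ⊢
      linarith
    by_contra hne
    have hu : IsUnit (LinearMap.det (fderiv ℝ G x : (EE N) →ₗ[ℝ] (EE N))) := isUnit_iff_ne_zero.2 hne
    have hs : Function.Surjective (fderiv ℝ G x) :=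
      (LinearMap.equivOfDetNeZero _ hne).surjective
    obtain ⟨v, hv⟩ := hs (G x)
    have := horth v
    rw [hv, real_inner_self_eq_norm_sq, hn] at this
    exact absurd this (by positivity)
  obtain ⟨t, c, htc, hP⟩ := lagr N (min δ₁ (min 1 (1 / C))) (by positivity)
  have h1 : ∀ x, (0:ℝ) = ∑ i, c i * (ContinuousLinearMap.id ℝ (EE N) + t i • fderiv ℝ φ x).det := by
    intro x
    obtain ⟨P, hPd, hPe⟩ := detpoly (fderiv ℝ φ x)
    have := hP P hPd
    simp only [hPe] at this
    rw [← this]; exact (hdet1 x).symm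
  have h2 : (1:ℝ) = ∑ i, c i := by simpa using hP 1 (by simp)
  have hint : ∀ i, IntegrableOn (fun x => c i * (ContinuousLinearMap.id ℝ (EE N) + t i • fderiv ℝ φ x).det) B volume := by
    intro i
    exact (continuous_const.mul (hdetc.comp (by fun_prop : Continuous fun x : (EE N) => (t i, x)))).continuousOn.integrableOn_compact hBc
  have h3 : ∫ x in B, ∑ i, c i * (ContinuousLinearMap.id ℝ (EE N) + t i • fderiv ℝ φ x).det = (volume B).toReal := by
    rw [integral_finsetSum _ (fun i _ => hint i)]
    simp_rw [integral_const_mul]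
    rw [Finset.sum_congr rfl (fun i _ => by rw [key (t i) (htc i).1 (htc i).2]), ← Finset.sum_mul, ← h2, one_mul]
  simp_rw [← h1] at h3
  simp at h3
  have : 0 < (volume B).toReal := ENNReal.toReal_pos (measure_closedBall_pos volume 0 hρ).ne' hBc.measure_lt_top.ne
  linarith

open Function in
theorem brouwer_zero_aux {N : ℕ} (R : EE N → EE N) (hR : Continuous R) (M : ℝ)
    (hM : ∀ x, M ≤ ‖x‖ → R x = x) (h0 : ∀ x, R x ≠ 0) : False := by
  obtain ⟨ρ, hρ, hMρ⟩ : ∃ ρ : ℝ, 0 < ρ ∧ M ≤ ρ := ⟨max M 1, by positivity, le_max_left _ _⟩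
  -- lower bound function
  have hεc : Continuous fun x => ‖R x‖ := hR.norm
  obtain ⟨g, hg, hgd, hgs⟩ := Continuous.exists_contDiff_approx (f := fun x => R x - x) (ε := fun x => ‖R x‖) 1
    (hR.sub continuous_id) hεc (fun x => norm_pos_iff.2 (h0 x))
  let F : EE N → EE N := fun x => x + g x
  have hF : ContDiff ℝ 1 F := contDiff_id.add hg
  have hF0 : ∀ x, F x ≠ 0 := by
    intro x hx
    have := hgd x
    rw [dist_eq_norm, show g x - (R x - x) = F x - R x by simp only [F]; abel, hx, zero_sub, norm_neg] at this
    exact lt_irrefl _ this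
  have hFid : ∀ x, M ≤ ‖x‖ → F x = x := by
    intro x hx
    have : g x = 0 := by
      by_contra h
      have := hgs (mem_support.2 h)
      simp [hM x hx] at this
    simp [F, this]
  refine no_C1_retract hρ (fun x => (ρ * ‖F x‖⁻¹) • F x) ?_ ?_ ?_
  · exact (contDiff_const.mul ((hF.norm ℝ hF0).inv fun x => (norm_pos_iff.2 (hF0 x)).ne')).smul hF
  · intro x
    have := (norm_pos_iff.2 (hF0 x)).ne'
    simp [norm_smul, abs_of_pos hρ, mul_assoc, this]
  · intro x hx
    simp [hFid x (hx ▸ hMρ), hx, hρ.ne']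

theorem brouwer_zero {E : Type*} [NormedAddCommGroup E] [NormedSpace ℝ E] [FiniteDimensional ℝ E]
    (R : E → E) (hR : Continuous R) (M : ℝ)
    (hM : ∀ x, M ≤ ‖x‖ → R x = x) (h0 : ∀ x, R x ≠ 0) : False := by
  let e := toEuclidean (E := E)
  refine brouwer_zero_aux (fun x => e (R (e.symm x))) (by fun_prop) (‖e.toContinuousLinearMap‖ * M + 1) ?_ ?_
  · intro x hx
    rw [hM, e.apply_symm_apply]
    by_contra h
    push Not at h
    have h1 := e.toContinuousLinearMap.le_opNorm (e.symm x)
    have h2 : e.toContinuousLinearMap (e.symm x) = x := e.apply_symm_apply x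
    rw [h2] at h1
    have := mul_le_mul_of_nonneg_left h.le (norm_nonneg e.toContinuousLinearMap)
    linarith
  · intro x; simpa using h0 _

open Classical in
noncomputable def nrm {k : ℕ} (v : EE (k+1)) : USphere k :=
  if h : v = 0 then spherePt k else ⟨‖v‖⁻¹ • v, by
    have : ‖v‖ ≠ 0 := norm_ne_zero_iff.2 h
    simp [norm_smul, this]⟩

theorem nrm_val {k : ℕ} {v : EE (k+1)} (h : v ≠ 0) : (nrm v : EE (k+1)) = ‖v‖⁻¹ • v := by
  simp [nrm, h]

theorem sph_norm {k : ℕ} (x : USphere k) : ‖(x : EE (k+1))‖ = 1 := by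
  simpa using x.2

theorem sph_ne {k : ℕ} (x : USphere k) : (x : EE (k+1)) ≠ 0 := by
  intro h; have := sph_norm x; rw [h] at this; simp at this

theorem nrm_coe {k : ℕ} (x : USphere k) : nrm (x : EE (k+1)) = x := by
  apply Subtype.ext; rw [nrm_val (sph_ne x), sph_norm]; simp

theorem nrm_smul {k : ℕ} (x : EE (k+1)) (c : ℝ) (hc : 0 < c) : nrm (c • x) = nrm x := by
  by_cases h : x = 0
  · simp [h]
  · apply Subtype.ext
    rw [nrm_val h, nrm_val (smul_ne_zero hc.ne' h), norm_smul, smul_smul, Real.norm_eq_abs, abs_of_pos hc]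
    congr 1; field_simp

theorem nrm_contAt {k : ℕ} {Z : Type*} [TopologicalSpace Z] {φ : Z → EE (k+1)} {z : Z}
    (hφ : ContinuousAt φ z) (h0 : φ z ≠ 0) : ContinuousAt (fun z => nrm (φ z)) z := by
  have h1 : ContinuousAt (nrm : EE (k+1) → USphere k) (φ z) := by
    rw [Topology.IsInducing.subtypeVal.continuousAt_iff]
    have : ContinuousAt (fun v : EE (k+1) => ‖v‖⁻¹ • v) (φ z) :=
      (continuous_norm.continuousAt.inv₀ (norm_ne_zero_iff.2 h0)).smul continuousAt_id
    refine this.congr ?_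
    filter_upwards [isOpen_ne.mem_nhds h0] with v hv
    exact (nrm_val hv).symm
  exact h1.comp hφ

theorem nrm_cont {k : ℕ} {Z : Type*} [TopologicalSpace Z] {φ : Z → EE (k+1)} 
    (hφ : Continuous φ) (h0 : ∀ z, φ z ≠ 0) : Continuous (fun z => nrm (φ z)) :=
  continuous_iff_continuousAt.2 fun z => nrm_contAt hφ.continuousAt (h0 z)

/-- homotopy through nonzero vectors -/
theorem homotopic_of_nonzero {k : ℕ} {Z : Type*} [TopologicalSpace Z] (f g : C(Z, USphere k))
    (H : unitInterval × Z → EE (k+1)) (hH : Continuous H) (h : ∀ z, H z ≠ 0)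
    (h0 : ∀ z, nrm (H (0, z)) = f z) (h1 : ∀ z, nrm (H (1, z)) = g z) : f.Homotopic g :=
  ⟨{ toFun := fun z => nrm (H z), continuous_toFun := nrm_cont hH h, map_zero_left := h0, map_one_left := h1 }⟩

theorem homotopic_of_close {k : ℕ} {Z : Type*} [TopologicalSpace Z] (f g : C(Z, USphere k))
    (h : ∀ z, (f z : EE (k+1)) ≠ - (g z : EE (k+1))) : f.Homotopic g := by
  refine homotopic_of_nonzero f g (fun p => (1 - (p.1:ℝ)) • (f p.2 : EE (k+1)) + (p.1:ℝ) • (g p.2 : EE (k+1)))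
    (by fun_prop) ?_ (by simp [nrm_coe]) (by simp [nrm_coe])
  rintro ⟨s, z⟩ he
  simp only at he
  have e1 : (1 - (s:ℝ)) • (f z : EE (k+1)) = - ((s:ℝ) • (g z : EE (k+1))) := eq_neg_of_add_eq_zero_left he
  have e2 := congrArg norm e1
  rw [norm_neg, norm_smul, norm_smul, sph_norm, sph_norm, Real.norm_eq_abs, Real.norm_eq_abs,
    abs_of_nonneg s.2.1, abs_of_nonneg (by linarith [s.2.2])] at e2
  have hs : (s:ℝ) = 1/2 := by linarith
  rw [hs] at e1
  apply h z
  have := congrArg (fun v => (2:ℝ) • v) e1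
  simp only [smul_neg, smul_smul] at this
  norm_num at this
  exact this

instance sph_path (k : ℕ) : PathConnectedSpace (USphere (k+1)) := by
  have : IsPathConnected (Metric.sphere (0 : EuclideanSpace ℝ (Fin (k+1+1))) 1) :=
    isPathConnected_sphere (by
      rw [← Module.finrank_eq_rank]; simp; norm_cast; omega) 0 zero_le_one
  exact isPathConnected_iff_pathConnectedSpace.1 this

theorem const_homotopic {Z Y : Type*} [TopologicalSpace Z] [TopologicalSpace Y] [PathConnectedSpace Y] (a b : Y) :
    (ContinuousMap.const Z a).Homotopic (ContinuousMap.const Z b) := by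
  obtain ⟨γ⟩ := PathConnectedSpace.joined a b
  exact ⟨{ toFun := fun p => γ p.1, continuous_toFun := by fun_prop, map_zero_left := by simp, map_one_left := by simp }⟩

theorem null_of_lt {p q : ℕ} (hpq : p < q + 1) (b : C(USphere p, USphere (q+1))) (y : USphere (q+1)) :
    b.Homotopic (ContinuousMap.const _ y) := by
  -- extend b
  let b' : EE (p+1) → EE (q+1+1) := fun v => ‖v‖ • (b (nrm v) : EE (q+1+1))
  have hb' : Continuous b' := by
    rw [continuous_iff_continuousAt]
    intro v
    by_cases hv : v = 0
    · subst hv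
      rw [ContinuousAt]
      simp only [b', norm_zero, zero_smul]
      rw [tendsto_zero_iff_norm_tendsto_zero]
      simp only [norm_smul, sph_norm, norm_norm, mul_one]
      exact (continuous_norm.tendsto' _ _ (by simp))
    · exact continuous_norm.continuousAt.smul
        (continuous_subtype_val.continuousAt.comp (b.continuous.continuousAt.comp (nrm_contAt continuousAt_id hv)))
  obtain ⟨B, hB, hBd, -⟩ := hb'.exists_contDiff_approx 1 (ε := fun _ => 1/2) continuous_const (by intro; norm_num)
  have hd := hB.dense_compl_range_of_finrank_lt_finrank (by simp; omega)
  obtain ⟨v, hv, hvd⟩ := hd.exists_dist_lt 0 (ε := 1/2) (by norm_num)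
  have hBv : ∀ x, B x - v ≠ 0 := fun x h => hv ⟨x, sub_eq_zero.1 h⟩
  let c : C(USphere p, USphere (q+1)) := ⟨fun x => nrm (B x - v), nrm_cont (by fun_prop) (fun x => hBv _)⟩
  have h1 : b.Homotopic c := by
    refine homotopic_of_nonzero b c (fun z => (1 - (z.1:ℝ)) • (b z.2 : EE (q+1+1)) + (z.1:ℝ) • (B z.2 - v))
      (by fun_prop) ?_ (by simp [nrm_coe]) (by simp [c])
    rintro ⟨s, x⟩ he
    simp only at he
    have hbx : b' x = b x := by simp [b', sph_norm, nrm_coe]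
    have e1 : (b x : EE (q+1+1)) = (s:ℝ) • ((b' x - B x) + v) := by
      rw [hbx, ← sub_eq_zero]; refine Eq.trans ?_ he; module
    have e2 := congrArg norm e1
    rw [sph_norm, norm_smul, Real.norm_eq_abs, abs_of_nonneg s.2.1] at e2
    have e3 := norm_add_le (b' x - B x) v
    have e4 := hBd x
    rw [dist_comm, dist_eq_norm] at e4
    rw [dist_zero_left] at hvd
    have := s.2.2
    nlinarith [s.2.1, norm_nonneg (b' x - B x + v)]
  have h2 : c.Homotopic (ContinuousMap.const _ (nrm (B 0 - v))) := by
    refine homotopic_of_nonzero _ _ (fun z => B ((1 - (z.1:ℝ)) • (z.2 : EE (p+1))) - v) (by fun_prop)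
      (fun z => hBv _) (by simp [c]) (by simp)
  exact (h1.trans h2).trans (const_homotopic _ _)

noncomputable def jmap (p q : ℕ) (z : USphere (p+1) × USphere (q+1)) : EE (p+1+1) × (Fin (q+1) → ℝ) :=
  ((2 + (z.2 : EE (q+1+1)) 0) • (z.1 : EE (p+1+1)) - (2:ℝ) • EuclideanSpace.single 0 1, fun i => (z.2 : EE (q+1+1)) i.succ)

theorem sph_sq {k : ℕ} (y : USphere k) : (y : EE (k+1)) 0 ^ 2 + ∑ i : Fin k, (y : EE (k+1)) i.succ ^ 2 = 1 := by
  have := EuclideanSpace.norm_sq_eq (y : EE (k+1))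
  rw [sph_norm, Fin.sum_univ_succ] at this
  simpa using this.symm

theorem jmap_ne (p q : ℕ) (z) : jmap p q z ≠ 0 := by
  intro h
  obtain ⟨h1, h2⟩ := Prod.ext_iff.1 h
  simp only [jmap, Prod.fst_zero, Prod.snd_zero] at h1 h2
  have h3 := sph_sq z.2
  have h4 : ∑ i : Fin (q+1), (z.2 : EE (q+1+1)) i.succ ^ 2 = 0 :=
    Finset.sum_eq_zero fun i _ => by rw [congrFun h2 i]; simp
  rw [h4, add_zero] at h3
  have h5 := congrArg norm (sub_eq_zero.1 h1)
  rw [norm_smul, norm_smul, sph_norm] at h5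
  simp at h5
  rcases sq_eq_sq_iff_eq_or_eq_neg.1 (h3.trans (one_pow 2).symm) with h | h <;> rw [h] at h5 <;> norm_num at h5

theorem jmap_cont (p q : ℕ) : Continuous (jmap p q) := by
  unfold jmap
  fun_prop

abbrev VV (p q : ℕ) : Type := EE (p+1+1) × (Fin (q+1) → ℝ)

theorem no_wedge (p q : ℕ) (Ψ : C(USphere (p+1) × USphere (q+1), USphere (p+1) × USphere (q+1)))
    (hW : ∀ z, (Ψ z).1 = spherePt _ ∨ (Ψ z).2 = spherePt _)
    (hΨ : (ContinuousMap.id _).Homotopic Ψ) : False := by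
  let vv : VV p q := (EuclideanSpace.single 1 1, fun _ => 1)
  have hvv : vv ≠ 0 := by
    intro h
    have := congrFun (Prod.ext_iff.1 h).2 0
    simp [vv] at this
  let j : C(USphere (p+1) × USphere (q+1), {v : VV p q // v ≠ 0}) :=
    ⟨fun z => ⟨jmap p q z, jmap_ne p q z⟩, (jmap_cont p q).subtype_mk _⟩
  have h1 : j.Homotopic (j.comp Ψ) := by
    simpa using (ContinuousMap.Homotopic.refl j).comp hΨ
  have h2 : (j.comp Ψ).Homotopic (ContinuousMap.const _ ⟨vv, hvv⟩) := by
    have hne : ∀ s : unitInterval × (USphere (p+1) × USphere (q+1)),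
        (1 - (s.1:ℝ)) • jmap p q (Ψ s.2) + (s.1:ℝ) • vv ≠ 0 := by
      rintro ⟨s, z⟩ he
      simp only at he
      have hs : (s:ℝ) = 0 := by
        rcases hW z with h | h
        · have := congrArg (fun v : VV p q => v.1 1) he
          simpa [jmap, h, spherePt, vv] using this
        · have := congrArg (fun v : VV p q => v.2 0) he
          simpa [jmap, h, spherePt, vv] using this
      rw [hs] at he
      simp at he
      exact jmap_ne _ _ _ he
    have hc := jmap_cont p q
    exact ⟨{ toFun := fun s => ⟨_, hne s⟩,
             continuous_toFun := by
               apply Continuous.subtype_mk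
               fun_prop
             map_zero_left := fun z => Subtype.ext (by simp [j])
             map_one_left := fun z => Subtype.ext (by simp) }⟩
  obtain ⟨H⟩ := h1.trans h2
  let zz : VV p q → EE (q+1+1) := fun ξ => WithLp.toLp 2 (Fin.cons (‖ξ.1‖ - 2) ξ.2)
  have hzz : Continuous zz := by
    apply (PiLp.continuous_toLp 2 _).comp
    apply continuous_pi
    intro i
    refine Fin.cases ?_ (fun i => ?_) i
    · simp only [Fin.cons_zero]; fun_prop
    · simp only [Fin.cons_succ]; fun_prop
  let Hc : VV p q → VV p q := fun ξ => (H (Set.projIcc 0 1 zero_le_one (2 - 2 * ‖zz ξ‖), (nrm ξ.1, nrm (zz ξ))) : VV p q)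
  have hHcv : ∀ ξ, ‖zz ξ‖ ≤ 1/2 → Hc ξ = vv := by
    intro ξ h
    simp only [Hc]
    rw [Set.projIcc_of_right_le _ (by linarith)]
    erw [H.apply_one]
    rfl
  have hw : ∀ ξ, ‖zz ξ‖ ≤ 1 → 1 ≤ ‖ξ.1‖ ∧ ‖ξ.1‖ ≤ 3 := by
    intro ξ h
    have := (PiLp.norm_apply_le (zz ξ) 0).trans h
    simp [zz, abs_le] at this
    constructor <;> linarith
  have hHcc : ∀ ξ, ‖zz ξ‖ ≤ 1 → ContinuousAt Hc ξ := by
    intro ξ h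
    by_cases h2 : ‖zz ξ‖ < 1/2
    · have : ∀ᶠ η in nhds ξ, vv = Hc η := by
        filter_upwards [(isOpen_lt (hzz.norm) continuous_const).mem_nhds h2] with η hη
        exact (hHcv η hη.le).symm
      exact continuousAt_const.congr this
    · have hz0 : zz ξ ≠ 0 := by
        intro h0; rw [h0] at h2; norm_num at h2
      have hw0 : ξ.1 ≠ 0 := by
        intro h0; have := (hw ξ h).1; rw [h0] at this; norm_num at this
      have c1 : ContinuousAt (fun ξ : VV p q => nrm ξ.1) ξ := nrm_contAt continuousAt_fst hw0
      have c2 : ContinuousAt (fun ξ : VV p q => nrm (zz ξ)) ξ := nrm_contAt hzz.continuousAt hz0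
      have c3 : Continuous (fun ξ : VV p q => Set.projIcc (0:ℝ) 1 zero_le_one (2 - 2 * ‖zz ξ‖)) :=
        continuous_projIcc.comp (by fun_prop)
      exact continuous_subtype_val.continuousAt.comp
        (H.continuous.continuousAt.comp (c3.continuousAt.prodMk (c1.prodMk c2)))
  let A : VV p q → VV p q := fun ξ => (ξ.1 - (2:ℝ) • EuclideanSpace.single 0 1, ξ.2)
  have hA : Continuous A := by simp only [A]; fun_prop
  have hAH : ∀ ξ, 1 = ‖zz ξ‖ → A ξ = Hc ξ := by
    intro ξ h
    have hz0 : zz ξ ≠ 0 := by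
      intro h0; rw [h0] at h; norm_num at h
    have hw0 : ξ.1 ≠ 0 := by
      intro h0; have := (hw ξ h.ge).1; rw [h0] at this; norm_num at this
    simp only [Hc]
    rw [Set.projIcc_of_le_left _ (by linarith)]
    erw [H.apply_zero]
    simp only [j, ContinuousMap.coe_mk, jmap, A]
    rw [nrm_val hz0, nrm_val hw0, ← h]
    have hn : ‖ξ.1‖ ≠ 0 := norm_ne_zero_iff.2 hw0
    simp [zz, smul_smul, hn]
  let R : VV p q → VV p q := fun ξ => if 1 ≤ ‖zz ξ‖ then A ξ else Hc ξ
  have hR : Continuous R := by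
    refine continuous_if_le continuous_const hzz.norm hA.continuousOn ?_ hAH
    intro ξ hξ
    exact (hHcc ξ hξ).continuousWithinAt
  have hR0 : ∀ ξ, R ξ ≠ 0 := by
    intro ξ
    simp only [R]
    split_ifs with h
    · intro h0
      obtain ⟨e1, e2⟩ := Prod.ext_iff.1 h0
      simp only [A, Prod.fst_zero, Prod.snd_zero] at e1 e2
      have : zz ξ = 0 := by
        ext i
        refine Fin.cases ?_ (fun i => ?_) i
        · simp [zz, sub_eq_zero.1 e1, norm_smul]
        · simp [zz, e2]
      rw [this] at h; norm_num at h
    · exact (H _).2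
  refine brouwer_zero (E := (VV p q)) (fun ξ => R (ξ + ((2:ℝ) • EuclideanSpace.single 0 1, 0))) (by fun_prop) 10 ?_ (fun ξ => hR0 _)
  intro ξ hξ
  have : 1 ≤ ‖zz (ξ + ((2:ℝ) • EuclideanSpace.single 0 1, 0))‖ := by
    by_contra h
    push Not at h
    have h1 := (hw _ h.le).2
    have h2 : ‖ξ.2‖ ≤ 1 := by
      rw [pi_norm_le_iff_of_nonneg zero_le_one]
      intro i
      have := (PiLp.norm_apply_le (zz (ξ + ((2:ℝ) • EuclideanSpace.single 0 1, 0))) i.succ).trans h.le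
      simpa [zz] using this
    have h3 : ‖ξ.1‖ ≤ 5 := by
      have := norm_sub_le (ξ.1 + (2:ℝ) • EuclideanSpace.single 0 1) ((2:ℝ) • EuclideanSpace.single 0 1)
      rw [add_sub_cancel_right] at this
      have e : ‖(2:ℝ) • (EuclideanSpace.single 0 1 : EE (p+1+1))‖ = 2 := by simp [norm_smul]
      rw [e] at this
      simp only [Prod.fst_add] at h1
      linarith
    have : ‖ξ‖ ≤ 5 := by
      rw [Prod.norm_def]
      exact max_le h3 (by linarith)
    linarith
  simp only [R, if_pos this, A]
  ext <;> simp

section gadgets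
variable {k : ℕ}
noncomputable def e0 (k : ℕ) : EE (k+1) := EuclideanSpace.single 0 1
theorem e0_zero : (e0 k) 0 = 1 := by simp [e0]
theorem e0_norm : ‖e0 k‖ = 1 := by simp [e0]
noncomputable def ht (x : USphere k) : ℝ := (x : EE (k+1)) 0
theorem ht_cont : Continuous (ht : USphere k → ℝ) := by unfold ht; fun_prop

noncomputable def rvec (x : USphere k) : EE (k+1) := (x : EE (k+1)) - (2 * ht x) • e0 k
theorem rvec_norm (x : USphere k) : ‖rvec x‖ = 1 := by
  have h : ‖rvec x‖ ^ 2 = 1 := by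
    have hi : inner ℝ (x : EE (k+1)) (e0 k) = ht x := by
      simp [e0, ht, EuclideanSpace.inner_single_right]
    rw [rvec, norm_sub_sq_real, inner_smul_right, hi, norm_smul, sph_norm, e0_norm, Real.norm_eq_abs,
      mul_one, sq_abs]
    ring
  nlinarith [norm_nonneg (rvec x)]
noncomputable def rho : C(USphere k, USphere k) :=
  ⟨fun x => ⟨rvec x, by simpa using rvec_norm x⟩, by
    apply Continuous.subtype_mk
    have := ht_cont (k := k)
    unfold rvec; fun_prop⟩
theorem rho_ht (x : USphere k) : ht (rho x) = - ht x := by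
  show rvec x 0 = _
  simp [rvec, e0_zero, ht]; ring
theorem rho_rho (x : USphere k) : rho (rho x) = x := by
  apply Subtype.ext
  show rvec (rho x) = _
  rw [rvec, rho_ht]
  show rvec x - _ = _
  rw [rvec]; module

noncomputable def avec (s : ℝ) (x : USphere k) : EE (k+1) :=
  ((1 - s) + s * max 0 (- ht x)) • (x : EE (k+1)) +
    ((ht x + s * (ht x + 1)) - ((1 - s) + s * max 0 (- ht x)) * ht x) • e0 k

theorem avec_ne (s : unitInterval) (x : USphere k) : avec s x ≠ 0 := by
  intro h
  obtain ⟨s, hs0, hs1⟩ := s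
  simp only at h
  have h0 := congrArg (fun v : EE (k+1) => v 0) h
  have hh : ht x + s * (ht x + 1) = 0 := by
    simp [avec, e0_zero] at h0
    change _ * ht x + _ = 0 at h0
    linarith
  have hμ : 0 < (1 - s) + s * max 0 (- ht x) := by
    have hl : - ht x ≤ max 0 (-ht x) := le_max_right _ _
    have hl0 : 0 ≤ max 0 (-ht x) := le_max_left _ _
    rcases hs1.lt_or_eq with h1 | h1
    · have := mul_nonneg hs0 hl0; linarith
    · subst h1; linarith
  set μ := (1 - s) + s * max 0 (- ht x) with hμd
  have hx : (x : EE (k+1)) = ht x • e0 k := by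
    have : avec s x = μ • ((x : EE (k+1)) - ht x • e0 k) := by
      rw [avec, ← hμd, hh]; module
    rw [this] at h
    exact sub_eq_zero.1 ((smul_eq_zero.1 h).resolve_left hμ.ne')
  have hn := congrArg norm hx
  rw [sph_norm, norm_smul, e0_norm, mul_one, Real.norm_eq_abs] at hn
  rcases abs_cases (ht x) with h1 | h1
  · nlinarith
  · have : ht x = -1 := by linarith
    rw [this] at hh; norm_num at hh

theorem avec_cont : Continuous (fun p : unitInterval × USphere k => avec p.1 p.2) := by
  have := ht_cont (k := k)
  unfold avec; fun_prop

noncomputable def alpha : C(USphere k, USphere k) :=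
  ⟨fun x => nrm (avec 1 x), nrm_cont (avec_cont.comp (by fun_prop : Continuous fun x : USphere k => ((1 : unitInterval), x)))
    (fun x => avec_ne 1 x)⟩

theorem alpha_homotopic : (ContinuousMap.id (USphere k)).Homotopic alpha := by
  refine homotopic_of_nonzero _ _ (fun p => avec p.1 p.2) avec_cont (fun p => avec_ne _ _) ?_ ?_
  · intro x; simp [avec, nrm_coe]
  · intro x; simp [alpha]

theorem alpha_pos (x : USphere k) (h : 0 ≤ ht x) : alpha x = spherePt k := by
  have : avec 1 x = (2 * ht x + 1) • e0 k := by
    rw [avec, max_eq_left (by linarith)]; module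
  show nrm _ = _
  rw [this, nrm_smul _ _ (by linarith)]
  exact nrm_coe (spherePt k)

noncomputable def nvec (x : USphere k) : EE (k+1) := (x : EE (k+1)) - (ht x + |ht x|) • e0 k
theorem nvec_neg (x : USphere k) (h : ht x ≤ 0) : nvec x = x := by
  rw [nvec, abs_of_nonpos h]; simp
theorem nvec_pos (x : USphere k) (h : 0 ≤ ht x) : nvec x = rvec x := by
  rw [nvec, abs_of_nonneg h, rvec]; module
theorem nvec_norm (x : USphere k) : ‖nvec x‖ = 1 := by
  rcases le_total (ht x) 0 with h | h
  · rw [nvec_neg x h, sph_norm]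
  · rw [nvec_pos x h, rvec_norm]
theorem nvec_ht (x : USphere k) : nvec x 0 = - |ht x| := by
  simp [nvec, e0_zero, ht]
theorem nvec_cont : Continuous (nvec : USphere k → _) := by
  have := ht_cont (k := k)
  unfold nvec; fun_prop
theorem nvec_mem (x : USphere k) : nvec x ∈ Metric.sphere (0 : EE (k+1)) 1 := by
  simpa using nvec_norm x
noncomputable def nu : C(USphere k, USphere k) :=
  ⟨fun x => ⟨nvec x, nvec_mem x⟩, nvec_cont.subtype_mk nvec_mem⟩
theorem nu_neg (x : USphere k) (h : ht x ≤ 0) : nu x = x := Subtype.ext (nvec_neg x h)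
theorem nu_pos (x : USphere k) (h : 0 ≤ ht x) : nu x = rho x := Subtype.ext (nvec_pos x h)
theorem nu_null (y : USphere (k+1)) : (nu : C(USphere (k+1), USphere (k+1))).Homotopic (ContinuousMap.const _ y) := by
  refine (homotopic_of_close nu (ContinuousMap.const _ (rho (spherePt _))) ?_).trans (const_homotopic _ _)
  intro z h
  have h0 := congrArg (fun v : EE (k+1+1) => v 0) h
  have h1 : ht (rho (spherePt (k+1))) = -1 := by
    rw [rho_ht]; simp [ht, spherePt]
  change nvec z 0 = - ht (rho (spherePt (k+1))) at h0
  rw [nvec_ht, h1] at h0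
  linarith [abs_nonneg (ht z)]
end gadgets

open ContinuousMap in
theorem hpair {A B C Z : Type*} [TopologicalSpace A] [TopologicalSpace B] [TopologicalSpace C] [TopologicalSpace Z]
    {F F' : C(A × B, C)} {a a' : C(Z, A)} {b b' : C(Z, B)} (hF : F.Homotopic F') (ha : a.Homotopic a')
    (hb : b.Homotopic b') : (F.comp (a.prodMk b)).Homotopic (F'.comp (a'.prodMk b')) :=
  hF.comp (ha.prodMk hb)

theorem hep {k : ℕ} {Y Z : Type*} [TopologicalSpace Y] [TopologicalSpace Z]
    (g : C(USphere k × Y, Z)) (g' : C(Y, Z))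
    (h : (g.comp ((ContinuousMap.const Y (spherePt k)).prodMk (ContinuousMap.id Y))).Homotopic g') :
    ∃ g1 : C(USphere k × Y, Z), g.Homotopic g1 ∧ ∀ y, g1 (spherePt k, y) = g' y := by
  obtain ⟨η⟩ := h
  have hη0 : ∀ y, η (0, y) = g (spherePt k, y) := fun y => by simp
  have hη1 : ∀ y, η (1, y) = g' y := fun y => by simp
  have hc := ht_cont (k := k)
  have hKc : Continuous (fun p : unitInterval × (USphere k × Y) =>
      if ht p.2.1 ≤ 0 then g (alpha p.2.1, p.2.2) else
        η (Set.projIcc 0 1 zero_le_one (p.1 * ht p.2.1), p.2.2)) := by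
    refine Continuous.if_le (by fun_prop) ?_ (by fun_prop) continuous_const ?_
    · apply η.continuous.comp
      apply Continuous.prodMk
      · exact continuous_projIcc.comp (by fun_prop)
      · fun_prop
    · rintro ⟨s, x, y⟩ h
      simp only at h ⊢
      rw [alpha_pos x h.ge, h, mul_zero, Set.projIcc_left]
      exact (hη0 y).symm
  let K : C(unitInterval × (USphere k × Y), Z) := ⟨_, hKc⟩
  refine ⟨K.comp ((ContinuousMap.const _ 1).prodMk (ContinuousMap.id _)), ?_, ?_⟩
  · have h1 : g.Homotopic (g.comp ((alpha.comp ContinuousMap.fst).prodMk ContinuousMap.snd)) := by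
      have := hpair (.refl g) (alpha_homotopic.comp (.refl (ContinuousMap.fst : C(USphere k × Y, _))))
        (.refl (ContinuousMap.snd : C(USphere k × Y, _)))
      exact this
    refine h1.trans ⟨{ toContinuousMap := K, map_zero_left := ?_, map_one_left := ?_ }⟩
    · rintro ⟨x, y⟩
      show (if ht x ≤ 0 then _ else _) = g (alpha x, y)
      split_ifs with hx
      · rfl
      · simp only [Set.Icc.coe_zero, zero_mul, Set.projIcc_left]
        rw [alpha_pos x (not_le.1 hx).le]
        exact hη0 y
    · intro z; rfl
  · intro y
    show (if ht (spherePt k) ≤ 0 then _ else _) = _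
    have : ht (spherePt k) = 1 := by simp [ht, spherePt]
    rw [if_neg (by rw [this]; norm_num)]
    show η (Set.projIcc 0 1 zero_le_one (((1:unitInterval):ℝ) * ht (spherePt k)), y) = _
    rw [this, Set.Icc.coe_one, mul_one, Set.projIcc_right]
    exact hη1 y

open ContinuousMap in
theorem inv_lemma {k : ℕ} {Y : Type*} [TopologicalSpace Y] (g : C(USphere (k+1) × Y, Y))
    (hg : (g.comp ((const Y (spherePt (k+1))).prodMk (.id Y))).Homotopic (.id Y)) :
    ∃ g' : C(USphere (k+1) × Y, Y), (g.comp (fst.prodMk g')).Homotopic snd := by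
  obtain ⟨g1, hgg, h1⟩ := hep g _ hg
  simp only [ContinuousMap.id_apply] at h1
  let A : C(USphere (k+1) × Y, USphere (k+1)) := fst
  let B : C(USphere (k+1) × Y, Y) := snd
  refine ⟨g1.comp ((rho.comp fst).prodMk snd), ?_⟩
  have s1 : (g.comp (A.prodMk (g1.comp ((rho.comp A).prodMk B)))).Homotopic
      (g1.comp ((alpha.comp A).prodMk (g1.comp (((alpha.comp rho).comp A).prodMk B)))) := by
    refine hpair hgg (alpha_homotopic.comp (.refl A)) (hpair (.refl g1) ?_ (.refl B))
    exact (alpha_homotopic.comp (.refl rho)).comp (.refl A)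
  have s2 : (g1.comp ((alpha.comp A).prodMk (g1.comp (((alpha.comp rho).comp A).prodMk B))))
      = g1.comp (((alpha.comp nu).comp A).prodMk B) := by
    ext ⟨x, y⟩
    show g1 (alpha x, g1 (alpha (rho x), y)) = g1 (alpha (nu x), y)
    rcases le_total (ht x) 0 with h | h
    · rw [alpha_pos (rho x) (by rw [rho_ht]; linarith), h1, nu_neg x h]
    · rw [alpha_pos x h, h1, nu_pos x h]
  have s3 : (g1.comp (((alpha.comp nu).comp A).prodMk B)).Homotopic
      (g1.comp ((((const _ (spherePt (k+1))) : C(USphere (k+1), USphere (k+1))).comp A).prodMk B)) := by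
    refine hpair (.refl g1) (.comp ?_ (.refl A)) (.refl B)
    have := (alpha_homotopic.symm).comp (nu_null (k := k) (spherePt (k+1)))
    exact this
  have s4 : (g1.comp ((((const _ (spherePt (k+1))) : C(USphere (k+1), USphere (k+1))).comp A).prodMk B)) = snd := by
    ext ⟨x, y⟩; exact h1 y
  rw [s2] at s1
  rw [s4] at s3
  exact s1.trans s3

open ContinuousMap in
theorem key (m : ℕ) (f : C(USphere (m+1) × USphere (m+1+1), USphere (m+1)))
    (g : C(USphere (m+1) × USphere (m+1+1), USphere (m+1+1)))
    (hW : ∀ z, f z = spherePt _ ∨ g z = spherePt _)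
    (a : C(USphere (m+1), USphere (m+1))) (b : C(USphere (m+1), USphere (m+1+1)))
    (c : C(USphere (m+1+1), USphere (m+1))) (e : C(USphere (m+1+1), USphere (m+1+1)))
    (hf : (f.comp (a.prodMk b)).Homotopic (.id _)) (hg : (g.comp (c.prodMk e)).Homotopic (.id _)) :
    False := by
  -- step 1
  have hf1 : ∀ b' : C(USphere (m+1), USphere (m+1+1)),
      (f.comp (a.prodMk b')).Homotopic (.id _) := by
    intro b'
    refine Homotopic.trans (hpair (.refl f) (.refl a) ?_) hf
    exact (null_of_lt (by omega) b' (spherePt _)).trans (null_of_lt (by omega) b (spherePt _)).symm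
  -- step 2
  obtain ⟨e1, he1, he1'⟩ := hep (Y := Unit) ((e.comp rho).comp fst)
    (ContinuousMap.const _ (spherePt (m+1+1)))
    (const_homotopic (e (rho (spherePt _))) (spherePt _))
  let J : C(USphere (m+1+1), USphere (m+1+1) × Unit) :=
    (ContinuousMap.id _).prodMk (ContinuousMap.const _ ())
  let e' := e1.comp J
  have he' : e' (spherePt _) = spherePt _ := he1' _
  have hee : e.Homotopic (e'.comp (alpha.comp rho)) := by
    have h1 : (e.comp rho).Homotopic e' := he1.comp (.refl J)
    have h2 : ((e.comp rho).comp rho).Homotopic (e'.comp (alpha.comp rho)) :=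
      h1.comp (alpha_homotopic.comp (.refl rho))
    have h3 : (e.comp rho).comp rho = e := by
      ext1 x; show e (rho (rho x)) = e x; rw [rho_rho]
    rwa [h3] at h2
  let gs : C(USphere (m+1+1) × USphere (m+1), USphere (m+1+1)) := g.comp ⟨Prod.swap, continuous_swap⟩
  obtain ⟨gs1, hgs, hgs1⟩ := hep gs (ContinuousMap.const _ (spherePt (m+1+1)))
    (null_of_lt (by omega) _ _)
  have hca : c.Homotopic (c.comp alpha) := (Homotopic.refl c).comp alpha_homotopic
  have hg1 : ∀ h : USphere (m+1), (g.comp ((ContinuousMap.const _ h).prodMk e)).Homotopic (.id _) := by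
    intro h
    have t1 : (gs.comp (e.prodMk c)).Homotopic
        (gs1.comp ((e'.comp (alpha.comp rho)).prodMk (c.comp alpha))) := hpair hgs hee hca
    have t2 : gs1.comp ((e'.comp (alpha.comp rho)).prodMk (c.comp alpha)) =
        gs1.comp ((e'.comp (alpha.comp rho)).prodMk (ContinuousMap.const _ (c (spherePt _)))) := by
      ext1 y
      show gs1 (e' (alpha (rho y)), c (alpha y)) = gs1 (e' (alpha (rho y)), c (spherePt _))
      rcases le_total (ht y) 0 with h | h
      · rw [alpha_pos (rho y) (by rw [rho_ht]; linarith), he', hgs1, hgs1]; rfl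
      · rw [alpha_pos y h]
    rw [t2] at t1
    have t3 : (gs.comp (e.prodMk (ContinuousMap.const _ h))).Homotopic
        (gs1.comp ((e'.comp (alpha.comp rho)).prodMk (ContinuousMap.const _ (c (spherePt _))))) :=
      hpair hgs hee (const_homotopic _ _)
    exact (t3.trans t1.symm).trans hg
  -- step 3
  let D : C(USphere (m+1) × USphere (m+1+1), USphere (m+1) × USphere (m+1+1)) :=
    (a.comp fst).prodMk (e.comp snd)
  obtain ⟨g', hg'⟩ := inv_lemma (g.comp D) (hg1 (a (spherePt _)))
  let H : C(USphere (m+1) × USphere (m+1+1), USphere (m+1) × USphere (m+1+1)) := fst.prodMk g'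
  let sw : C(USphere (m+1+1) × USphere (m+1), USphere (m+1) × USphere (m+1+1)) :=
    ⟨Prod.swap, continuous_swap⟩
  let sw' : C(USphere (m+1) × USphere (m+1+1), USphere (m+1+1) × USphere (m+1)) :=
    ⟨Prod.swap, continuous_swap⟩
  obtain ⟨f', hf'⟩ := inv_lemma (((f.comp D).comp H).comp sw)
    (hf1 (e.comp (g'.comp ((ContinuousMap.id _).prodMk (ContinuousMap.const _ (spherePt _))))))
  let G : C(USphere (m+1) × USphere (m+1+1), USphere (m+1) × USphere (m+1+1)) :=
    (f'.comp sw').prodMk snd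
  have r1 : (((f.comp D).comp H).comp G).Homotopic fst := hf'.comp (.refl sw')
  have r2 : (((g.comp D).comp H).comp G).Homotopic snd := hg'.comp (.refl G)
  refine no_wedge m (m+1) ((((f.comp D).comp H).comp G).prodMk (((g.comp D).comp H).comp G))
    (fun z => hW (D (H (G z)))) ?_
  exact (r1.prodMk r2).symm

/-- For `n ≥ 2`, the wedge `Sⁿ ∨ Sⁿ⁺¹` is not homotopy dominated by `Sⁿ × Sⁿ⁺¹`. -/
theorem wedge_not_dominated_by_prod_succ (n : ℕ) (hn : 2 ≤ n) :
    ¬ HDominates (USphere n × USphere (n + 1))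
        (Wedge (USphere n) (USphere (n + 1)) (spherePt n) (spherePt (n + 1))) := by
  obtain ⟨m, rfl⟩ : ∃ m, n = m + 1 := ⟨n - 1, by omega⟩
  rintro ⟨d, u, hdu⟩
  let r1 : C(Wedge (USphere (m+1)) (USphere (m+1+1)) (spherePt _) (spherePt _), USphere (m+1)) :=
    ⟨Quot.lift (Sum.elim id (fun _ => spherePt _)) (by rintro _ _ ⟨rfl, rfl⟩; rfl),
      continuous_quot_lift _ (by fun_prop)⟩
  let r2 : C(Wedge (USphere (m+1)) (USphere (m+1+1)) (spherePt _) (spherePt _), USphere (m+1+1)) :=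
    ⟨Quot.lift (Sum.elim (fun _ => spherePt _) id) (by rintro _ _ ⟨rfl, rfl⟩; rfl),
      continuous_quot_lift _ (by fun_prop)⟩
  let i1 : C(USphere (m+1), Wedge (USphere (m+1)) (USphere (m+1+1)) (spherePt _) (spherePt _)) :=
    ⟨fun x => Quot.mk _ (Sum.inl x), continuous_quot_mk.comp continuous_inl⟩
  let i2 : C(USphere (m+1+1), Wedge (USphere (m+1)) (USphere (m+1+1)) (spherePt _) (spherePt _)) :=
    ⟨fun x => Quot.mk _ (Sum.inr x), continuous_quot_mk.comp continuous_inr⟩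
  have hW : ∀ w, r1 w = spherePt _ ∨ r2 w = spherePt _ := by
    intro w
    induction w using Quot.ind with
    | mk s =>
      rcases s with x | y
      · exact Or.inr rfl
      · exact Or.inl rfl
  have h1 : (r1.comp ((d.comp u).comp i1)).Homotopic (ContinuousMap.id _) :=
    (ContinuousMap.Homotopic.refl r1).comp (hdu.comp (.refl i1))
  have h2 : (r2.comp ((d.comp u).comp i2)).Homotopic (ContinuousMap.id _) :=
    (ContinuousMap.Homotopic.refl r2).comp (hdu.comp (.refl i2))
  exact key m (r1.comp d) (r2.comp d) (fun z => hW (d z))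
    (ContinuousMap.fst.comp (u.comp i1)) (ContinuousMap.snd.comp (u.comp i1))
    (ContinuousMap.fst.comp (u.comp i2)) (ContinuousMap.snd.comp (u.comp i2)) h1 h2
end

section
/- For all integers n, m with 2 < n + 1 < m, the wedge sum S^n ∨ S^m is not homotopy dominated by the product S^n × S^m. -/
open CategoryTheory

open Polynomial in
theorem br_poly {N : ℕ} (M : EuclideanSpace ℝ (Fin N) →L[ℝ] EuclideanSpace ℝ (Fin N))
    (x v : EuclideanSpace ℝ (Fin N)) (C0 : ℝ) (k : ℕ) :
    ∃ Q : ℝ[X], Q.natDegree ≤ 2 * k + N ∧ ∀ t : ℝ, Q.eval t =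
      (C0 - ‖x + t • v‖ ^ 2) ^ k * (ContinuousLinearMap.id ℝ _ + t • M).det := by
  classical
  let b := (EuclideanSpace.basisFun (Fin N) ℝ).toBasis
  let A := LinearMap.toMatrix b b (M : EuclideanSpace ℝ (Fin N) →ₗ[ℝ] _)
  refine ⟨(C (C0 - ‖x‖ ^ 2) - C (2 * inner ℝ x v) * X - C (‖v‖ ^ 2) * X ^ 2) ^ k *
    Matrix.det ((X : ℝ[X]) • A.map C + (1 : Matrix (Fin N) (Fin N) ℝ).map C), ?_, ?_⟩
  · refine natDegree_mul_le.trans (add_le_add ?_ ?_)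
    · refine natDegree_pow_le.trans ?_
      rw [mul_comm]
      refine Nat.mul_le_mul_right k ?_
      compute_degree
    · simpa using natDegree_det_X_add_C_le A 1
  · intro t
    rw [eval_mul]
    congr 1
    · simp only [eval_pow, eval_sub, eval_mul, eval_C, eval_X]
      congr 1
      rw [norm_add_sq_real, norm_smul, inner_smul_right, mul_pow, Real.norm_eq_abs, sq_abs]
      ring
    · rw [ContinuousLinearMap.det, ← LinearMap.det_toMatrix b, ← coe_evalRingHom, RingHom.map_det]
      congr 1
      have : ((ContinuousLinearMap.id ℝ (EuclideanSpace ℝ (Fin N)) + t • M :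
        EuclideanSpace ℝ (Fin N) →L[ℝ] EuclideanSpace ℝ (Fin N)) :
        EuclideanSpace ℝ (Fin N) →ₗ[ℝ] EuclideanSpace ℝ (Fin N)) = LinearMap.id + t • (M : EuclideanSpace ℝ (Fin N) →ₗ[ℝ] _) := rfl
      rw [this, map_add (LinearMap.toMatrix b b), map_smul, LinearMap.toMatrix_id]
      ext i j
      simp [A, Matrix.one_apply, apply_ite, add_comm]
      exact mul_comm _ _

theorem br_det_pos {N : ℕ} (M : EuclideanSpace ℝ (Fin N) →L[ℝ] EuclideanSpace ℝ (Fin N))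
    (t : ℝ) (ht : 0 ≤ t) (h : t * ‖M‖ < 1) : 0 < (ContinuousLinearMap.id ℝ _ + t • M).det := by
  have hne : ∀ s ∈ Set.Icc 0 t, (ContinuousLinearMap.id ℝ _ + s • M).det ≠ 0 := by
    intro s hs h0
    have := LinearMap.bot_lt_ker_of_det_eq_zero (show LinearMap.det ((ContinuousLinearMap.id ℝ _ + s • M : EuclideanSpace ℝ (Fin N) →L[ℝ] _) : EuclideanSpace ℝ (Fin N) →ₗ[ℝ] _) = 0 from h0)
    obtain ⟨v, hv, hv0⟩ := (Submodule.ne_bot_iff _).1 this.ne'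
    have hv1 : v + s • M v = 0 := by simpa using hv
    have h2 : ‖v‖ = s * ‖M v‖ := by
      rw [eq_neg_of_add_eq_zero_left hv1, norm_neg, norm_smul, Real.norm_of_nonneg hs.1,
        ← eq_neg_of_add_eq_zero_left hv1]
    have h3 : ‖v‖ ≤ (t * ‖M‖) * ‖v‖ := by
      calc ‖v‖ = s * ‖M v‖ := h2
        _ ≤ t * (‖M‖ * ‖v‖) := mul_le_mul hs.2 (M.le_opNorm v) (norm_nonneg _) ht
        _ = _ := by ring
    have : 0 < ‖v‖ := norm_pos_iff.2 hv0
    nlinarith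
  have hc : Continuous fun s : ℝ => (ContinuousLinearMap.id ℝ _ + s • M).det :=
    ContinuousLinearMap.continuous_det.comp (by fun_prop)
  by_contra hneg
  push Not at hneg
  have h1 : (ContinuousLinearMap.id ℝ _ + (0:ℝ) • M).det = 1 := by
    have : (ContinuousLinearMap.id ℝ _ + (0:ℝ) • M) = ContinuousLinearMap.id ℝ _ := by ext; simp
    rw [this]; exact LinearMap.det_id
  obtain ⟨s, hs, hs0⟩ := intermediate_value_Icc' ht hc.continuousOn (show (0:ℝ) ∈ Set.Icc _ _ from ⟨hneg, by simp only [h1]; exact zero_le_one⟩)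
  exact hne s hs hs0

open MeasureTheory in
theorem br_small {N : ℕ} (g : EuclideanSpace ℝ (Fin N) → EuclideanSpace ℝ (Fin N))
    (hg : ContDiff ℝ 1 g) (R : ℝ) (hR : ∀ x, R ≤ ‖x‖ → g x = 0) :
    ∃ t0 : ℝ, 0 < t0 ∧ ∀ t ∈ Set.Icc 0 t0, ∀ φ : EuclideanSpace ℝ (Fin N) → ℝ,
      ∫ x in Metric.closedBall 0 R, φ (x + t • g x) * (ContinuousLinearMap.id ℝ _ + t • fderiv ℝ g x).det
        = ∫ x in Metric.closedBall 0 R, φ x := by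
  have hcs : HasCompactSupport g := by
    refine HasCompactSupport.intro (isCompact_closedBall 0 R) fun x hx => hR x ?_
    simp at hx; exact hx.le
  obtain ⟨L, hL⟩ := hg.lipschitzWith_of_hasCompactSupport hcs (by norm_num)
  refine ⟨1 / (2 * ((L : ℝ) + 1)), by positivity, ?_⟩
  intro t ht φ
  have htL : t * L < 1 := by
    have h1 : t * (2 * ((L : ℝ) + 1)) ≤ 1 := by
      have := ht.2
      rwa [le_div_iff₀ (by positivity)] at this
    have := ht.1
    have := L.2
    nlinarith [mul_nonneg ht.1 L.2]
  have hlip : LipschitzWith (⟨t, ht.1⟩ * L) (fun x => t • g x) := by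
    refine LipschitzWith.of_dist_le_mul fun x y => ?_
    rw [dist_smul₀, Real.norm_of_nonneg ht.1]
    have := hL.dist_le_mul x y
    calc _ ≤ t * (L * dist x y) := by gcongr; exact ht.1
      _ = (t * L) * dist x y := by ring
  have hinj : Function.Injective fun x => x + t • g x := by
    intro x y hxy
    simp only at hxy
    have h1 : x - y = -(t • g x - t • g y) := by
      have := sub_eq_zero.2 hxy
      rw [← sub_eq_zero, ← this]; abel
    have h2 := hlip.dist_le_mul x y
    rw [dist_eq_norm, dist_eq_norm, h1, norm_neg] at h2
    have h3 : ‖t • g x - t • g y‖ ≤ (t * L) * ‖t • g x - t • g y‖ := h2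
    have : ‖t • g x - t • g y‖ = 0 := by nlinarith [norm_nonneg (t • g x - t • g y)]
    rw [norm_eq_zero] at this
    rw [this, neg_zero, sub_eq_zero] at h1
    exact h1
  have himg : (fun x => x + t • g x) '' Metric.closedBall 0 R = Metric.closedBall 0 R := by
    apply Set.Subset.antisymm
    · rintro _ ⟨x, hx, rfl⟩
      by_contra hcon
      have h1 : R ≤ ‖x + t • g x‖ := by simp at hcon; exact hcon.le
      have h2 : (x + t • g x) + t • g (x + t • g x) = x + t • g x := by simp [hR _ h1]
      have h3 := hinj h2
      simp only at hcon
      rw [h3] at hcon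
      exact hcon hx
    · intro y hy
      have hcon : ContractingWith (⟨t, ht.1⟩ * L) (fun x => y - t • g x) := by
        refine ⟨?_, ?_⟩
        · exact_mod_cast htL
        · refine LipschitzWith.of_dist_le_mul fun x z => ?_
          rw [dist_sub_left]; exact hlip.dist_le_mul x z
      have hfix := hcon.fixedPoint_isFixedPt
      set x := ContractingWith.fixedPoint _ hcon
      have hx : x + t • g x = y := by
        have : y - t • g x = x := hfix
        exact (sub_eq_iff_eq_add.1 this).symm
      refine ⟨x, ?_, hx⟩
      by_contra h
      have h1 : R ≤ ‖x‖ := by simp at h; exact h.le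
      rw [hR _ h1] at hx
      simp at hx
      exact h (hx ▸ hy)
  have key := integral_image_eq_integral_abs_det_fderiv_smul (volume) (s := Metric.closedBall 0 R)
    (f := fun x => x + t • g x) (f' := fun x => ContinuousLinearMap.id ℝ _ + t • fderiv ℝ g x)
    Metric.isClosed_closedBall.measurableSet
    (fun x _ => ((hasFDerivAt_id x).add (((hg.differentiable (by norm_num)) x).hasFDerivAt.const_smul t)).hasFDerivWithinAt)
    hinj.injOn φ
  rw [himg] at key
  rw [key]
  congr 1
  ext x
  rw [abs_of_pos, smul_eq_mul, mul_comm]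
  apply br_det_pos _ _ ht.1
  refine lt_of_le_of_lt ?_ htL
  exact mul_le_mul_of_nonneg_left (norm_fderiv_le_of_lipschitz ℝ hL) ht.1

open MeasureTheory in
theorem br_one {N : ℕ} (g : EuclideanSpace ℝ (Fin N) → EuclideanSpace ℝ (Fin N))
    (hg : ContDiff ℝ 1 g) (R : ℝ) (hR : ∀ x, R ≤ ‖x‖ → g x = 0) (C0 : ℝ) (k : ℕ) :
      ∫ x in Metric.closedBall 0 R, (C0 - ‖x + g x‖ ^ 2) ^ k * (ContinuousLinearMap.id ℝ _ + fderiv ℝ g x).det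
        = ∫ x in Metric.closedBall (0 : EuclideanSpace ℝ (Fin N)) R, (C0 - ‖x‖ ^ 2) ^ k := by
  classical
  obtain ⟨t0, ht0, hsm⟩ := br_small g hg R hR
  choose Q hQd hQ using fun x => br_poly (fderiv ℝ g x) x (g x) C0 k
  set D := 2 * k + N + 1 with hD
  let s : Finset ℕ := Finset.range D
  let v : ℕ → ℝ := fun i => t0 * (i / D)
  have hDpos : (0:ℝ) < D := by simp only [hD]; positivity
  have hvs : Set.InjOn v s := by
    intro i _ j _ hij
    simp only [v] at hij
    have := mul_left_cancel₀ ht0.ne' hij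
    field_simp at this
    exact_mod_cast this
  have hv : ∀ i ∈ s, v i ∈ Set.Icc 0 t0 := by
    intro i hi
    have : (i:ℝ) ≤ D := by exact_mod_cast (Finset.mem_range.1 hi).le
    refine ⟨by positivity, ?_⟩
    simp only [v]
    have : (i:ℝ)/D ≤ 1 := by rw [div_le_one hDpos]; exact this
    nlinarith
  have heval : ∀ x, (Q x).eval 1 = ∑ i ∈ s, (Q x).eval (v i) * (Lagrange.basis s v i).eval 1 := by
    intro x
    have hdeg : (Q x).degree < s.card := by
      rw [Finset.card_range]
      exact lt_of_le_of_lt Polynomial.degree_le_natDegree (by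
        have := hQd x
        exact_mod_cast (by omega : (Q x).natDegree < D))
    conv_lhs => rw [Lagrange.eq_interpolate hvs hdeg]
    simp [Lagrange.interpolate_apply, Polynomial.eval_finsetSum]
  have hcont : ∀ t : ℝ, Continuous fun x => (Q x).eval t := by
    intro t
    have : (fun x => (Q x).eval t) = fun x => (C0 - ‖x + t • g x‖ ^ 2) ^ k * (ContinuousLinearMap.id ℝ _ + t • fderiv ℝ g x).det := by
      ext x; exact hQ x t
    rw [this]
    have h1 := hg.continuous
    have h2 := hg.continuous_fderiv (by norm_num)
    refine Continuous.mul (by fun_prop) (ContinuousLinearMap.continuous_det.comp (by fun_prop))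
  have hint : ∀ t : ℝ, IntegrableOn (fun x => (Q x).eval t) (Metric.closedBall 0 R) := fun t =>
    (hcont t).continuousOn.integrableOn_compact (isCompact_closedBall 0 R)
  have hval : ∀ i ∈ s, ∫ x in Metric.closedBall 0 R, (Q x).eval (v i) = ∫ x in Metric.closedBall (0 : EuclideanSpace ℝ (Fin N)) R, (C0 - ‖x‖ ^ 2) ^ k := by
    intro i hi
    rw [← hsm (v i) (hv i hi) (fun x => (C0 - ‖x‖ ^ 2) ^ k)]
    congr 1
    ext x
    exact hQ x _
  have h1 : ∫ x in Metric.closedBall 0 R, (Q x).eval 1 = ∫ x in Metric.closedBall (0 : EuclideanSpace ℝ (Fin N)) R, (C0 - ‖x‖ ^ 2) ^ k := by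
    simp_rw [heval]
    rw [integral_finsetSum _ (fun i _ => (hint (v i)).mul_const _)]
    simp_rw [integral_mul_const]
    rw [Finset.sum_congr rfl (fun i hi => by rw [hval i hi]), ← Finset.mul_sum]
    have := congrArg (Polynomial.eval 1) (Lagrange.sum_basis hvs (s := s) ⟨0, by simp [s, hD]⟩)
    rw [Polynomial.eval_finsetSum] at this
    rw [this]; simp
  rw [← h1]
  congr 1
  ext x
  rw [hQ]; simp

open MeasureTheory in
theorem br_smooth {N : ℕ} (g : EuclideanSpace ℝ (Fin N) → EuclideanSpace ℝ (Fin N))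
    (hg : ContDiff ℝ 1 g) (R : ℝ) (hR : ∀ x, R ≤ ‖x‖ → g x = 0) (δ : ℝ) (hδ : 0 < δ)
    (hG : ∀ x, δ ≤ ‖x + g x‖) : False := by
  have hRpos : 0 < R := by
    by_contra h
    have := hG 0
    rw [hR 0 (by simpa using h)] at this
    simp at this; linarith
  have hgc := hg.continuous
  have hK := isCompact_closedBall (0 : EuclideanSpace ℝ (Fin N)) R
  have hdc : Continuous fun x => (ContinuousLinearMap.id ℝ _ + fderiv ℝ g x).det := by
    have h2 := hg.continuous_fderiv (by norm_num)
    exact ContinuousLinearMap.continuous_det.comp (by fun_prop)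
  obtain ⟨M, hM⟩ := hK.exists_bound_of_continuousOn hdc.continuousOn
  obtain ⟨C1, hC1⟩ := hK.exists_bound_of_continuousOn
    (show Continuous fun x => x + g x by fun_prop).continuousOn
  have h0mem : (0 : EuclideanSpace ℝ (Fin N)) ∈ Metric.closedBall 0 R := by simp [hRpos.le]
  have hM0 : 0 ≤ M := (norm_nonneg _).trans (hM 0 h0mem)
  set C0 : ℝ := C1 ^ 2 + R ^ 2 + δ ^ 2 with hC0
  have hR2 : 0 < R ^ 2 := by positivity
  have hδ2 : 0 < δ ^ 2 := by positivity
  have hb1 : ∀ x ∈ Metric.closedBall (0 : EuclideanSpace ℝ (Fin N)) R, 0 ≤ C0 - ‖x + g x‖ ^ 2 := by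
    intro x hx
    have := pow_le_pow_left₀ (norm_nonneg _) (hC1 x hx) 2
    nlinarith
  have hb2 : ∀ x ∈ Metric.closedBall (0 : EuclideanSpace ℝ (Fin N)) R, 0 ≤ C0 - ‖x‖ ^ 2 := by
    intro x hx
    have := pow_le_pow_left₀ (norm_nonneg _) (mem_closedBall_zero_iff.1 hx) 2
    nlinarith [sq_nonneg C1]
  set V := volume.real (Metric.closedBall (0 : EuclideanSpace ℝ (Fin N)) R)
  set r := min (δ / 2) R
  have hr : 0 < r := lt_min (by positivity) hRpos
  set v := volume.real (Metric.closedBall (0 : EuclideanSpace ℝ (Fin N)) r)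
  have hv : 0 < v := by
    apply ENNReal.toReal_pos
    · exact (Metric.measure_closedBall_pos volume _ hr).ne'
    · exact (isCompact_closedBall (0 : EuclideanSpace ℝ (Fin N)) r).measure_lt_top.ne
  have hA0 : 0 ≤ C0 - δ ^ 2 := by simp only [hC0]; nlinarith [sq_nonneg C1]
  have hineq : ∀ k : ℕ, v * (C0 - δ ^ 2 / 4) ^ k ≤ M * V * (C0 - δ ^ 2) ^ k := by
    intro k
    have hone := br_one g hg R hR C0 k
    have hc2 : Continuous fun x : EuclideanSpace ℝ (Fin N) => (C0 - ‖x‖ ^ 2) ^ k := by fun_prop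
    have lower : v * (C0 - δ ^ 2 / 4) ^ k ≤ ∫ x in Metric.closedBall (0 : EuclideanSpace ℝ (Fin N)) R, (C0 - ‖x‖ ^ 2) ^ k := by
      have hsub : Metric.closedBall (0 : EuclideanSpace ℝ (Fin N)) r ⊆ Metric.closedBall 0 R :=
        Metric.closedBall_subset_closedBall (min_le_right _ _)
      calc v * (C0 - δ ^ 2 / 4) ^ k = ∫ x in Metric.closedBall (0 : EuclideanSpace ℝ (Fin N)) r, (C0 - δ ^ 2 / 4) ^ k := by
            rw [setIntegral_const]; rfl
        _ ≤ ∫ x in Metric.closedBall (0 : EuclideanSpace ℝ (Fin N)) r, (C0 - ‖x‖ ^ 2) ^ k := by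
            apply setIntegral_mono_on
            · exact continuousOn_const.integrableOn_compact (isCompact_closedBall _ _)
            · exact hc2.continuousOn.integrableOn_compact (isCompact_closedBall _ _)
            · exact Metric.isClosed_closedBall.measurableSet
            · intro x hx
              have h1 : ‖x‖ ≤ δ / 2 := (mem_closedBall_zero_iff.1 hx).trans (min_le_left _ _)
              apply pow_le_pow_left₀
              · nlinarith
              · nlinarith [norm_nonneg x]
        _ ≤ _ := by
            apply setIntegral_mono_set
            · exact hc2.continuousOn.integrableOn_compact hK
            · filter_upwards [ae_restrict_mem Metric.isClosed_closedBall.measurableSet] with x hx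
              exact pow_nonneg (hb2 x hx) k
            · exact hsub.eventuallyLE
    refine lower.trans ?_
    rw [← hone]
    calc _ ≤ ∫ x in Metric.closedBall (0 : EuclideanSpace ℝ (Fin N)) R, (C0 - δ ^ 2) ^ k * M := by
            apply setIntegral_mono_on
            · exact (Continuous.mul (by fun_prop) hdc).continuousOn.integrableOn_compact hK
            · exact continuousOn_const.integrableOn_compact hK
            · exact Metric.isClosed_closedBall.measurableSet
            · intro x hx
              have h1 := hb1 x hx
              have h2 := hG x
              have h3 := (le_abs_self _).trans (hM x hx)
              refine (mul_le_mul_of_nonneg_left h3 (pow_nonneg h1 k)).trans ?_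
              refine mul_le_mul_of_nonneg_right ?_ hM0
              apply pow_le_pow_left₀ h1
              nlinarith
      _ = M * V * (C0 - δ ^ 2) ^ k := by
            rw [setIntegral_const, smul_eq_mul]; ring
  have hB : 0 < C0 - δ ^ 2 / 4 := by linarith
  have hVM : 0 ≤ M * V := mul_nonneg hM0 ENNReal.toReal_nonneg
  obtain ⟨k, hk⟩ := exists_pow_lt_of_lt_one (show 0 < v / (M * V + 1) by positivity)
    (show (C0 - δ ^ 2) / (C0 - δ ^ 2 / 4) < 1 by rw [div_lt_one hB]; linarith)
  rw [div_pow, div_lt_div_iff₀ (by positivity) (by positivity)] at hk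
  have := hineq k
  nlinarith [pow_nonneg hA0 k]

theorem br_euclid {N : ℕ} (G : EuclideanSpace ℝ (Fin N) → EuclideanSpace ℝ (Fin N))
    (hG : Continuous G) (R : ℝ) (hR : ∀ x, R < ‖x‖ → G x = x) (h0 : ∀ x, G x ≠ 0) : False := by
  have hcs : HasCompactSupport fun x => G x - x := by
    refine HasCompactSupport.intro (isCompact_closedBall 0 R) fun x hx => ?_
    simp only [Metric.mem_closedBall, dist_zero_right, not_le] at hx
    rw [hR x hx, sub_self]
  have hδ : ∃ δ > 0, ∀ x, δ ≤ ‖G x‖ := by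
    obtain ⟨x0, -, hx0⟩ := (isCompact_closedBall (0 : EuclideanSpace ℝ (Fin N)) (max R 0 + 1)).exists_isMinOn
      ⟨0, by simp; positivity⟩ hG.norm.continuousOn
    refine ⟨min ‖G x0‖ 1, lt_min (norm_pos_iff.2 (h0 x0)) one_pos, fun x => ?_⟩
    by_cases hx : ‖x‖ ≤ max R 0 + 1
    · exact (min_le_left _ _).trans (hx0 (by simpa using hx))
    · push Not at hx
      rw [hR x (by linarith [le_max_left R 0])]
      exact (min_le_right _ _).trans (by linarith [le_max_right R 0])
  obtain ⟨δ, hδ, hδG⟩ := hδ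
  obtain ⟨g, hg, hgd, hgs⟩ := (show Continuous fun x => G x - x by fun_prop).exists_contDiff_approx 1
    (ε := fun _ => δ / 2) continuous_const (fun _ => by positivity)
  refine br_smooth g hg (R + 1) (fun x hx => ?_) (δ / 2) (by positivity) (fun x => ?_)
  · by_contra h
    have : G x - x ≠ 0 := hgs h
    exact this (by rw [hR x (by linarith), sub_self])
  · have h1 := hgd x
    have h2 := hδG x
    rw [dist_eq_norm] at h1
    have h3 : ‖G x‖ ≤ ‖x + g x‖ + ‖g x - (G x - x)‖ := by
      calc ‖G x‖ = ‖(x + g x) - (g x - (G x - x))‖ := by congr 1; abel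
        _ ≤ _ := norm_sub_le _ _
    linarith

theorem br_main {E : Type*} [NormedAddCommGroup E] [NormedSpace ℝ E] [FiniteDimensional ℝ E]
    (G : E → E) (hG : Continuous G) (R : ℝ) (hR : ∀ x, R < ‖x‖ → G x = x) (p : E)
    (h0 : ∀ x, G x ≠ p) : False := by
  let e : E ≃L[ℝ] EuclideanSpace ℝ (Fin (Module.finrank ℝ E)) := toEuclidean
  refine br_euclid (fun z => e (G (e.symm z + p) - p)) (by fun_prop) (‖e.toContinuousLinearMap‖ * (R + ‖p‖)) ?_ ?_
  · intro z hz
    have : R < ‖e.symm z + p‖ := by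
      by_contra hcon
      push Not at hcon
      have h1 : ‖e.symm z‖ ≤ R + ‖p‖ := by
        calc ‖e.symm z‖ = ‖(e.symm z + p) - p‖ := by simp
          _ ≤ _ := norm_sub_le _ _
          _ ≤ _ := by linarith
      have h2 : ‖z‖ ≤ ‖e.toContinuousLinearMap‖ * ‖e.symm z‖ := by
        have := e.toContinuousLinearMap.le_opNorm (e.symm z)
        simpa using this
      have := mul_le_mul_of_nonneg_left h1 (norm_nonneg e.toContinuousLinearMap)
      linarith
    simp [hR _ this]
  · intro z hz
    have : G (e.symm z + p) - p = 0 := e.map_eq_zero_iff.1 hz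
    exact h0 _ (sub_eq_zero.1 this)

/-- unit sphere -/
abbrev SphX (V : Type) [NormedAddCommGroup V] : Type := ↥(Metric.sphere (0 : V) 1)

theorem SphX.norm_coe {V : Type} [NormedAddCommGroup V] (s : SphX V) : ‖(s : V)‖ = 1 :=
  mem_sphere_zero_iff_norm.1 s.2

/-- normalisation -/
noncomputable def nrmC {V X : Type} [NormedAddCommGroup V] [NormedSpace ℝ V] [TopologicalSpace X]
    (v : X → V) (hc : Continuous v) (h : ∀ x, v x ≠ 0) : C(X, SphX V) where
  toFun x := ⟨‖v x‖⁻¹ • v x, by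
    rw [mem_sphere_zero_iff_norm, norm_smul, norm_inv, norm_norm]
    exact inv_mul_cancel₀ (norm_ne_zero_iff.2 (h x))⟩
  continuous_toFun := by
    refine Continuous.subtype_mk ?_ _
    exact (hc.norm.inv₀ (fun x => norm_ne_zero_iff.2 (h x))).smul hc

theorem nrmC_hom {V X : Type} [NormedAddCommGroup V] [NormedSpace ℝ V] [TopologicalSpace X]
    (F : unitInterval × X → V) (hF : Continuous F) (h : ∀ x, F x ≠ 0)
    (f g : C(X, SphX V)) (hf : ∀ x, (f x : V) = ‖F (0, x)‖⁻¹ • F (0, x))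
    (hg : ∀ x, (g x : V) = ‖F (1, x)‖⁻¹ • F (1, x)) : f.Homotopic g :=
  ⟨{ toContinuousMap := nrmC F hF h
     map_zero_left := fun x => Subtype.ext (hf x).symm
     map_one_left := fun x => Subtype.ext (hg x).symm }⟩

theorem sph_collapse {V : Type} [NormedAddCommGroup V] [InnerProductSpace ℝ V] (w : SphX V) :
    ∃ c : C(SphX V, SphX V), c.Homotopic (ContinuousMap.id _) ∧
      ∀ y : SphX V, 0 ≤ inner ℝ (y : V) (w : V) → c y = w := by
  let F : unitInterval × SphX V → V := fun z =>
    ((1 - (z.1 : ℝ)) + z.1 * max 0 (-inner ℝ (z.2 : V) (w : V))) • (z.2 : V) +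
      ((z.1 : ℝ) * (1 - max 0 (-inner ℝ (z.2 : V) (w : V)))) • (w : V)
  have hF : Continuous F := by
    simp only [F]
    fun_prop
  have hne : ∀ z, F z ≠ 0 := by
    rintro ⟨t, y⟩ h0
    have h1 := congrArg (fun v => inner ℝ v (w : V)) h0
    have h2 := congrArg (fun v => inner ℝ v (y : V)) h0
    have hy := y.norm_coe
    have hw := w.norm_coe
    simp only [F, inner_add_left, inner_smul_left, real_inner_self_eq_norm_sq, hy, hw,
      inner_zero_left] at h1 h2
    rw [show inner ℝ (w : V) (y : V) = inner ℝ (y : V) (w : V) from real_inner_comm _ _] at h2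
    have ht0 := t.2.1
    have ht1 := t.2.2
    have hc1 := abs_le.1 (abs_real_inner_le_norm (y : V) (w : V))
    rw [hy, hw] at hc1
    simp at h1 h2
    set c := inner ℝ (y : V) (w : V)
    set τ : ℝ := (t : ℝ)
    rcases le_total 0 c with hc | hc
    · rw [max_eq_left (by linarith)] at h1 h2
      nlinarith
    · rw [max_eq_right (by linarith)] at h1 h2
      have e1 : τ * c ^ 2 = τ - 1 := by linarith
      have e2 : τ = 1 := le_antisymm ht1 (by nlinarith [mul_nonneg ht0 (sq_nonneg c)])
      rw [e2] at e1 h1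
      have e3 : c = 0 := by nlinarith
      rw [e3] at h1
      norm_num at h1
  refine ⟨(nrmC F hF hne).comp ⟨fun y => (1, y), by fun_prop⟩, ?_, ?_⟩
  · symm
    refine nrmC_hom F hF hne _ _ ?_ ?_
    · intro y
      simp [F]
    · intro y; rfl
  · intro y hy
    apply Subtype.ext
    show ‖F (1, y)‖⁻¹ • F (1, y) = w
    have : F (1, y) = w := by
      simp [F, max_eq_left (show -inner ℝ (y : V) (w : V) ≤ 0 by linarith)]
    rw [this, w.norm_coe]; simp

/-- normalisation with default value -/
noncomputable def nrm0 {V : Type} [NormedAddCommGroup V] [NormedSpace ℝ V] (s : SphX V) (x : V) :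
    SphX V :=
  open Classical in
  if h : x = 0 then s else ⟨‖x‖⁻¹ • x, by
    rw [mem_sphere_zero_iff_norm, norm_smul, norm_inv, norm_norm]
    exact inv_mul_cancel₀ (norm_ne_zero_iff.2 h)⟩

theorem nrm0_coe {V : Type} [NormedAddCommGroup V] [NormedSpace ℝ V] (s : SphX V) (x : V) (h : x ≠ 0) :
    (nrm0 s x : V) = ‖x‖⁻¹ • x := by
  simp [nrm0, h]

theorem nrm0_smul {V : Type} [NormedAddCommGroup V] [NormedSpace ℝ V] (s : SphX V) (x : V) :
    ‖x‖ • (nrm0 s x : V) = x := by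
  by_cases h : x = 0
  · simp [h]
  · rw [nrm0_coe s x h, smul_smul, mul_inv_cancel₀ (norm_ne_zero_iff.2 h), one_smul]

theorem nrm0_self {V : Type} [NormedAddCommGroup V] [NormedSpace ℝ V] (s x : SphX V) :
    nrm0 s (x : V) = x := by
  apply Subtype.ext
  rw [nrm0_coe, x.norm_coe]
  · simp
  · intro h
    have := x.norm_coe
    rw [h] at this; simp at this

theorem nrm0_cont {V : Type} [NormedAddCommGroup V] [NormedSpace ℝ V] (s : SphX V) (x : V) (h : x ≠ 0) :
    ContinuousAt (nrm0 s) x := by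
  rw [Topology.IsInducing.subtypeVal.continuousAt_iff]
  have : ContinuousAt (fun x : V => ‖x‖⁻¹ • x) x :=
    (continuousAt_id.norm.inv₀ (norm_ne_zero_iff.2 h)).smul continuousAt_id
  refine this.congr ?_
  filter_upwards [isOpen_ne.mem_nhds h] with y hy
  exact (nrm0_coe s y hy).symm

theorem smul_cont_of {X V : Type} [TopologicalSpace X] [NormedAddCommGroup V] [NormedSpace ℝ V]
    (r : X → ℝ) (h : X → V) (hr : Continuous r) (hb : ∀ x, ‖h x‖ ≤ 1)
    (hc : ∀ x, r x ≠ 0 → ContinuousAt h x) : Continuous fun x => r x • h x := by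
  rw [continuous_iff_continuousAt]
  intro x
  by_cases h0 : r x = 0
  · rw [ContinuousAt, h0, zero_smul]
    refine squeeze_zero_norm (a := fun y => |r y|) ?_ ?_
    · intro y
      rw [norm_smul, Real.norm_eq_abs]
      exact mul_le_of_le_one_right (abs_nonneg _) (hb y)
    · have := hr.abs.tendsto x
      rwa [h0, abs_zero] at this
  · exact hr.continuousAt.smul (hc x h0)

theorem sph_null {A B : Type} [NormedAddCommGroup A] [InnerProductSpace ℝ A] [FiniteDimensional ℝ A]
    [NormedAddCommGroup B] [InnerProductSpace ℝ B] [FiniteDimensional ℝ B]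
    (hAB : Module.finrank ℝ A + 1 < Module.finrank ℝ B) (s : SphX A) (g : C(SphX A, SphX B)) :
    ∃ q, g.Homotopic (ContinuousMap.const _ q) := by
  have hgc : Continuous fun x : A => ‖x‖ • (g (nrm0 s x) : B) := by
    apply smul_cont_of
    · fun_prop
    · intro x; rw [SphX.norm_coe]
    · intro x hx
      have hx0 : x ≠ 0 := norm_ne_zero_iff.1 hx
      exact (continuous_subtype_val.comp g.continuous).continuousAt.comp (nrm0_cont s x hx0)
  obtain ⟨h, hh, hd, -⟩ := hgc.exists_contDiff_approx 1 (ε := fun _ => 1 / 2) continuous_const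
    (fun _ => by norm_num)
  have hd' : ∀ x : SphX A, ‖h x - g x‖ < 1 / 2 := by
    intro x
    have := hd x
    rwa [nrm0_self, x.norm_coe, one_smul, dist_eq_norm] at this
  have hΦ : ContDiff ℝ 1 fun z : ℝ × A => z.1 • h z.2 := by
    exact contDiff_fst.smul (ContDiff.comp hh contDiff_snd)
  have hdense := hΦ.dense_compl_range_of_finrank_lt_finrank (by
    rw [Module.finrank_prod, Module.finrank_self]; omega)
  have : Nontrivial B := Module.nontrivial_of_finrank_pos (R := ℝ) (by omega)
  obtain ⟨b, hb⟩ := exists_ne (0 : B)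
  obtain ⟨p, hp0, hp⟩ := hdense.inter_open_nonempty {x | x ≠ 0} isOpen_ne ⟨b, hb⟩
  have hhc := hh.continuous
  have hh0 : ∀ x : SphX A, h x ≠ 0 := by
    intro x h0
    have := hd' x
    rw [h0, zero_sub, norm_neg, SphX.norm_coe] at this
    norm_num at this
  let k : C(SphX A, SphX B) := nrmC (fun x => h x) (by fun_prop) hh0
  have h1 : g.Homotopic k := by
    refine nrmC_hom (fun z : unitInterval × SphX A => (g z.2 : B) + (z.1 : ℝ) • (h z.2 - g z.2))
      (by fun_prop) ?_ _ _ ?_ ?_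
    · rintro ⟨t, x⟩ h0
      have h1 := congrArg norm (eq_neg_of_add_eq_zero_left h0)
      rw [SphX.norm_coe, norm_neg, norm_smul, Real.norm_of_nonneg t.2.1] at h1
      have := hd' x
      have := mul_le_of_le_one_left (norm_nonneg (h x - g x)) t.2.2
      simp only at h1
      linarith
    · intro x; simp
    · intro x; simp [k, nrmC]
  have hp0' : -p ≠ 0 := neg_ne_zero.2 hp0
  refine ⟨nrmC (fun _ : Unit => -p) continuous_const (fun _ => hp0') (), h1.trans ?_⟩
  refine nrmC_hom (fun z : unitInterval × SphX A => (1 - (z.1 : ℝ)) • h z.2 + (z.1 : ℝ) • (-p))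
      (by fun_prop) ?_ _ _ ?_ ?_
  · rintro ⟨t, x⟩ h0
    simp only [smul_neg] at h0
    by_cases ht : (t : ℝ) = 0
    · simp [ht] at h0; exact hh0 x h0
    · apply hp
      refine ⟨((t : ℝ)⁻¹ * (1 - t), x), ?_⟩
      simp only
      rw [mul_smul, add_neg_eq_zero.1 h0, smul_smul, inv_mul_cancel₀ ht, one_smul]
  · intro x; simp [k, nrmC]
  · intro x; simp [nrmC]

theorem sph_hep {X V : Type} [TopologicalSpace X] [NormedAddCommGroup V] [InnerProductSpace ℝ V]
    (F : C(X × SphX V, SphX V)) (w q : SphX V)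
    (h : (F.comp ⟨fun x => (x, w), by fun_prop⟩ : C(X, SphX V)).Homotopic (ContinuousMap.const _ q)) :
    ∃ F' : C(X × SphX V, SphX V), F.Homotopic F' ∧ ∀ x, F' (x, w) = q := by
  obtain ⟨c, hc, hcw⟩ := sph_collapse w
  obtain ⟨H⟩ := h
  have h1 : (F.comp ((ContinuousMap.id X).prodMap c)).Homotopic F :=
    (ContinuousMap.Homotopic.refl F).comp ((ContinuousMap.Homotopic.refl _).prodMap hc)
  let K : unitInterval × (X × SphX V) → SphX V := fun z =>
    open Classical in
    if 0 ≤ inner ℝ (z.2.2 : V) (w : V) then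
      H (Set.projIcc 0 1 zero_le_one ((z.1 : ℝ) * inner ℝ (z.2.2 : V) (w : V)), z.2.1)
    else F (z.2.1, c z.2.2)
  have hK : Continuous K := by
    refine Continuous.if_le ?_ ?_ continuous_const (by fun_prop) ?_
    · refine H.continuous.comp (Continuous.prodMk (continuous_projIcc.comp (by fun_prop)) (by fun_prop))
    · fun_prop
    · rintro ⟨t, x, y⟩ hz
      simp only at hz ⊢
      rw [← hz, mul_zero, Set.projIcc_left, hcw y hz.le]
      exact H.map_zero_left x
  refine ⟨⟨fun z => K (1, z), by fun_prop⟩, h1.symm.trans ⟨⟨⟨K, hK⟩, ?_, ?_⟩⟩, ?_⟩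
  · rintro ⟨x, y⟩
    simp only [K]
    split_ifs with hy
    · simp [hcw y hy]
    · rfl
  · intro z; rfl
  · intro x
    simp [K]

/-- `K` agrees outside a ball with a map missing `p` -/
def GoodMap {E : Type} [NormedAddCommGroup E] (p : E) (K : E → E) : Prop :=
  ∃ G : E → E, Continuous G ∧ (∀ z, G z ≠ p) ∧ ∃ R : ℝ, ∀ z, R < ‖z‖ → G z = K z

theorem GoodMap.step {E : Type} [NormedAddCommGroup E] {p : E} {K K' : E → E} (hK : GoodMap p K)
    (H : unitInterval × E → E) (hH : Continuous H) (h0 : ∀ z, H (0, z) = K z)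
    (h1 : ∀ z, H (1, z) = K' z) (R' : ℝ) (hR' : ∀ t z, R' < ‖z‖ → H (t, z) ≠ p) :
    GoodMap p K' := by
  classical
  obtain ⟨G, hG, hGp, R, hR⟩ := hK
  set S := max R R' + 1
  have hS1 : R < S := by have := le_max_left R R'; simp only [S]; linarith
  have hS2 : R' < S := by have := le_max_right R R'; simp only [S]; linarith
  refine ⟨fun z => if ‖z‖ ≤ S then G z else H (Set.projIcc 0 1 zero_le_one (‖z‖ - S), z), ?_, ?_, S + 1, ?_⟩
  · refine Continuous.if_le hG ?_ continuous_norm continuous_const ?_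
    · exact hH.comp (Continuous.prodMk (continuous_projIcc.comp (by fun_prop)) continuous_id)
    · intro z hz
      rw [hz, sub_self, Set.projIcc_left, hR z (by linarith)]
      exact (h0 z).symm
  · intro z
    simp only
    split_ifs with h
    · exact hGp z
    · exact hR' _ z (by push Not at h; linarith)
  · intro z hz
    have : ¬ ‖z‖ ≤ S := by linarith
    simp only [this, if_false]
    rw [Set.projIcc_of_right_le zero_le_one (by linarith)]
    exact h1 z

section Ext
variable {A B : Type} [NormedAddCommGroup A] [InnerProductSpace ℝ A]
    [NormedAddCommGroup B] [InnerProductSpace ℝ B]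

/-- radial extension -/
noncomputable def ExtM (sA : SphX A) (sB : SphX B) (a : SphX A × SphX B → A)
    (b : SphX A × SphX B → B) : A × B → A × B := fun z =>
  ((‖z.1‖ * min 1 (2 * ‖z.2‖)) • a (nrm0 sA z.1, nrm0 sB z.2),
   (‖z.2‖ * min 1 (2 * ‖z.1‖)) • b (nrm0 sA z.1, nrm0 sB z.2))

theorem radii_aux (x y : ℝ) (hx : 0 ≤ x) (hy : 0 ≤ y) (h1 : 1 ≤ x * min 1 (2 * y))
    (h2 : 1 ≤ y * min 1 (2 * x)) : x * min 1 (2 * y) = x ∧ y * min 1 (2 * x) = y ∧ 1 ≤ x ∧ 1 ≤ y := by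
  have e1 : 1 ≤ x := h1.trans (mul_le_of_le_one_right hx (min_le_left _ _))
  have e2 : 1 ≤ y := h2.trans (mul_le_of_le_one_right hy (min_le_left _ _))
  rw [min_eq_left (by linarith), min_eq_left (by linarith)]
  simp [e1, e2]

theorem one_le_of_smul {V : Type} [NormedAddCommGroup V] [NormedSpace ℝ V] (p : SphX V) (a : V)
    (ha : ‖a‖ ≤ 1) (r : ℝ) (hr : 0 ≤ r) (h : r • a = p) : 1 ≤ r := by
  have h1 := congrArg norm h
  rw [norm_smul, p.norm_coe, Real.norm_of_nonneg hr] at h1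
  rw [← h1]
  exact mul_le_of_le_one_right hr ha

theorem ExtM_cont (sA : SphX A) (sB : SphX B)
    (a : unitInterval × (SphX A × SphX B) → A) (b : unitInterval × (SphX A × SphX B) → B)
    (ha : Continuous a) (hb : Continuous b) (ha1 : ∀ z, ‖a z‖ ≤ 1) (hb1 : ∀ z, ‖b z‖ ≤ 1) :
    Continuous (fun z : unitInterval × (A × B) =>
      ExtM sA sB (fun s => a (z.1, s)) (fun s => b (z.1, s)) z.2) := by
  have hnc : ∀ z : unitInterval × (A × B), z.2.1 ≠ 0 → z.2.2 ≠ 0 → ContinuousAt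
      (fun z : unitInterval × (A × B) => (z.1, (nrm0 sA z.2.1, nrm0 sB z.2.2))) z := by
    intro z h1 h2
    refine continuousAt_fst.prodMk (ContinuousAt.prodMk ?_ ?_)
    · exact ContinuousAt.comp (f := fun z : unitInterval × (A × B) => z.2.1) (nrm0_cont sA _ h1) (by fun_prop)
    · exact ContinuousAt.comp (f := fun z : unitInterval × (A × B) => z.2.2) (nrm0_cont sB _ h2) (by fun_prop)
  refine Continuous.prodMk ?_ ?_
  · refine smul_cont_of (fun z : unitInterval × (A × B) => ‖z.2.1‖ * min 1 (2 * ‖z.2.2‖))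
      (fun z => a (z.1, (nrm0 sA z.2.1, nrm0 sB z.2.2))) (by fun_prop) (fun z => ha1 _) ?_
    intro z hz
    refine ContinuousAt.comp (f := fun z : unitInterval × (A × B) => (z.1, (nrm0 sA z.2.1, nrm0 sB z.2.2)))
      ha.continuousAt (hnc z ?_ ?_)
    · intro h; simp [h] at hz
    · intro h; simp [h] at hz
  · refine smul_cont_of (fun z : unitInterval × (A × B) => ‖z.2.2‖ * min 1 (2 * ‖z.2.1‖))
      (fun z => b (z.1, (nrm0 sA z.2.1, nrm0 sB z.2.2))) (by fun_prop) (fun z => hb1 _) ?_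
    intro z hz
    refine ContinuousAt.comp (f := fun z : unitInterval × (A × B) => (z.1, (nrm0 sA z.2.1, nrm0 sB z.2.2)))
      hb.continuousAt (hnc z ?_ ?_)
    · intro h; simp [h] at hz
    · intro h; simp [h] at hz

theorem ExtM_step (sA : SphX A) (sB : SphX B) (p1 : SphX A) (p2 : SphX B)
    (a : unitInterval × (SphX A × SphX B) → A) (b : unitInterval × (SphX A × SphX B) → B)
    (ha : Continuous a) (hb : Continuous b) (ha1 : ∀ z, ‖a z‖ ≤ 1) (hb1 : ∀ z, ‖b z‖ ≤ 1)
    (hadm : ∀ (z) (l m : ℝ), 1 ≤ l → 1 ≤ m → l • a z = p1 → m • b z = p2 → l ≤ 1 ∧ m ≤ 1)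
    (hgood : GoodMap ((p1 : A), (p2 : B)) (ExtM sA sB (fun z => a (0, z)) (fun z => b (0, z)))) :
    GoodMap ((p1 : A), (p2 : B)) (ExtM sA sB (fun z => a (1, z)) (fun z => b (1, z))) := by
  refine hgood.step (fun z => ExtM sA sB (fun s => a (z.1, s)) (fun s => b (z.1, s)) z.2)
    (ExtM_cont sA sB a b ha hb ha1 hb1) ?_ ?_ 1 ?_
  · intro z; rfl
  · intro z; rfl
  · rintro t ⟨x, y⟩ hz heq
    have e1 := congrArg Prod.fst heq
    have e2 := congrArg Prod.snd heq
    simp only [ExtM] at e1 e2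
    have l1 := one_le_of_smul p1 _ (ha1 _) _ (by positivity) e1
    have l2 := one_le_of_smul p2 _ (hb1 _) _ (by positivity) e2
    obtain ⟨r1, r2, -, -⟩ := radii_aux _ _ (norm_nonneg x) (norm_nonneg y) l1 l2
    have := hadm _ _ _ l1 l2 e1 e2
    rw [r1, r2] at this
    rw [Prod.norm_mk] at hz
    exact absurd (max_le this.1 this.2) (not_le.2 hz)

theorem le_one_of_smul {V : Type} [NormedAddCommGroup V] [NormedSpace ℝ V] (p a : SphX V)
    (r : ℝ) (hr : 1 ≤ r) (h : r • (a : V) = p) : r = 1 := by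
  have h1 := congrArg norm h
  rwa [norm_smul, p.norm_coe, a.norm_coe, Real.norm_of_nonneg (by linarith), mul_one] at h1

theorem ExtM_hom (sA : SphX A) (sB : SphX B) (p1 : SphX A) (p2 : SphX B)
    {a a' : C(SphX A × SphX B, SphX A)} {b b' : C(SphX A × SphX B, SphX B)}
    (ha : a.Homotopic a') (hb : b.Homotopic b')
    (hgood : GoodMap ((p1 : A), (p2 : B)) (ExtM sA sB (fun z => a z) (fun z => b z))) :
    GoodMap ((p1 : A), (p2 : B)) (ExtM sA sB (fun z => a' z) (fun z => b' z)) := by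
  obtain ⟨Ha⟩ := ha
  obtain ⟨Hb⟩ := hb
  have := ExtM_step sA sB p1 p2 (fun z => (Ha z : A)) (fun z => (Hb z : B))
    (by fun_prop) (by fun_prop) (fun z => (Ha z).norm_coe.le) (fun z => (Hb z).norm_coe.le)
    (fun z l m hl hm h1 h2 => ⟨(le_one_of_smul _ _ _ hl h1).le, (le_one_of_smul _ _ _ hm h2).le⟩)
  simp only [ContinuousMap.Homotopy.apply_zero, ContinuousMap.Homotopy.apply_one] at this
  exact this hgood

theorem norm_lin_le {V : Type} [NormedAddCommGroup V] [NormedSpace ℝ V] (a b : SphX V) (t : unitInterval) :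
    ‖(1 - (t : ℝ)) • (a : V) + (t : ℝ) • (b : V)‖ ≤ 1 := by
  refine (norm_add_le _ _).trans ?_
  rw [norm_smul, norm_smul, a.norm_coe, b.norm_coe, Real.norm_of_nonneg t.2.1,
    Real.norm_of_nonneg (by linarith [t.2.2])]
  linarith

theorem core1 [FiniteDimensional ℝ A] [FiniteDimensional ℝ B] (p1 e : SphX A) (p2 e' q w : SphX B)
    (hp1 : p1 ≠ e) (hp2 : p2 ≠ e') (hpq : p2 ≠ q)
    (k1 : C(SphX A × SphX B, SphX A)) (k2 k2' : C(SphX A × SphX B, SphX B))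
    (hk : ∀ s, k1 s = e ∨ k2 s = e') (hk2 : k2.Homotopic k2') (hq : ∀ x, k2' (x, w) = q)
    (h1 : (k1.comp ⟨fun x => (x, -w), by fun_prop⟩ : C(SphX A, SphX A)).Homotopic (ContinuousMap.id _))
    (h2 : (k2'.comp ⟨fun y => (p1, y), by fun_prop⟩ : C(SphX B, SphX B)).Homotopic (ContinuousMap.id _)) :
    False := by
  obtain ⟨cB, hcB, hcBw⟩ := sph_collapse w
  obtain ⟨cA, hcA, hcAw⟩ := sph_collapse (-w)
  have hAB : ∀ y, cB y = w ∨ cA y = -w := by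
    intro y
    rcases le_total 0 (inner ℝ (y : B) (w : B)) with h | h
    · exact Or.inl (hcBw y h)
    · refine Or.inr (hcAw y ?_)
      simpa using h
  have g0 : GoodMap ((p1 : A), (p2 : B)) (ExtM p1 p2 (fun z => k1 z) (fun z => k2 z)) := by
    have hc := (ExtM_cont p1 p2 (fun z => (k1 z.2 : A)) (fun z => (k2 z.2 : B)) (by fun_prop) (by fun_prop)
      (fun z => (SphX.norm_coe _).le) (fun z => (SphX.norm_coe _).le)).comp
      (Continuous.prodMk (continuous_const (y := (0 : unitInterval))) continuous_id)
    refine ⟨_, hc, ?_, 0, fun _ _ => rfl⟩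
    rintro ⟨x, y⟩ heq
    have e1 := congrArg Prod.fst heq
    have e2 := congrArg Prod.snd heq
    simp only [ExtM, Function.comp, id] at e1 e2
    have l1 := le_one_of_smul _ _ _ (one_le_of_smul p1 _ (SphX.norm_coe _).le _ (by positivity) e1) e1
    have l2 := le_one_of_smul _ _ _ (one_le_of_smul p2 _ (SphX.norm_coe _).le _ (by positivity) e2) e2
    rw [l1, one_smul] at e1
    rw [l2, one_smul] at e2
    rcases hk (nrm0 p1 x, nrm0 p2 y) with h | h
    · rw [h] at e1; exact hp1 (Subtype.ext e1).symm
    · rw [h] at e2; exact hp2 (Subtype.ext e2).symm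
  have hfst : ContinuousMap.Homotopic (ContinuousMap.fst : C(SphX A × SphX B, SphX A)) ContinuousMap.fst := .refl _
  have hid : ContinuousMap.Homotopic (ContinuousMap.id (SphX A)) (ContinuousMap.id (SphX A)) := .refl _
  have g1 := ExtM_hom p1 p2 p1 p2 (a' := k1.comp ((ContinuousMap.id _).prodMap cA))
    (b' := k2'.comp ((ContinuousMap.id _).prodMap cB))
    ((ContinuousMap.Homotopic.refl k1).comp (hid.prodMap hcA.symm))
    (hk2.comp (hid.prodMap hcB.symm)) g0
  have g2 : GoodMap ((p1 : A), (p2 : B)) (ExtM p1 p2 (fun z => k1 (z.1, -w)) (fun z => k2' (z.1, cB z.2))) := by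
    have := ExtM_step p1 p2 p1 p2
      (fun z => (1 - (z.1 : ℝ)) • (k1 (z.2.1, cA z.2.2) : A) + (z.1 : ℝ) • (k1 (z.2.1, -w) : A))
      (fun z => (k2' (z.2.1, cB z.2.2) : B)) (by fun_prop) (by fun_prop)
      (fun z => norm_lin_le _ _ _) (fun z => (SphX.norm_coe _).le) ?_
    · simp only [Set.Icc.coe_zero, Set.Icc.coe_one, sub_zero, one_smul, zero_smul,
        add_zero, sub_self, zero_add] at this
      exact this g1
    · rintro ⟨t, x, y⟩ l m hl hm e1 e2
      simp only at e1 e2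
      have hm1 := le_one_of_smul _ _ _ hm e2
      rw [hm1, one_smul] at e2
      have e2' := Subtype.ext e2
      rcases hAB y with h | h
      · rw [h, hq] at e2'; exact absurd e2'.symm hpq
      · rw [h, ← add_smul, sub_add_cancel, one_smul] at e1
        exact ⟨(le_one_of_smul _ _ _ hl e1).le, hm1.le⟩
  have g3 := ExtM_hom p1 p2 p1 p2 (a := (k1.comp ⟨fun x => (x, -w), by fun_prop⟩ : C(SphX A, SphX A)).comp ContinuousMap.fst)
    (b := k2'.comp ((ContinuousMap.id _).prodMap cB))
    (a' := ContinuousMap.fst) (b' := k2')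
    (by simpa using h1.comp hfst)
    ((ContinuousMap.Homotopic.refl k2').comp (hid.prodMap hcB)) g2
  have g4 : GoodMap ((p1 : A), (p2 : B)) (ExtM p1 p2 (fun z => z.1) (fun z => k2' (p1, z.2))) := by
    have := ExtM_step p1 p2 p1 p2 (fun z => (z.2.1 : A))
      (fun z => (1 - (z.1 : ℝ)) • (k2' z.2 : B) + (z.1 : ℝ) • (k2' (p1, z.2.2) : B))
      (by fun_prop) (by fun_prop)
      (fun z => (SphX.norm_coe _).le) (fun z => norm_lin_le _ _ _) ?_
    · simp only [Set.Icc.coe_zero, Set.Icc.coe_one, sub_zero, one_smul, zero_smul,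
        add_zero, sub_self, zero_add] at this
      exact this g3
    · rintro ⟨t, x, y⟩ l m hl hm e1 e2
      simp only at e1 e2
      have hl1 := le_one_of_smul _ _ _ hl e1
      rw [hl1, one_smul] at e1
      rw [Subtype.ext e1, ← add_smul, sub_add_cancel, one_smul] at e2
      exact ⟨hl1.le, (le_one_of_smul _ _ _ hm e2).le⟩
  have g5 := ExtM_hom p1 p2 p1 p2 (a := ContinuousMap.fst) (a' := ContinuousMap.fst)
    (b := (k2'.comp ⟨fun y => (p1, y), by fun_prop⟩ : C(SphX B, SphX B)).comp ContinuousMap.snd)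
    (b' := ContinuousMap.snd) hfst
    (by simpa using h2.comp (.refl ContinuousMap.snd)) g4
  have e5 : ∀ z : A × B, ExtM p1 p2 (fun z => ((ContinuousMap.fst z : SphX A) : A)) (fun z => ((ContinuousMap.snd z : SphX B) : B)) z =
      (min 1 (2 * ‖z.2‖) • z.1, min 1 (2 * ‖z.1‖) • z.2) := by
    intro z
    simp only [ExtM, ContinuousMap.fst_apply, ContinuousMap.snd_apply]
    rw [mul_comm, mul_smul, nrm0_smul, mul_comm ‖z.2‖, mul_smul, nrm0_smul]
  have g6 : GoodMap ((p1 : A), (p2 : B)) (fun z => z) := by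
    refine g5.step (fun z => (((1 - (z.1 : ℝ)) * min 1 (2 * ‖z.2.2‖) + z.1) • z.2.1,
      ((1 - (z.1 : ℝ)) * min 1 (2 * ‖z.2.1‖) + z.1) • z.2.2)) (by fun_prop) ?_ ?_ 1 ?_
    · intro z
      rw [e5]; simp
    · intro z; simp
    · rintro t ⟨x, y⟩ hz heq
      have e1 := congrArg Prod.fst heq
      have e2 := congrArg Prod.snd heq
      simp only at e1 e2
      have ht0 := t.2.1
      have ht1 := t.2.2
      have n1 := congrArg norm e1
      have n2 := congrArg norm e2
      have c1 : 0 ≤ (1 - (t : ℝ)) * min 1 (2 * ‖y‖) + t :=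
        add_nonneg (mul_nonneg (by linarith) (by positivity)) ht0
      have c2 : 0 ≤ (1 - (t : ℝ)) * min 1 (2 * ‖x‖) + t :=
        add_nonneg (mul_nonneg (by linarith) (by positivity)) ht0
      have d1 : (1 - (t : ℝ)) * min 1 (2 * ‖y‖) + t ≤ 1 := by
        nlinarith [mul_le_mul_of_nonneg_left (min_le_left 1 (2 * ‖y‖)) (by linarith : 0 ≤ 1 - (t : ℝ))]
      have d2 : (1 - (t : ℝ)) * min 1 (2 * ‖x‖) + t ≤ 1 := by
        nlinarith [mul_le_mul_of_nonneg_left (min_le_left 1 (2 * ‖x‖)) (by linarith : 0 ≤ 1 - (t : ℝ))]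
      rw [norm_smul, SphX.norm_coe, Real.norm_of_nonneg c1] at n1
      rw [norm_smul, SphX.norm_coe, Real.norm_of_nonneg c2] at n2
      have x1 : 1 ≤ ‖x‖ := by rw [← n1]; exact mul_le_of_le_one_left (norm_nonneg x) d1
      have y1 : 1 ≤ ‖y‖ := by rw [← n2]; exact mul_le_of_le_one_left (norm_nonneg y) d2
      rw [min_eq_left (by linarith)] at n1 n2
      rw [Prod.norm_mk] at hz
      exact absurd (max_le (by linarith) (by linarith)) (not_le.2 hz)
  obtain ⟨G, hG, hGp, R, hR⟩ := g6
  exact br_main G hG R hR _ hGp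

theorem sph_const_hom (hA : 1 < Module.finrank ℝ A) [FiniteDimensional ℝ A] {X : Type} [TopologicalSpace X] (x y : SphX A) :
    (ContinuousMap.const X x).Homotopic (ContinuousMap.const X y) := by
  have hp : PathConnectedSpace (SphX A) := by
    rw [← isPathConnected_iff_pathConnectedSpace]
    refine isPathConnected_sphere ?_ 0 zero_le_one
    rw [← Module.finrank_eq_rank]
    exact_mod_cast hA
  let γ := PathConnectedSpace.somePath x y
  exact ⟨⟨⟨fun z => γ z.1, by fun_prop⟩, fun z => by simp, fun z => by simp⟩⟩

theorem core2 [FiniteDimensional ℝ A] [FiniteDimensional ℝ B]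
    (hA : 1 < Module.finrank ℝ A) (hAB : Module.finrank ℝ A + 1 < Module.finrank ℝ B)
    (e : SphX A) (e' : SphX B)
    (f1 : C(SphX A × SphX B, SphX A)) (f2 : C(SphX A × SphX B, SphX B))
    (hf : ∀ s, f1 s = e ∨ f2 s = e')
    (uA : C(SphX A, SphX A × SphX B)) (uB : C(SphX B, SphX A × SphX B))
    (h1 : (f1.comp uA).Homotopic (ContinuousMap.id _))
    (h2 : (f2.comp uB).Homotopic (ContinuousMap.id _)) : False := by
  let w := e'
  let u1 : C(SphX A, SphX A) := ContinuousMap.fst.comp uA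
  let u2 : C(SphX A, SphX B) := ContinuousMap.snd.comp uA
  let v1 : C(SphX B, SphX A) := ContinuousMap.fst.comp uB
  let v2 : C(SphX B, SphX B) := ContinuousMap.snd.comp uB
  have huA : uA = u1.prodMk u2 := by ext x <;> rfl
  have huB : uB = v1.prodMk v2 := by ext x <;> rfl
  obtain ⟨q, hq⟩ := sph_null hAB e (f2.comp ⟨fun x => (x, v2 w), by fun_prop⟩)
  obtain ⟨f2', hf2, hf2q⟩ := sph_hep f2 (v2 w) q hq
  -- choose p2
  have hp1 : -e ≠ e := by
    intro h
    have h' : -(e : A) = e := congrArg Subtype.val h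
    have h2 : (2 : ℝ) • (e : A) = 0 := by
      rw [two_smul]
      nth_rewrite 1 [← h']
      exact neg_add_cancel _
    have h3 : (e : A) = 0 := (smul_eq_zero.1 h2).resolve_left two_ne_zero
    have := e.norm_coe
    rw [h3] at this
    simp at this
  obtain ⟨p2, hp2, hpq⟩ : ∃ p2 : SphX B, p2 ≠ e' ∧ p2 ≠ q := by
    have hpc : IsPreconnected (Metric.sphere (0 : B) 1) := by
      refine isPreconnected_sphere ?_ 0 1
      rw [← Module.finrank_eq_rank]
      exact_mod_cast (by omega : 1 < Module.finrank ℝ B)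
    have hnt : (Metric.sphere (0 : B) 1).Nontrivial := by
      refine ⟨e', e'.2, ((-e' : SphX B) : B), (-e').2, ?_⟩
      intro h'
      have h2 : (2 : ℝ) • (e' : B) = 0 := by
        rw [two_smul]
        nth_rewrite 1 [h']
        exact neg_add_cancel _
      have h3 : (e' : B) = 0 := (smul_eq_zero.1 h2).resolve_left two_ne_zero
      have := e'.norm_coe
      rw [h3] at this
      simp at this
    have hinf := hpc.infinite_of_nontrivial hnt
    obtain ⟨x, hx, hx'⟩ := (hinf.diff (Set.toFinite {(e' : B), (q : B)})).nonempty
    refine ⟨⟨x, hx⟩, fun h => hx' ?_, fun h => hx' ?_⟩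
    · rw [← h]; simp
    · rw [← h]; simp
  obtain ⟨cB, hcB, hcBw⟩ := sph_collapse w
  obtain ⟨cA, hcA, hcAw⟩ := sph_collapse (-w)
  have hABc : ∀ y, cB y = w ∨ cA y = -w := by
    intro y
    rcases le_total 0 (inner ℝ (y : B) (w : B)) with h | h
    · exact Or.inl (hcBw y h)
    · refine Or.inr (hcAw y ?_)
      simpa using h
  refine core1 (-e) e p2 e' q w hp1 hp2 hpq (f1.comp (u1.prodMap v2)) (f2.comp (u1.prodMap v2))
    (f2'.comp (u1.prodMap v2)) (fun s => hf _) (hf2.comp (.refl _)) (fun x => hf2q _) ?_ ?_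
  · obtain ⟨q2, hq2⟩ := sph_null hAB e u2
    have := (ContinuousMap.Homotopic.refl f1).comp ((ContinuousMap.Homotopic.refl u1).prodMk
      ((sph_const_hom (by omega) (v2 (-w)) q2).trans hq2.symm))
    rw [← huA] at this
    exact this.trans h1
  · have s1 := (ContinuousMap.Homotopic.refl f2').comp ((sph_const_hom (X := SphX B) hA (u1 (-e)) (v1 (-w))).prodMk
      ((ContinuousMap.Homotopic.refl v2).comp hcB.symm))
    have s2 : f2'.comp ((ContinuousMap.const _ (v1 (-w))).prodMk (v2.comp cB)) =
        f2'.comp ((v1.comp cA).prodMk (v2.comp cB)) := by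
      ext1 y
      simp only [ContinuousMap.comp_apply, ContinuousMap.prod_eval, ContinuousMap.const_apply]
      rcases hABc y with h | h
      · rw [h, hf2q, hf2q]
      · rw [h]
    have s3 := hf2.symm.comp (((ContinuousMap.Homotopic.refl v1).comp hcA).prodMk
      ((ContinuousMap.Homotopic.refl v2).comp hcB))
    rw [s2] at s1
    have := s1.trans s3
    simp only [ContinuousMap.comp_id] at this
    rw [← huB] at this
    exact this.trans h2

end Ext

theorem wedge_not_dominated_by_prod (n m : ℕ) (hn : 2 < n + 1) (hm : n + 1 < m) :
    ¬ HDominates (USphere n × USphere m)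
        (Wedge (USphere n) (USphere m) (spherePt n) (spherePt m)) := by
  rintro ⟨d, u, h⟩
  let j1 : C(Wedge (USphere n) (USphere m) (spherePt n) (spherePt m), USphere n) :=
    ⟨Quot.lift (Sum.elim id (fun _ => spherePt n)) (by rintro _ _ ⟨rfl, rfl⟩; rfl),
      continuous_quot_lift _ (by fun_prop)⟩
  let j2 : C(Wedge (USphere n) (USphere m) (spherePt n) (spherePt m), USphere m) :=
    ⟨Quot.lift (Sum.elim (fun _ => spherePt m) id) (by rintro _ _ ⟨rfl, rfl⟩; rfl),
      continuous_quot_lift _ (by fun_prop)⟩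
  let inA : C(USphere n, Wedge (USphere n) (USphere m) (spherePt n) (spherePt m)) :=
    ⟨fun x => Quot.mk _ (Sum.inl x), continuous_quot_mk.comp continuous_inl⟩
  let inB : C(USphere m, Wedge (USphere n) (USphere m) (spherePt n) (spherePt m)) :=
    ⟨fun x => Quot.mk _ (Sum.inr x), continuous_quot_mk.comp continuous_inr⟩
  have hj : ∀ w, j1 w = spherePt n ∨ j2 w = spherePt m := by
    intro w
    induction w using Quot.ind with
    | mk x =>
      cases x with
      | inl x => exact Or.inr rfl
      | inr x => exact Or.inl rfl
  refine core2 (A := EuclideanSpace ℝ (Fin (n + 1))) (B := EuclideanSpace ℝ (Fin (m + 1)))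
    (by rw [finrank_euclideanSpace_fin]; omega)
    (by rw [finrank_euclideanSpace_fin, finrank_euclideanSpace_fin]; omega)
    (spherePt n) (spherePt m) (j1.comp d) (j2.comp d) (fun s => hj _)
    (u.comp inA) (u.comp inB) ?_ ?_
  · exact (ContinuousMap.Homotopic.refl j1).comp (h.comp (ContinuousMap.Homotopic.refl inA))
  · exact (ContinuousMap.Homotopic.refl j2).comp (h.comp (ContinuousMap.Homotopic.refl inB))
end
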